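/- arXiv:2012.01492 — 2 statements merged into one kernel-verified Lean document; each statement's English description precedes it below -/
import Mathlib

section
/- For every fixed integer ℓ ≥ 3 there exist constants C > 0 and δ > 0 such that for all positive integers n, d with dn even and 2 ≤ d ≤ δn, and any fixed cycle T of length ℓ in the complete graph K_n on [n]: P(T ⊆ 𝒢(n,d)) = ((d−1)/n)^ℓ·(1 − (Σ_{i=1}^{ℓ} φ_i)/(dn) + θ) for some real θ with |θ| ≤ C·d²/n², where φ₁ = −d, φ₂ = −2d, φ_i = −2d − 2(i−3) − 1 for 3 ≤ i ≤ ℓ−1, and φ_ℓ = −3d + 3 − 2(ℓ−3). -/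
noncomputable section

/-- The degree of the vertex `v` in the simple graph `G`. -/
def deg {n : ℕ} (G : SimpleGraph (Fin n)) (v : Fin n) : ℕ := (G.neighborSet v).ncard

/-- The probability that a graph chosen uniformly at random among all simple graphs on `[n]`
satisfying `base` also satisfies `Q`. -/
def prob {n : ℕ} (base Q : SimpleGraph (Fin n) → Prop) : ℝ :=
  (Nat.card {G : SimpleGraph (Fin n) // base G ∧ Q G} : ℝ) /
    (Nat.card {G : SimpleGraph (Fin n) // base G} : ℝ)

/-- The cycle on the `ℓ` distinct vertices `f 0, f 1, …, f (ℓ-1)` of `[n]`, as a graph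
on `[n]`, where consecutive vertices (cyclically) are joined by an edge. -/
def cycGraph {n ℓ : ℕ} (f : ZMod ℓ ↪ Fin n) : SimpleGraph (Fin n) :=
  SimpleGraph.fromEdgeSet {e | ∃ i : ZMod ℓ, e = s(f i, f (i + 1))}

/-!
Write `N(H)` for the number of `d`-regular graphs containing `H`, and let `uv` be a pair that is
not an edge of `H`. Switching two edges `uv`, `xy` of a graph to `ux`, `vy` relates the regular
graphs that contain `H + uv` to those that contain `H` but not `uv`, and double counting the
switchings gives an equation for `N(H + uv) / N(H)`. Crude bounds on the number of switchings yield
`N(H + uv) ≤ 2 (d/n) N(H)`, so every local configuration that spoils a switching is rare. Fed back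
into the equation, this determines the ratio first up to a relative error `O(d/n)` and then, once
the configurations of first order have been counted with that estimate, up to `O(d²/n²)`.
Multiplying the ratios while the edges of the cycle are added one at a time gives the probability of
the cycle, and the first-order corrections, which depend only on the number of edges and the degrees
along the path built so far, are the `φ_i`.
-/

section RegularGraphs

open SimpleGraph Finset

attribute [local instance] Classical.propDecidable

variable {V : Type*} {G H X : SimpleGraph V} {u v x y : V}

-- This instance, found before those that depend on the form of `G`, gives `G.degree` the same
-- meaning whether or not `G` is written as a union.
local instance fintypeNeighborSet [Fintype V] (G : SimpleGraph V) (v : V) :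
    Fintype (G.neighborSet v) :=
  inferInstance

/-- The indicator that `x` and `y` are adjacent in `G`. -/
def adjInd (G : SimpleGraph V) (x y : V) : ℝ := if G.Adj x y then 1 else 0

/-- The indicator that `x` and `y` are adjacent or equal in `G`. It is phrased through `edge`, with
`edge x x = ⊥`, so that multiplying by it always amounts to requiring `G` to contain a graph. -/
def closedInd (G : SimpleGraph V) (x y : V) : ℝ := if edge x y ≤ G then 1 else 0

lemma adjInd_nonneg (G : SimpleGraph V) (x y : V) : 0 ≤ adjInd G x y := by
  unfold adjInd; split_ifs <;> simp

lemma adjInd_le_one (G : SimpleGraph V) (x y : V) : adjInd G x y ≤ 1 := by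
  unfold adjInd; split_ifs <;> simp

lemma adjInd_comm (G : SimpleGraph V) (x y : V) : adjInd G x y = adjInd G y x := by
  simp only [adjInd, G.adj_comm]

lemma adjInd_self (G : SimpleGraph V) (x : V) : adjInd G x x = 0 := by
  simp [adjInd]

lemma adjInd_sdiff (h : H ≤ G) (x y : V) : adjInd (G \ H) x y = adjInd G x y - adjInd H x y := by
  by_cases hH : H.Adj x y
  · simp [adjInd, hH, h hH]
  · simp [adjInd, hH]

lemma closedInd_nonneg (G : SimpleGraph V) (x y : V) : 0 ≤ closedInd G x y := by
  unfold closedInd; split_ifs <;> simp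

lemma closedInd_le_one (G : SimpleGraph V) (x y : V) : closedInd G x y ≤ 1 := by
  unfold closedInd; split_ifs <;> simp

lemma closedInd_eq (G : SimpleGraph V) (x y : V) :
    closedInd G x y = (if x = y then 1 else 0) + adjInd G x y := by
  rcases eq_or_ne x y with rfl | h <;> simp [closedInd, adjInd, *]

lemma closedInd_comm (G : SimpleGraph V) (x y : V) : closedInd G x y = closedInd G y x := by
  simp only [closedInd, edge_comm]

lemma sdiff_sup_edge_of_not_adj (h : ¬G.Adj u v) : G \ (H ⊔ edge u v) = G \ H := by
  rw [← sdiff_sdiff_left, Disjoint.sdiff_eq_left]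
  exact (disjoint_edge _).2 fun hadj ↦ h hadj.1

lemma edge_le_of_adj (h : X.Adj u v) : edge u v ≤ X := (edge_le_iff X).2 (.inr h)

lemma not_edge_le_iff : ¬edge x y ≤ G ↔ x ≠ y ∧ ¬G.Adj x y := by
  rw [edge_le_iff, not_or]

lemma adjInd_mul_closedInd_of_le (h : X ≤ G) (x y : V) :
    adjInd X x y * closedInd G x y = adjInd X x y := by
  by_cases hX : X.Adj x y
  · simp [closedInd, h hX]
  · simp [adjInd, hX]

lemma adjInd_sdiff_mul_closedInd (G X : SimpleGraph V) (x y : V) :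
    adjInd (G \ X) x y * closedInd G x y = adjInd (G \ X) x y :=
  adjInd_mul_closedInd_of_le sdiff_le x y

lemma adjInd_sdiff_le_closedInd (G X : SimpleGraph V) (x y : V) :
    adjInd (G \ X) x y ≤ closedInd G x y := by
  rw [← adjInd_sdiff_mul_closedInd]
  exact mul_le_of_le_one_left (closedInd_nonneg ..) (adjInd_le_one ..)

lemma adjInd_sdiff_eq_closedInd (h : ¬edge x y ≤ X) (G : SimpleGraph V) :
    adjInd (G \ X) x y = closedInd G x y := by
  rw [not_edge_le_iff] at h
  simp [adjInd, closedInd, h]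

lemma adjInd_sdiff_eq_zero (h : edge x y ≤ X) (G : SimpleGraph V) : adjInd (G \ X) x y = 0 := by
  rcases (edge_le_iff X).1 h with rfl | hadj
  · exact adjInd_self _ _
  · simp [adjInd, hadj]

lemma ncard_edgeSet_sup_edge [Finite V] (huv : u ≠ v) (h : ¬H.Adj u v) :
    (H ⊔ edge u v).edgeSet.ncard = H.edgeSet.ncard + 1 := by
  rw [edgeSet_sup, edgeSet_edge_of_ne huv, Set.union_singleton,
    Set.ncard_insert_of_notMem (by simpa using h)]

lemma ncard_edgeSet_sup_edge_le [Finite V] (H : SimpleGraph V) (u v : V) :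
    (H ⊔ edge u v).edgeSet.ncard ≤ H.edgeSet.ncard + 1 := by
  by_cases h : edge u v ≤ H
  · rw [sup_eq_left.2 h]
    exact Nat.le_succ _
  · obtain ⟨huv, hadj⟩ := not_edge_le_iff.1 h
    exact (ncard_edgeSet_sup_edge huv hadj).le

lemma ncard_edgeSet_sup_edge_sup_edge_le [Finite V] (H : SimpleGraph V) (u v x y : V) :
    (H ⊔ edge u v ⊔ edge x y).edgeSet.ncard ≤ H.edgeSet.ncard + 2 :=
  (ncard_edgeSet_sup_edge_le _ x y).trans (Nat.succ_le_succ (ncard_edgeSet_sup_edge_le H u v))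

section Switchings

variable [Fintype V] {d : ℕ}

/-- The `d`-regular graphs that contain `H`. -/
def regGraphs (d : ℕ) (H : SimpleGraph V) : Finset (SimpleGraph V) :=
  {G | G.IsRegularOfDegree d ∧ H ≤ G}

/-- The number of `d`-regular graphs that contain `H`, as a real number. -/
def numReg (d : ℕ) (H : SimpleGraph V) : ℝ := #(regGraphs d H)

lemma sum_adjInd (G : SimpleGraph V) (x : V) : ∑ y, adjInd G x y = G.degree x := by
  simp only [adjInd, sum_boole, ← card_neighborFinset_eq_degree]
  congr 2
  ext y
  simp

lemma sum_adjInd_sdiff (h : H ≤ G) (x : V) :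
    ∑ y, adjInd (G \ H) x y = G.degree x - H.degree x := by
  simp only [adjInd_sdiff h, sum_sub_distrib, sum_adjInd]

lemma sum_sum_adjInd (G : SimpleGraph V) : ∑ x, ∑ y, adjInd G x y = 2 * G.edgeSet.ncard := by
  simp only [sum_adjInd, Set.ncard_eq_toFinset_card']
  exact_mod_cast G.sum_degrees_eq_twice_card_edges

lemma sum_closedInd_mul (G : SimpleGraph V) (x : V) (f : V → ℝ) :
    ∑ y, closedInd G x y * f y = f x + ∑ y, adjInd G x y * f y := by
  simp [closedInd_eq, add_mul, sum_add_distrib]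

lemma sum_closedInd (G : SimpleGraph V) (x : V) : ∑ y, closedInd G x y = 1 + G.degree x := by
  simpa [sum_adjInd] using sum_closedInd_mul G x 1

lemma sum_adjInd_sup_edge_mul (huv : u ≠ v) (h : ¬H.Adj u v) (x : V) (f : V → ℝ) :
    ∑ y, adjInd (H ⊔ edge u v) x y * f y =
      ∑ y, adjInd H x y * f y + ((if x = u then f v else 0) + if x = v then f u else 0) := by
  have key (y : V) : adjInd (H ⊔ edge u v) x y =
      adjInd H x y + ((if x = u then if y = v then 1 else 0 else 0) +
        if x = v then if y = u then 1 else 0 else 0) := by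
    have h' : ¬H.Adj v u := fun h' ↦ h h'.symm
    simp only [adjInd, sup_adj, edge_adj]
    split_ifs <;> simp_all
  simp only [key, add_mul, sum_add_distrib]
  congr 2 <;> split_ifs <;> simp

lemma degree_sup_edge (huv : u ≠ v) (h : ¬H.Adj u v) (x : V) :
    ((H ⊔ edge u v).degree x : ℝ) =
      H.degree x + ((if x = u then 1 else 0) + if x = v then 1 else 0) := by
  simpa [sum_adjInd] using sum_adjInd_sup_edge_mul huv h x 1

lemma mem_regGraphs : G ∈ regGraphs d H ↔ G.IsRegularOfDegree d ∧ H ≤ G := by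
  simp [regGraphs]

lemma le_of_mem_regGraphs (hG : G ∈ regGraphs d H) : H ≤ G := (mem_regGraphs.1 hG).2

lemma degree_of_mem_regGraphs (hG : G ∈ regGraphs d H) (x : V) : (G.degree x : ℝ) = d :=
  congrArg _ ((mem_regGraphs.1 hG).1.degree_eq x)

lemma degree_le_of_mem_regGraphs (hG : G ∈ regGraphs d H) (x : V) : (H.degree x : ℝ) ≤ d := by
  rw [← degree_of_mem_regGraphs hG x]
  exact_mod_cast degree_le_of_le (le_of_mem_regGraphs hG)

lemma mem_regGraphs_sup : G ∈ regGraphs d (H ⊔ X) ↔ G ∈ regGraphs d H ∧ X ≤ G := by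
  simp only [mem_regGraphs, sup_le_iff, and_assoc]

lemma regGraphs_anti (h : H ≤ X) : regGraphs d X ⊆ regGraphs d H := fun _ hG ↦
  mem_regGraphs.2 ⟨(mem_regGraphs.1 hG).1, h.trans (le_of_mem_regGraphs hG)⟩

lemma numReg_nonneg (H : SimpleGraph V) : 0 ≤ numReg d H := Nat.cast_nonneg _

lemma numReg_anti (h : H ≤ X) : numReg d X ≤ numReg d H :=
  Nat.cast_le.2 (card_le_card (regGraphs_anti h))

lemma sum_mul_closedInd (d : ℕ) (H : SimpleGraph V) (x y : V) (f : SimpleGraph V → ℝ) :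
    ∑ G ∈ regGraphs d H, f G * closedInd G x y = ∑ G ∈ regGraphs d (H ⊔ edge x y), f G := by
  have : regGraphs d (H ⊔ edge x y) = {G ∈ regGraphs d H | edge x y ≤ G} := by
    ext G; simp only [mem_regGraphs_sup, mem_filter]
  simp only [this, sum_filter, closedInd, mul_ite, mul_one, mul_zero]

lemma sum_closedInd_regGraphs (d : ℕ) (H : SimpleGraph V) (x y : V) :
    ∑ G ∈ regGraphs d H, closedInd G x y = numReg d (H ⊔ edge x y) := by
  simpa [numReg] using sum_mul_closedInd d H x y 1

/-- The graphs of `regGraphs d H` in which the edges `uv` and `xy`, both outside `H`, can be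
switched to the non-edges `ux` and `vy`. -/
def switchable (d : ℕ) (H : SimpleGraph V) (u v x y : V) : Finset (SimpleGraph V) :=
  {G ∈ regGraphs d H | (G \ H).Adj u v ∧ (G \ H).Adj x y ∧ ¬edge u x ≤ G ∧ ¬edge v y ≤ G}

/-- The graph obtained from `G` by switching the edges `uv`, `xy` to `ux`, `vy`. -/
def switch (G : SimpleGraph V) (u v x y : V) : SimpleGraph V :=
  G \ (edge u v ⊔ edge x y) ⊔ (edge u x ⊔ edge v y)

lemma degree_switch (huv : G.Adj u v) (hxy : G.Adj x y) (hux : ¬edge u x ≤ G)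
    (hvy : ¬edge v y ≤ G) (w : V) : ((switch G u v x y).degree w : ℝ) = G.degree w := by
  have huv' := huv.ne
  have hxy' := hxy.ne
  simp only [edge_le_iff, not_or] at hux hvy
  obtain ⟨hux, hux'⟩ := hux
  obtain ⟨hvy, hvy'⟩ := hvy
  have hvx : v ≠ x := by rintro rfl; exact hux' huv
  have huy : u ≠ y := by rintro rfl; exact hvy' huv.symm
  set K := G \ (edge u v ⊔ edge x y) with hK
  have hG : G = K ⊔ edge u v ⊔ edge x y := by
    rw [hK, sup_assoc, sdiff_sup_cancel]
    simp [huv, hxy]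
  have hS : switch G u v x y = K ⊔ edge u x ⊔ edge v y := by rw [switch, sup_assoc]
  rw [hS, hG, degree_sup_edge hvy, degree_sup_edge hux, degree_sup_edge hxy', degree_sup_edge huv']
  · ring
  all_goals simp [hK, edge_adj, huv', hxy', hux, hvy, hux', hvy', hvx, huy, hvx.symm, huy.symm,
    huv'.symm, Ne.symm hux]

lemma switch_mem_switchable (hG : G ∈ switchable d H u v x y) :
    switch G u v x y ∈ switchable d H u x v y := by
  simp only [switchable, mem_filter, mem_regGraphs, sdiff_adj] at hG ⊢
  obtain ⟨⟨hreg, hH⟩, ⟨huv, huvH⟩, ⟨hxy, hxyH⟩, hux, hvy⟩ := hG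
  have hdeg (w : V) : (switch G u v x y).degree w = d := by
    rw [← hreg.degree_eq w]
    exact_mod_cast degree_switch huv hxy hux hvy w
  have hHS : H ≤ switch G u v x y := by
    refine le_sup_of_le_left (le_sdiff.2 ⟨hH, ?_⟩)
    simp [disjoint_edge, huvH, hxyH]
  simp only [edge_le_iff, not_or] at hux hvy ⊢
  have hvx : v ≠ x := by rintro rfl; exact hux.2 huv
  have huy : u ≠ y := by rintro rfl; exact hvy.2 huv.symm
  refine ⟨⟨hdeg, hHS⟩, ⟨?_, fun h ↦ hux.2 (hH h)⟩, ⟨?_, fun h ↦ hvy.2 (hH h)⟩,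
    ⟨huv.ne, ?_⟩, hxy.ne, ?_⟩
  all_goals simp [switch, edge_adj, huv.ne, hxy.ne, hux, hvy, hvx, huy, hvx.symm, huy.symm,
    Ne.symm hux.1]

lemma switch_switch (hG : G ∈ switchable d H u v x y) :
    switch (switch G u v x y) u x v y = G := by
  simp only [switchable, mem_filter, edge_le_iff, not_or] at hG
  obtain ⟨-, huv, hxy, hux, hvy⟩ := hG
  have hdisj : Disjoint (G \ (edge u v ⊔ edge x y)) (edge u x ⊔ edge v y) :=
    Disjoint.mono_left sdiff_le (by simp [disjoint_edge, hux.2, hvy.2])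
  rw [switch, switch, sup_sdiff_right_self, hdisj.sdiff_eq_left, sdiff_sup_cancel]
  simp [huv.1, hxy.1]

lemma card_switchable_comm (d : ℕ) (H : SimpleGraph V) (u v x y : V) :
    #(switchable d H u v x y) = #(switchable d H u x v y) :=
  card_nbij' (switch · u v x y) (switch · u x v y) (fun _ ↦ switch_mem_switchable)
    (fun _ ↦ switch_mem_switchable) (fun _ ↦ switch_switch) (fun _ ↦ switch_switch)

/-- The number of ways to switch the edge `uv` of `G` and another edge `xy`, both outside `X`, to
the non-edges `ux` and `vy`. -/
def forwardSwitches (X : SimpleGraph V) (u v : V) (G : SimpleGraph V) : ℝ :=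
  ∑ x, ∑ y, adjInd (G \ X) x y * ((1 - closedInd G u x) * (1 - closedInd G v y))

/-- The number of ways to obtain the edge `uv` by switching two edges `ux` and `vy` of `G` outside
`X` to `uv` and a non-edge `xy`. -/
def backwardSwitches (X : SimpleGraph V) (u v : V) (G : SimpleGraph V) : ℝ :=
  ∑ x, ∑ y, adjInd (G \ X) u x * adjInd (G \ X) v y * (1 - closedInd G x y)

lemma card_switchable_eq_sum_forward (huv : u ≠ v) (h : ¬H.Adj u v) (x y : V) :
    (#(switchable d H u v x y) : ℝ) = ∑ G ∈ regGraphs d (H ⊔ edge u v),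
      adjInd (G \ (H ⊔ edge u v)) x y * ((1 - closedInd G u x) * (1 - closedInd G v y)) := by
  rw [← sum_mul_closedInd, switchable, card_filter, Nat.cast_sum]
  refine sum_congr rfl fun G _ ↦ ?_
  have hadj : (G \ H).Adj u v ↔ G.Adj u v := by simp [h]
  by_cases hux : edge u x ≤ G
  · simp [closedInd, hux]
  by_cases hvy : edge v y ≤ G
  · simp [closedInd, hvy]
  have hX : (G \ (H ⊔ edge u v)).Adj x y ↔ (G \ H).Adj x y := by
    simp only [edge_le_iff, not_or] at hux
    have hxu : x ≠ u := Ne.symm hux.1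
    simp only [sdiff_adj, sup_adj, edge_adj, hxu, false_and, false_or, not_or, and_congr_right_iff]
    intro hG
    refine and_iff_left ?_
    rintro ⟨⟨rfl, rfl⟩, -⟩
    exact hux.2 hG.symm
  by_cases hxy : (G \ H).Adj x y <;> simp [adjInd, closedInd, hadj, hux, hvy, hxy, hX, huv]

lemma card_switchable_eq_sum_backward (d : ℕ) (H : SimpleGraph V) (u v x y : V) :
    (#(switchable d H u x v y) : ℝ) = ∑ G ∈ regGraphs d H \ regGraphs d (H ⊔ edge u v),
      adjInd (G \ (H ⊔ edge u v)) u x * adjInd (G \ (H ⊔ edge u v)) v y *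
        (1 - closedInd G x y) := by
  have hsdiff : regGraphs d H \ regGraphs d (H ⊔ edge u v) =
      {G ∈ regGraphs d H | ¬edge u v ≤ G} := by
    ext G
    simp only [mem_sdiff, mem_regGraphs_sup, mem_filter, not_and]
    tauto
  rw [hsdiff, sum_filter, switchable, card_filter, Nat.cast_sum]
  refine sum_congr rfl fun G _ ↦ ?_
  by_cases huvG : edge u v ≤ G
  · simp [huvG]
  rw [sdiff_sup_edge_of_not_adj fun hadj ↦ huvG (edge_le_of_adj hadj)]
  by_cases hux : (G \ H).Adj u x <;> by_cases hvy : (G \ H).Adj v y <;>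
    by_cases hxy : edge x y ≤ G <;> simp [adjInd, closedInd, huvG, hux, hvy, hxy]

lemma sum_forwardSwitches (huv : u ≠ v) (h : ¬H.Adj u v) :
    ∑ G ∈ regGraphs d (H ⊔ edge u v), forwardSwitches (H ⊔ edge u v) u v G =
      ∑ G ∈ regGraphs d H \ regGraphs d (H ⊔ edge u v),
        backwardSwitches (H ⊔ edge u v) u v G := by
  simp only [forwardSwitches, backwardSwitches]
  rw [sum_comm, sum_comm (s := _ \ _)]
  refine sum_congr rfl fun x _ ↦ ?_
  rw [sum_comm, sum_comm (s := _ \ _)]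
  refine sum_congr rfl fun y _ ↦ ?_
  rw [← card_switchable_eq_sum_forward huv h, ← card_switchable_eq_sum_backward,
    card_switchable_comm]

lemma sum_sum_adjInd_sdiff (hG : G ∈ regGraphs d X) :
    ∑ x, ∑ y, adjInd (G \ X) x y = d * Fintype.card V - 2 * X.edgeSet.ncard := by
  simp only [adjInd_sdiff (le_of_mem_regGraphs hG), sum_sub_distrib, sum_sum_adjInd X, sum_adjInd G,
    degree_of_mem_regGraphs hG, sum_const, card_univ, nsmul_eq_mul, mul_comm]

lemma sum_adjInd_sdiff_of_mem (hG : G ∈ regGraphs d X) (x : V) :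
    ∑ y, adjInd (G \ X) x y = d - X.degree x := by
  rw [sum_adjInd_sdiff (le_of_mem_regGraphs hG), degree_of_mem_regGraphs hG]

/-- The sum of the degrees of the neighbours of `u` in `X`. -/
def nbrDegSum (X : SimpleGraph V) (u : V) : ℝ := ∑ x, adjInd X u x * X.degree x

lemma nbrDegSum_mem (X : SimpleGraph V) (u : V) :
    nbrDegSum X u ∈ Set.Icc 0 (2 * (X.edgeSet.ncard : ℝ)) := by
  rw [← sum_sum_adjInd]
  simp only [sum_adjInd, nbrDegSum]
  exact ⟨sum_nonneg fun _ _ ↦ mul_nonneg (adjInd_nonneg ..) (Nat.cast_nonneg _),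
    sum_le_sum fun x _ ↦ mul_le_of_le_one_left (Nat.cast_nonneg _) (adjInd_le_one ..)⟩

/-- The main term of the number of ordered edges of a `d`-regular graph `G ≥ X` that cannot be used
to switch away the edge `uv` of `X`: those in `X`, and those with an end near `u` or `v`. -/
def lostPairs (d : ℕ) (X : SimpleGraph V) (u v : V) : ℝ :=
  2 * X.edgeSet.ncard + 2 * d ^ 2 - nbrDegSum X u - nbrDegSum X v

/-- The error term that accompanies `lostPairs` in the count of forward switches. -/
def switchError (X : SimpleGraph V) (u v : V) (G : SimpleGraph V) : ℝ :=
  ∑ x, adjInd (G \ X) u x * X.degree x + ∑ x, adjInd (G \ X) v x * X.degree x +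
    ∑ x ∈ univ.erase v, ∑ y ∈ univ.erase u,
      adjInd (G \ X) x y * (closedInd G u x * closedInd G v y)

/-- The number of pairs of edges `ux` and `vy` of `G` outside `X` that cannot be switched to `uv`
and `xy` because `x` and `y` are adjacent or equal. -/
def closePairs (X : SimpleGraph V) (u v : V) (G : SimpleGraph V) : ℝ :=
  ∑ x, ∑ y, adjInd (G \ X) u x * closedInd G x y * adjInd (G \ X) v y

lemma closePairs_nonneg (X : SimpleGraph V) (u v : V) (G : SimpleGraph V) :
    0 ≤ closePairs X u v G :=
  sum_nonneg fun _ _ ↦ sum_nonneg fun _ _ ↦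
    mul_nonneg (mul_nonneg (adjInd_nonneg ..) (closedInd_nonneg ..)) (adjInd_nonneg ..)

lemma switchError_nonneg (X : SimpleGraph V) (u v : V) (G : SimpleGraph V) :
    0 ≤ switchError X u v G := by
  have h (w : V) : 0 ≤ ∑ x, adjInd (G \ X) w x * X.degree x :=
    sum_nonneg fun _ _ ↦ mul_nonneg (adjInd_nonneg ..) (Nat.cast_nonneg _)
  exact add_nonneg (add_nonneg (h u) (h v)) <| sum_nonneg fun _ _ ↦ sum_nonneg fun _ _ ↦
    mul_nonneg (adjInd_nonneg ..) (mul_nonneg (closedInd_nonneg ..) (closedInd_nonneg ..))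

lemma backwardSwitches_eq (hG : G ∈ regGraphs d H \ regGraphs d (H ⊔ edge u v)) :
    backwardSwitches (H ⊔ edge u v) u v G =
      (d - H.degree u) * (d - H.degree v) - closePairs (H ⊔ edge u v) u v G := by
  rw [mem_sdiff, mem_regGraphs_sup, not_and] at hG
  have hX : G \ (H ⊔ edge u v) = G \ H :=
    sdiff_sup_edge_of_not_adj fun h ↦ hG.2 hG.1 (edge_le_of_adj h)
  rw [closePairs, hX, ← sum_adjInd_sdiff_of_mem hG.1, ← sum_adjInd_sdiff_of_mem hG.1, sum_mul_sum]
  simp only [backwardSwitches, hX, ← sum_sub_distrib]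
  exact sum_congr rfl fun x _ ↦ sum_congr rfl fun y _ ↦ by ring

lemma forwardSwitches_le (hG : G ∈ regGraphs d X) :
    forwardSwitches X u v G ≤ d * Fintype.card V := by
  have hle : forwardSwitches X u v G ≤ ∑ x, ∑ y, adjInd (G \ X) x y := by
    refine sum_le_sum fun x _ ↦ sum_le_sum fun y _ ↦ ?_
    refine mul_le_of_le_one_right (adjInd_nonneg ..) (mul_le_one₀ ?_ ?_ ?_)
    all_goals linarith [closedInd_nonneg G u x, closedInd_nonneg G v y, closedInd_le_one G v y]
  rw [sum_sum_adjInd_sdiff hG] at hle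
  linarith [(Nat.cast_nonneg X.edgeSet.ncard : (0 : ℝ) ≤ _)]

lemma sum_sum_adjInd_mul_closedInd (hG : G ∈ regGraphs d X) (u : V) :
    ∑ x, ∑ y, adjInd (G \ X) x y * closedInd G u x =
      d - X.degree u + d ^ 2 - nbrDegSum X u - ∑ x, adjInd (G \ X) u x * X.degree x := by
  have hnbr : nbrDegSum X u + ∑ x, adjInd (G \ X) u x * X.degree x =
      ∑ x, adjInd G u x * X.degree x := by
    simp only [nbrDegSum, adjInd_sdiff (le_of_mem_regGraphs hG), ← sum_add_distrib]
    exact sum_congr rfl fun x _ ↦ by ring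
  simp only [mul_comm _ (closedInd G u _), ← mul_sum, sum_adjInd_sdiff_of_mem hG,
    sum_closedInd_mul]
  simp only [mul_sub, sum_sub_distrib, ← sum_mul, sum_adjInd, degree_of_mem_regGraphs hG]
  linarith

lemma sum_sum_adjInd_mul_closedInd_mul_closedInd (hG : G ∈ regGraphs d X) (huv : X.Adj u v) :
    ∑ x, ∑ y, adjInd (G \ X) x y * (closedInd G u x * closedInd G v y) =
      d - X.degree u + (d - X.degree v) + ∑ x ∈ univ.erase v, ∑ y ∈ univ.erase u,
        adjInd (G \ X) x y * (closedInd G u x * closedInd G v y) := by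
  have huvG : closedInd G u v = 1 := by simp [closedInd, le_of_mem_regGraphs hG huv]
  have hrow : ∑ y, adjInd (G \ X) v y * (closedInd G u v * closedInd G v y) = d - X.degree v := by
    simp only [huvG, one_mul, adjInd_sdiff_mul_closedInd, sum_adjInd_sdiff_of_mem hG]
  have hcol : ∑ x ∈ univ.erase v, adjInd (G \ X) x u * (closedInd G u x * closedInd G v u) =
      d - X.degree u := by
    simp only [closedInd_comm G v u, huvG, mul_one, adjInd_comm _ _ u, adjInd_sdiff_mul_closedInd]
    rw [← sum_adjInd_sdiff_of_mem hG u]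
    refine sum_erase _ ?_
    simp [adjInd, huv]
  rw [← add_sum_erase _ _ (mem_univ v), hrow, ← hcol, add_comm _ (_ - _), add_assoc,
    ← sum_add_distrib]
  exact congrArg _ (sum_congr rfl fun x _ ↦ (add_sum_erase _ _ (mem_univ u)).symm)

lemma forwardSwitches_eq (hG : G ∈ regGraphs d X) (huv : X.Adj u v) :
    forwardSwitches X u v G =
      d * Fintype.card V - lostPairs d X u v + switchError X u v G := by
  have hexpand : forwardSwitches X u v G = ∑ x, ∑ y, adjInd (G \ X) x y -
      ∑ x, ∑ y, adjInd (G \ X) x y * closedInd G u x -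
      ∑ x, ∑ y, adjInd (G \ X) x y * closedInd G v x +
      ∑ x, ∑ y, adjInd (G \ X) x y * (closedInd G u x * closedInd G v y) := by
    rw [sum_comm (f := fun x y ↦ adjInd (G \ X) x y * closedInd G v x)]
    simp only [forwardSwitches, ← sum_sub_distrib, ← sum_add_distrib]
    refine sum_congr rfl fun x _ ↦ sum_congr rfl fun y _ ↦ ?_
    rw [adjInd_comm _ y x]
    ring
  rw [hexpand, sum_sum_adjInd_sdiff hG, sum_sum_adjInd_mul_closedInd hG,
    sum_sum_adjInd_mul_closedInd hG, sum_sum_adjInd_mul_closedInd_mul_closedInd hG huv, lostPairs,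
    switchError]
  ring

lemma sum_switch_balance (d : ℕ) (huv : u ≠ v) (h : ¬H.Adj u v) :
    ∑ G ∈ regGraphs d (H ⊔ edge u v), forwardSwitches (H ⊔ edge u v) u v G =
      (d - H.degree u) * (d - H.degree v) * (numReg d H - numReg d (H ⊔ edge u v)) -
      ∑ G ∈ regGraphs d H, closePairs (H ⊔ edge u v) u v G +
      ∑ G ∈ regGraphs d (H ⊔ edge u v), closePairs (H ⊔ edge u v) u v G := by
  have hsub : regGraphs d (H ⊔ edge u v) ⊆ regGraphs d H := regGraphs_anti le_sup_left
  rw [sum_forwardSwitches huv h, sum_congr rfl fun G hG ↦ backwardSwitches_eq hG, sum_sub_distrib,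
    sum_const, nsmul_eq_mul, cast_card_sdiff hsub, sum_sdiff_eq_sub hsub]
  unfold numReg
  ring

/-- The edge density `d / |V|`, up to lower-order terms, of a `d`-regular graph on `V`. -/
def density (V : Type*) [Fintype V] (d : ℕ) : ℝ := d / Fintype.card V

/-- The regime in which conditioning on at most `K` edges multiplies probabilities by at most `2`:
`d ≥ 2` and `d` is at most a small multiple, depending on `K`, of the number of vertices. -/
structure Sparse (V : Type*) [Fintype V] (d K : ℕ) : Prop where
  two_le : 2 ≤ d
  mul_le_card : (K + 5) * d ≤ Fintype.card V

variable {K : ℕ}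

lemma density_nonneg : 0 ≤ density V d := by unfold density; positivity

lemma Sparse.two_le_cast (hS : Sparse V d K) : (2 : ℝ) ≤ d := by exact_mod_cast hS.two_le

lemma Sparse.mul_le_card_cast (hS : Sparse V d K) : ((K : ℝ) + 5) * d ≤ Fintype.card V := by
  exact_mod_cast hS.mul_le_card

lemma Sparse.card_pos (hS : Sparse V d K) : (0 : ℝ) < Fintype.card V := by
  have := hS.two_le_cast
  exact lt_of_lt_of_le (by positivity) hS.mul_le_card_cast

lemma Sparse.density_mul_card (hS : Sparse V d K) : density V d * Fintype.card V = d :=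
  div_mul_cancel₀ _ hS.card_pos.ne'

lemma Sparse.density_mul_le (hS : Sparse V d K) : ((K : ℝ) + 5) * density V d ≤ 1 := by
  rw [density, ← mul_div_assoc, div_le_one hS.card_pos]
  exact hS.mul_le_card_cast

lemma le_forwardSwitches (hG : G ∈ regGraphs d X) (huv : X.Adj u v) :
    (d : ℝ) * Fintype.card V - (2 * X.edgeSet.ncard + 2 * d ^ 2) ≤ forwardSwitches X u v G := by
  rw [forwardSwitches_eq hG huv, lostPairs]
  linarith [(nbrDegSum_mem X u).1, (nbrDegSum_mem X v).1, switchError_nonneg X u v G]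

lemma sub_degree_mul_sub_degree_mem (hu : (H.degree u : ℝ) ≤ d) (hv : (H.degree v : ℝ) ≤ d) :
    ((d : ℝ) - H.degree u) * (d - H.degree v) ∈ Set.Icc 0 ((d : ℝ) ^ 2) := by
  have hu0 : (0 : ℝ) ≤ H.degree u := Nat.cast_nonneg _
  have hv0 : (0 : ℝ) ≤ H.degree v := Nat.cast_nonneg _
  refine ⟨mul_nonneg (sub_nonneg.2 hu) (sub_nonneg.2 hv), ?_⟩
  rw [sq]
  exact mul_le_mul (sub_le_self _ hu0) (sub_le_self _ hv0) (sub_nonneg.2 hv) (Nat.cast_nonneg d)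

lemma sum_const_regGraphs (d : ℕ) (H : SimpleGraph V) (c : ℝ) :
    ∑ _G ∈ regGraphs d H, c = c * numReg d H := by
  rw [sum_const, nsmul_eq_mul, mul_comm, numReg]

lemma numReg_sup_edge_le (hS : Sparse V d K) (hH : H.edgeSet.ncard ≤ K) (h : ¬edge u v ≤ H) :
    numReg d (H ⊔ edge u v) ≤ 2 * density V d * numReg d H := by
  obtain ⟨huv, hadj⟩ := not_edge_le_iff.1 h
  set X := H ⊔ edge u v with hX
  have hXuv : X.Adj u v := by simp [hX, edge_adj, huv]
  have hXcard : (X.edgeSet.ncard : ℝ) ≤ K + 1 := by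
    exact_mod_cast (ncard_edgeSet_sup_edge_le H u v).trans (Nat.succ_le_succ hH)
  have hforward : (d * Fintype.card V - (2 * X.edgeSet.ncard + 2 * d ^ 2)) * numReg d X ≤
      ∑ G ∈ regGraphs d X, forwardSwitches X u v G := by
    rw [← sum_const_regGraphs]
    exact sum_le_sum fun G hG ↦ le_forwardSwitches hG hXuv
  have hbackward : ∑ G ∈ regGraphs d X, forwardSwitches X u v G ≤ d ^ 2 * numReg d H := by
    rw [sum_forwardSwitches huv hadj, ← sum_const_regGraphs]
    refine (sum_le_sum fun G hG ↦ ?_).trans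
      (sum_le_sum_of_subset_of_nonneg sdiff_subset fun _ _ _ ↦ sq_nonneg (d : ℝ))
    have hGH := (mem_sdiff.1 hG).1
    obtain ⟨-, hle⟩ := sub_degree_mul_sub_degree_mem (degree_le_of_mem_regGraphs hGH u)
      (degree_le_of_mem_regGraphs hGH v)
    rw [backwardSwitches_eq hG]
    linarith [closePairs_nonneg X u v G]
  have hd := hS.two_le_cast
  have hn := hS.mul_le_card_cast
  have hlost : d * Fintype.card V / 2 ≤
      d * Fintype.card V - (2 * X.edgeSet.ncard + 2 * (d : ℝ) ^ 2) := by
    have hd4 : 4 ≤ (d : ℝ) ^ 2 := by nlinarith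
    have hKd : K * 4 ≤ K * (d : ℝ) ^ 2 := mul_le_mul_of_nonneg_left hd4 (Nat.cast_nonneg K)
    nlinarith [mul_le_mul_of_nonneg_right hn (zero_le_two.trans hd)]
  have hmain : d * Fintype.card V / 2 * numReg d X ≤ d ^ 2 * numReg d H :=
    (mul_le_mul_of_nonneg_right hlost (numReg_nonneg X)).trans (hforward.trans hbackward)
  have hcard := hS.card_pos
  have hpos : 0 < d * (Fintype.card V : ℝ) / 2 := by positivity
  refine le_of_mul_le_mul_left (hmain.trans_eq ?_) hpos
  rw [density]
  field_simp

lemma sum_adjInd_sdiff_le (hS : Sparse V d K) (hH : H.edgeSet.ncard ≤ K)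
    (hX : H.Adj x y → X.Adj x y) :
    ∑ G ∈ regGraphs d H, adjInd (G \ X) x y ≤ 2 * density V d * numReg d H := by
  by_cases hxy : edge x y ≤ H
  · have hXxy : edge x y ≤ X := (edge_le_iff X).2 (((edge_le_iff H).1 hxy).imp_right hX)
    simp only [adjInd_sdiff_eq_zero hXxy, sum_const_zero]
    exact mul_nonneg (mul_nonneg zero_le_two density_nonneg) (numReg_nonneg H)
  calc ∑ G ∈ regGraphs d H, adjInd (G \ X) x y
      ≤ ∑ G ∈ regGraphs d H, closedInd G x y :=
        sum_le_sum fun G _ ↦ adjInd_sdiff_le_closedInd G X x y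
    _ = numReg d (H ⊔ edge x y) := sum_closedInd_regGraphs d H x y
    _ ≤ 2 * density V d * numReg d H := numReg_sup_edge_le hS hH hxy

lemma sum_numReg_sup_edge (d : ℕ) (H : SimpleGraph V) (x : V) :
    ∑ y, numReg d (H ⊔ edge x y) = (1 + d) * numReg d H := by
  simp only [← sum_closedInd_regGraphs]
  rw [sum_comm, ← sum_const_regGraphs]
  exact sum_congr rfl fun G hG ↦ by rw [sum_closedInd, degree_of_mem_regGraphs hG]

lemma sum_sum_numReg_path (d : ℕ) (H : SimpleGraph V) (u : V) :
    ∑ x, ∑ y, numReg d (H ⊔ edge u x ⊔ edge x y) = (1 + d) ^ 2 * numReg d H := by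
  simp only [sum_numReg_sup_edge, ← mul_sum]
  ring

lemma sum_sum_numReg_two_edges (d : ℕ) (H : SimpleGraph V) (u v : V) :
    ∑ x, ∑ y, numReg d (H ⊔ edge u x ⊔ edge v y) = (1 + d) ^ 2 * numReg d H := by
  simp only [sum_numReg_sup_edge, ← mul_sum]
  ring

lemma sum_adjInd_sdiff_path_mul (hux : ¬edge u x ≤ X) (f : SimpleGraph V → ℝ) :
    ∑ G ∈ regGraphs d H, adjInd (G \ X) u x * closedInd G x y * f G =
      ∑ G ∈ regGraphs d (H ⊔ edge u x ⊔ edge x y), f G := by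
  rw [← sum_mul_closedInd, ← sum_mul_closedInd]
  refine sum_congr rfl fun G _ ↦ ?_
  rw [adjInd_sdiff_eq_closedInd hux]
  ring

lemma sum_adjInd_sdiff_path_le (hS : Sparse V d K) (hH : H.edgeSet.ncard + 2 ≤ K) (hHX : H ≤ X)
    (huv : X.Adj u v) (hux : ¬edge u x ≤ X) :
    ∑ G ∈ regGraphs d (H ⊔ edge u x ⊔ edge x y), adjInd (G \ X) v y ≤
      2 * density V d * numReg d (H ⊔ edge u x ⊔ edge x y) := by
  refine sum_adjInd_sdiff_le hS ((ncard_edgeSet_sup_edge_sup_edge_le H u x x y).trans hH)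
    fun hadj ↦ ?_
  have hxv : x ≠ v := by
    rintro rfl
    exact hux (edge_le_of_adj huv)
  simp only [sup_adj, edge_adj] at hadj
  rcases hadj with (hadj | ⟨⟨hvu, -⟩ | ⟨hvx, -⟩, -⟩) | ⟨⟨hvx, -⟩ | ⟨hvy, hyx⟩, -⟩
  exacts [hHX hadj, absurd hvu.symm huv.ne, absurd hvx.symm hxv, absurd hvx.symm hxv,
    absurd (hvy.trans hyx).symm hxv]

lemma sum_closePairs_le (hS : Sparse V d K) (hH : H.edgeSet.ncard + 2 ≤ K) (hHX : H ≤ X)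
    (huv : X.Adj u v) :
    ∑ G ∈ regGraphs d H, closePairs X u v G ≤ 2 * density V d * ((1 + d) ^ 2 * numReg d H) := by
  rw [← sum_sum_numReg_path d H u, mul_sum]
  simp only [closePairs, mul_sum]
  rw [sum_comm]
  refine sum_le_sum fun x _ ↦ ?_
  rw [sum_comm]
  refine sum_le_sum fun y _ ↦ ?_
  by_cases hux : edge u x ≤ X
  · simpa only [adjInd_sdiff_eq_zero hux, zero_mul, sum_const_zero] using
      mul_nonneg (mul_nonneg zero_le_two density_nonneg) (numReg_nonneg _)
  · rw [sum_adjInd_sdiff_path_mul hux]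
    exact sum_adjInd_sdiff_path_le hS hH hHX huv hux

lemma sum_sum_adjInd_sdiff_mul_degree_le (hS : Sparse V d K) (hX : X.edgeSet.ncard ≤ K) (u : V) :
    ∑ G ∈ regGraphs d X, ∑ x, adjInd (G \ X) u x * X.degree x ≤
      2 * density V d * (2 * X.edgeSet.ncard * numReg d X) := by
  simp only [← sum_sum_adjInd X, sum_adjInd, sum_mul, mul_sum]
  rw [sum_comm]
  refine sum_le_sum fun x _ ↦ ?_
  rw [← sum_mul]
  calc (∑ G ∈ regGraphs d X, adjInd (G \ X) u x) * X.degree x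
      ≤ 2 * density V d * numReg d X * X.degree x :=
        mul_le_mul_of_nonneg_right (sum_adjInd_sdiff_le hS hX id) (Nat.cast_nonneg _)
    _ = 2 * density V d * (X.degree x * numReg d X) := by ring

lemma sum_switchError_le (hS : Sparse V d K) (hX : X.edgeSet.ncard + 2 ≤ K) (u v : V) :
    ∑ G ∈ regGraphs d X, switchError X u v G ≤
      2 * density V d * ((4 * X.edgeSet.ncard + (1 + d) ^ 2) * numReg d X) := by
  have hedge {x y : V} (hx : x ≠ v) (hy : y ≠ u) :
      ∑ G ∈ regGraphs d X, adjInd (G \ X) x y * (closedInd G u x * closedInd G v y) ≤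
        2 * density V d * numReg d (X ⊔ edge u x ⊔ edge v y) := by
    simp only [mul_comm (closedInd _ u _), ← mul_assoc, sum_mul_closedInd]
    refine sum_adjInd_sdiff_le hS ((ncard_edgeSet_sup_edge_sup_edge_le X u x v y).trans hX) ?_
    simp only [sup_adj, edge_adj]
    grind
  have hoverlap : ∑ G ∈ regGraphs d X, ∑ x ∈ univ.erase v, ∑ y ∈ univ.erase u,
      adjInd (G \ X) x y * (closedInd G u x * closedInd G v y) ≤
        2 * density V d * ((1 + d) ^ 2 * numReg d X) := by
    have hnonneg (x y : V) : 0 ≤ 2 * density V d * numReg d (X ⊔ edge u x ⊔ edge v y) :=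
      mul_nonneg (mul_nonneg zero_le_two density_nonneg) (numReg_nonneg _)
    rw [← sum_sum_numReg_two_edges d X u v, mul_sum, sum_comm]
    simp only [mul_sum]
    refine (sum_le_sum fun x hx ↦ ?_).trans (sum_le_sum_of_subset_of_nonneg
      (erase_subset v univ) fun x _ _ ↦ sum_nonneg fun y _ ↦ hnonneg x y)
    rw [sum_comm]
    exact (sum_le_sum fun y hy ↦ hedge (ne_of_mem_erase hx) (ne_of_mem_erase hy)).trans
      (sum_le_sum_of_subset_of_nonneg (erase_subset u univ) fun y _ _ ↦ hnonneg x y)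
  have hdeg (w : V) := sum_sum_adjInd_sdiff_mul_degree_le hS (by omega : X.edgeSet.ncard ≤ K) w
  simp only [switchError, sum_add_distrib]
  linarith [hdeg u, hdeg v]

/-- The conditional probability, to first order, that a random `d`-regular graph containing `H` also
contains the edge `uv`. -/
def edgeRate (d : ℕ) (H : SimpleGraph V) (u v : V) : ℝ :=
  (d - H.degree u) * (d - H.degree v) / (d * Fintype.card V)

lemma Sparse.edgeRate_mul (hS : Sparse V d K) (H : SimpleGraph V) (u v : V) :
    edgeRate d H u v * (d * Fintype.card V) = (d - H.degree u) * (d - H.degree v) :=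
  div_mul_cancel₀ _ (mul_pos (by linarith [hS.two_le_cast]) hS.card_pos).ne'

lemma Sparse.abs_le_of_mul_le {a c : ℝ} (hS : Sparse V d K)
    (h : |d * Fintype.card V * a| ≤ c * d ^ 2) : |a| ≤ c * density V d := by
  have hd : (0 : ℝ) < d := by linarith [hS.two_le_cast]
  rw [abs_mul, abs_of_pos (mul_pos hd hS.card_pos)] at h
  refine le_of_mul_le_mul_left (h.trans_eq ?_) (mul_pos hd hS.card_pos)
  rw [← hS.density_mul_card]
  ring

lemma Sparse.one_add_sq_le (hS : Sparse V d K) : 4 * (1 + (d : ℝ)) ^ 2 ≤ 9 * d ^ 2 := by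
  nlinarith [hS.two_le_cast]

lemma Sparse.mul_ncard_le (hS : Sparse V d K) {m : ℕ} (hX : m ≤ K) :
    4 * (m : ℝ) ≤ K * d ^ 2 := by
  have hd4 : (4 : ℝ) ≤ d ^ 2 := by nlinarith [hS.two_le_cast]
  have hm : (m : ℝ) ≤ K := by exact_mod_cast hX
  nlinarith

lemma sum_forwardSwitches_mem (hS : Sparse V d K) (hX : X.edgeSet.ncard ≤ K) (huv : X.Adj u v) :
    d * Fintype.card V * numReg d X - ∑ G ∈ regGraphs d X, forwardSwitches X u v G ∈
      Set.Icc 0 ((K / 2 + 2) * d ^ 2 * numReg d X) := by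
  have hcard := hS.mul_ncard_le hX
  rw [← sum_const_regGraphs, ← sum_const_regGraphs, ← sum_sub_distrib]
  exact ⟨sum_nonneg fun G hG ↦ by linarith [forwardSwitches_le hG (u := u) (v := v)],
    sum_le_sum fun G hG ↦ by linarith [le_forwardSwitches hG huv]⟩

lemma sum_closePairs_mem (hS : Sparse V d K) (hH : H.edgeSet.ncard + 2 ≤ K) (hHX : H ≤ X)
    (huv : X.Adj u v) :
    ∑ G ∈ regGraphs d H, closePairs X u v G ∈
      Set.Icc 0 (9 / 2 * density V d * d ^ 2 * numReg d H) := by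
  refine ⟨sum_nonneg fun G _ ↦ closePairs_nonneg X u v G,
    (sum_closePairs_le hS hH hHX huv).trans ?_⟩
  have h := mul_le_mul_of_nonneg_right hS.one_add_sq_le
    (mul_nonneg (density_nonneg (V := V) (d := d)) (numReg_nonneg (d := d) H))
  linarith

lemma sub_degree_mul_sub_degree_mul_numReg_mem (d : ℕ) (hHX : H ≤ X) (u v : V) :
    (d - H.degree u) * (d - H.degree v) * numReg d X ∈ Set.Icc 0 (d ^ 2 * numReg d X) := by
  rcases (regGraphs d X).eq_empty_or_nonempty with hempty | ⟨G, hG⟩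
  · simp [numReg, hempty]
  · have hGH := regGraphs_anti hHX hG
    have h := sub_degree_mul_sub_degree_mem (degree_le_of_mem_regGraphs hGH u)
      (degree_le_of_mem_regGraphs hGH v)
    exact ⟨mul_nonneg h.1 (numReg_nonneg X), mul_le_mul_of_nonneg_right h.2 (numReg_nonneg X)⟩

lemma abs_numReg_sup_edge_sub_edgeRate_le (hS : Sparse V d K) (hH : H.edgeSet.ncard + 3 ≤ K)
    (h : ¬edge u v ≤ H) :
    |numReg d (H ⊔ edge u v) - edgeRate d H u v * numReg d H| ≤
      (K + 9) * density V d ^ 2 * numReg d H := by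
  obtain ⟨huv, hadj⟩ := not_edge_le_iff.1 h
  have hXuv : (H ⊔ edge u v).Adj u v := by simp [edge_adj, huv]
  have hX : (H ⊔ edge u v).edgeSet.ncard + 2 ≤ K := by rw [ncard_edgeSet_sup_edge huv hadj]; omega
  have hbalance := sum_switch_balance d huv hadj
  obtain ⟨hforward, hforward_le⟩ := sum_forwardSwitches_mem hS (by omega) hXuv
  obtain ⟨hrate, hrate_le⟩ :=
    sub_degree_mul_sub_degree_mul_numReg_mem d (le_sup_left : H ≤ H ⊔ edge u v) u v
  obtain ⟨-, hclose⟩ := sum_closePairs_mem hS (by omega) le_sup_left hXuv (H := H)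
  have hcloseX : 0 ≤ ∑ G ∈ regGraphs d (H ⊔ edge u v), closePairs (H ⊔ edge u v) u v G :=
    (sum_closePairs_mem hS hX le_rfl hXuv).1
  have hcloseX_le : ∑ G ∈ regGraphs d (H ⊔ edge u v), closePairs (H ⊔ edge u v) u v G ≤
      ∑ G ∈ regGraphs d H, closePairs (H ⊔ edge u v) u v G :=
    sum_le_sum_of_subset_of_nonneg (regGraphs_anti le_sup_left) fun G _ _ ↦ closePairs_nonneg ..
  have hA : d ^ 2 * numReg d (H ⊔ edge u v) ≤ d ^ 2 * (2 * density V d * numReg d H) :=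
    mul_le_mul_of_nonneg_left (numReg_sup_edge_le hS (by omega) h) (sq_nonneg _)
  have hKA := mul_le_mul_of_nonneg_left hA (Nat.cast_nonneg (α := ℝ) K)
  have hqM : 0 ≤ d ^ 2 * (density V d * numReg d H) :=
    mul_nonneg (sq_nonneg _) (mul_nonneg density_nonneg (numReg_nonneg H))
  have hKqM := mul_nonneg (Nat.cast_nonneg (α := ℝ) K) hqM
  have hscaled : |d * Fintype.card V * (numReg d (H ⊔ edge u v) -
      edgeRate d H u v * numReg d H)| ≤ (K + 9) * density V d * numReg d H * d ^ 2 := by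
    rw [mul_sub, ← mul_assoc _ (edgeRate d H u v), mul_comm _ (edgeRate d H u v), hS.edgeRate_mul,
      abs_le]
    constructor <;> linarith
  exact (hS.abs_le_of_mul_le hscaled).trans_eq (by ring)

lemma degree_sup_path_end (hux : u ≠ x) (huy : u ≠ y) (h : ¬H.Adj u x) (hy : H.degree y = 0) :
    ((H ⊔ edge u x ⊔ edge x y).degree y : ℝ) = 1 := by
  rcases eq_or_ne x y with rfl | hxy
  · rw [sup_edge_self, degree_sup_edge hux h]
    simp [hy, hux.symm]
  · have hHxy : ¬(H ⊔ edge u x).Adj x y := by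
      have hHxy : ¬H.Adj x y := fun hadj ↦ hadj.symm.degree_pos_left.ne' hy
      simp [hHxy, edge_adj, huy.symm, hxy.symm]
    simp [degree_sup_edge hxy hHxy, degree_sup_edge hux h, hy, hxy.symm, huy.symm]

lemma degree_sup_path_of_ne (hu : v ≠ u) (hx : v ≠ x) (hy : v ≠ y) :
    (H ⊔ edge u x ⊔ edge x y).degree v = H.degree v := by
  simp only [← card_neighborFinset_eq_degree]
  congr 1
  ext w
  simp [edge_adj, hu, hx, hy]

/-- The value of `edgeRate d L v y` for those `L ≥ H` in which `y` has degree `1` and `v` has the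
same degree as in `H`. -/
def leafRate (d : ℕ) (H : SimpleGraph V) (v : V) : ℝ :=
  (d - H.degree v) * (d - 1) / (d * Fintype.card V)

lemma leafRate_mul_numReg_mem (hS : Sparse V d K) (hHX : H ≤ X) (v : V) :
    leafRate d H v * numReg d X ∈ Set.Icc 0 (density V d * numReg d X) := by
  rcases (regGraphs d X).eq_empty_or_nonempty with hempty | ⟨G, hG⟩
  · simp [numReg, hempty]
  have hd := hS.two_le_cast
  have hn := hS.card_pos
  have hv := degree_le_of_mem_regGraphs (regGraphs_anti hHX hG) v
  have hv0 : (0 : ℝ) ≤ H.degree v := Nat.cast_nonneg _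
  refine ⟨mul_nonneg (div_nonneg (mul_nonneg ?_ ?_) ?_) (numReg_nonneg X),
    mul_le_mul_of_nonneg_right ?_ (numReg_nonneg X)⟩
  any_goals first | linarith | positivity
  rw [leafRate, density, div_le_div_iff₀ (by positivity) hn, ← mul_assoc]
  refine mul_le_mul_of_nonneg_right ?_ hn.le
  exact mul_le_mul (sub_le_self _ hv0) (by linarith) (by linarith) (by linarith)

lemma abs_numReg_path_sub_leafRate_le (hS : Sparse V d K) (hH : H.edgeSet.ncard + 5 ≤ K)
    (huv : u ≠ v) (huy : u ≠ y) (hvy : v ≠ y) (hux : ¬edge u x ≤ H) (hxv : x ≠ v)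
    (hy : H.degree y = 0) :
    |numReg d (H ⊔ edge u x ⊔ edge x y ⊔ edge v y) -
        leafRate d H v * numReg d (H ⊔ edge u x ⊔ edge x y)| ≤
      (K + 9) * density V d ^ 2 * numReg d (H ⊔ edge u x ⊔ edge x y) := by
  obtain ⟨hne, hadj⟩ := not_edge_le_iff.1 hux
  have hHvy : ¬H.Adj v y := fun h ↦ h.symm.degree_pos_left.ne' hy
  have hLvy : ¬edge v y ≤ H ⊔ edge u x ⊔ edge x y := by
    simp [hHvy, hvy, huv.symm, hxv.symm]
  have hL := ncard_edgeSet_sup_edge_sup_edge_le H u x x y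
  have hrate : edgeRate d (H ⊔ edge u x ⊔ edge x y) v y = leafRate d H v := by
    rw [edgeRate, leafRate, degree_sup_path_of_ne huv.symm hxv.symm hvy,
      degree_sup_path_end hne huy hadj hy]
  rw [← hrate]
  exact abs_numReg_sup_edge_sub_edgeRate_le hS (by omega) hLvy

lemma abs_sum_adjInd_sdiff_path_sub_le (hS : Sparse V d K) (hH : H.edgeSet.ncard + 5 ≤ K)
    (huv : u ≠ v) (huy : u ≠ y) (hux : ¬edge u x ≤ H ⊔ edge u v) :
    |∑ G ∈ regGraphs d (H ⊔ edge u x ⊔ edge x y), adjInd (G \ (H ⊔ edge u v)) v y -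
        leafRate d H v * numReg d (H ⊔ edge u x ⊔ edge x y)| ≤
      ((K + 9) * density V d ^ 2 + 2 * density V d * (H ⊔ edge u v).degree y) *
        numReg d (H ⊔ edge u x ⊔ edge x y) := by
  have hXuv : (H ⊔ edge u v).Adj u v := by simp [edge_adj, huv]
  have hL := ncard_edgeSet_sup_edge_sup_edge_le H u x x y
  have hHL : H ≤ H ⊔ edge u x ⊔ edge x y := le_sup_left.trans le_sup_left
  have hq := density_nonneg (V := V) (d := d)
  have hN := numReg_nonneg (d := d) (H ⊔ edge u x ⊔ edge x y)
  have hqN := mul_nonneg hq hN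
  have hsqN := mul_nonneg
    (mul_nonneg (by positivity : 0 ≤ (K : ℝ) + 9) (sq_nonneg (density V d))) hN
  rcases Nat.eq_zero_or_pos ((H ⊔ edge u v).degree y) with hy | hy
  · have hisolated (w : V) : ¬(H ⊔ edge u v).Adj w y := fun h ↦ h.symm.degree_pos_left.ne' hy
    have hvy : v ≠ y := by
      rintro rfl
      exact hisolated u hXuv
    have hxv : x ≠ v := by
      rintro rfl
      exact hux (edge_le_of_adj hXuv)
    have hHy : H.degree y = 0 := Nat.eq_zero_of_le_zero (hy ▸ degree_le_of_le le_sup_left)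
    have hsum : ∑ G ∈ regGraphs d (H ⊔ edge u x ⊔ edge x y), adjInd (G \ (H ⊔ edge u v)) v y =
        numReg d (H ⊔ edge u x ⊔ edge x y ⊔ edge v y) := by
      simp only [adjInd_sdiff_eq_closedInd (not_edge_le_iff.2 ⟨hvy, hisolated v⟩),
        sum_closedInd_regGraphs]
    rw [hsum, hy, Nat.cast_zero, mul_zero, add_zero]
    exact abs_numReg_path_sub_leafRate_le hS hH huv huy hvy (fun h ↦ hux (h.trans le_sup_left))
      hxv hHy
  · have hupper := sum_adjInd_sdiff_path_le hS (by omega) le_sup_left hXuv hux (y := y)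
    obtain ⟨hrate, hrate_le⟩ := leafRate_mul_numReg_mem hS hHL v
    have hsum : 0 ≤ ∑ G ∈ regGraphs d (H ⊔ edge u x ⊔ edge x y),
        adjInd (G \ (H ⊔ edge u v)) v y := sum_nonneg fun _ _ ↦ adjInd_nonneg ..
    have hy1 : (1 : ℝ) ≤ (H ⊔ edge u v).degree y := by exact_mod_cast hy
    have := mul_le_mul_of_nonneg_right hy1 hqN
    rw [abs_le]
    constructor <;> linarith

lemma sum_adjInd_sdiff_mul_closedInd (hux : ¬edge u x ≤ X) :
    ∑ G ∈ regGraphs d H, adjInd (G \ X) u x * closedInd G x y =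
      numReg d (H ⊔ edge u x ⊔ edge x y) := by
  simpa [numReg] using sum_adjInd_sdiff_path_mul hux 1 (y := y) (d := d) (H := H)

lemma abs_sum_closePair_sub_le (hS : Sparse V d K) (hH : H.edgeSet.ncard + 5 ≤ K) (huv : u ≠ v)
    (huy : u ≠ y) (hX : X = H ⊔ edge u v) (x : V) :
    |∑ G ∈ regGraphs d H, adjInd (G \ X) u x * closedInd G x y * adjInd (G \ X) v y -
        leafRate d H v * ∑ G ∈ regGraphs d H, adjInd (G \ X) u x * closedInd G x y| ≤
      ((K + 9) * density V d ^ 2 + 2 * density V d * X.degree y) *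
        ∑ G ∈ regGraphs d H, adjInd (G \ X) u x * closedInd G x y := by
  by_cases hux : edge u x ≤ X
  · simp only [adjInd_sdiff_eq_zero hux, zero_mul, sum_const_zero, mul_zero, sub_zero, abs_zero,
      le_refl]
  · rw [sum_adjInd_sdiff_path_mul hux, sum_adjInd_sdiff_mul_closedInd hux]
    subst hX
    exact abs_sum_adjInd_sdiff_path_sub_le hS hH huv huy hux

lemma sum_sum_erase_adjInd_sdiff_mul_closedInd (hG : G ∈ regGraphs d H) (X : SimpleGraph V)
    (u : V) :
    ∑ x, ∑ y ∈ univ.erase u, adjInd (G \ X) u x * closedInd G x y =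
      d * ∑ x, adjInd (G \ X) u x := by
  rw [mul_sum]
  refine sum_congr rfl fun x _ ↦ ?_
  have hux : adjInd (G \ X) u x * closedInd G x u = adjInd (G \ X) u x := by
    rw [closedInd_comm, adjInd_sdiff_mul_closedInd]
  rw [sum_erase_eq_sub (mem_univ u), hux, ← mul_sum, sum_closedInd, degree_of_mem_regGraphs hG]
  ring

lemma sum_adjInd_sdiff_sup_edge (hG : G ∈ regGraphs d H) (huv : u ≠ v) (h : ¬H.Adj u v) :
    ∑ x, adjInd (G \ (H ⊔ edge u v)) u x = d - H.degree u - closedInd G u v := by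
  by_cases hGuv : G.Adj u v
  · have hGX : H ⊔ edge u v ≤ G := sup_le (le_of_mem_regGraphs hG) (edge_le_of_adj hGuv)
    have hc : closedInd G u v = 1 := if_pos (edge_le_of_adj hGuv)
    rw [sum_adjInd_sdiff hGX, degree_of_mem_regGraphs hG, degree_sup_edge huv h, hc]
    simp [huv, sub_sub]
  · have hc : closedInd G u v = 0 := if_neg (not_edge_le_iff.2 ⟨huv, hGuv⟩)
    rw [sdiff_sup_edge_of_not_adj hGuv, sum_adjInd_sdiff_of_mem hG, hc, sub_zero]

lemma sum_sum_sum_adjInd_sdiff_mul_closedInd (d : ℕ) (huv : u ≠ v) (h : ¬H.Adj u v) :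
    ∑ x, ∑ y ∈ univ.erase u, ∑ G ∈ regGraphs d H,
        adjInd (G \ (H ⊔ edge u v)) u x * closedInd G x y =
      d * ((d - H.degree u) * numReg d H - numReg d (H ⊔ edge u v)) := by
  calc ∑ x, ∑ y ∈ univ.erase u, ∑ G ∈ regGraphs d H,
        adjInd (G \ (H ⊔ edge u v)) u x * closedInd G x y
      = ∑ G ∈ regGraphs d H, ∑ x, ∑ y ∈ univ.erase u,
          adjInd (G \ (H ⊔ edge u v)) u x * closedInd G x y := by
        simp only [sum_comm (t := regGraphs d H)]
    _ = ∑ G ∈ regGraphs d H, d * (d - H.degree u - closedInd G u v) :=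
        sum_congr rfl fun G hG ↦ by
          rw [sum_sum_erase_adjInd_sdiff_mul_closedInd hG, sum_adjInd_sdiff_sup_edge hG huv h]
    _ = d * ((d - H.degree u) * numReg d H - numReg d (H ⊔ edge u v)) := by
        rw [← mul_sum, sum_sub_distrib, sum_const_regGraphs, sum_closedInd_regGraphs]

lemma sum_sum_adjInd_sdiff_mul_closedInd_le (hS : Sparse V d K) (hH : H.edgeSet.ncard + 1 ≤ K)
    (hHX : H ≤ X) (huy : u ≠ y) :
    ∑ x, ∑ G ∈ regGraphs d H, adjInd (G \ X) u x * closedInd G x y ≤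
      2 * density V d * ((1 + d) * numReg d H) := by
  rw [← sum_numReg_sup_edge d H y, mul_sum]
  refine sum_le_sum fun x _ ↦ ?_
  rw [sum_mul_closedInd, edge_comm]
  refine sum_adjInd_sdiff_le hS ((ncard_edgeSet_sup_edge_le H y x).trans hH) fun hadj ↦ ?_
  simp only [sup_adj, edge_adj] at hadj
  rcases hadj with hadj | ⟨⟨huy', -⟩ | ⟨hux, hxy⟩, -⟩
  exacts [hHX hadj, absurd huy' huy, absurd (hux.trans hxy) huy]

lemma sum_sum_degree_mul_sum_le (hS : Sparse V d K) (hH : H.edgeSet.ncard + 1 ≤ K) (hHX : H ≤ X)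
    (u : V) :
    ∑ x, ∑ y ∈ univ.erase u, X.degree y * ∑ G ∈ regGraphs d H,
        adjInd (G \ X) u x * closedInd G x y ≤
      2 * X.edgeSet.ncard * (2 * density V d * ((1 + d) * numReg d H)) := by
  rw [← sum_sum_adjInd X, sum_comm, sum_mul]
  simp only [sum_adjInd, ← mul_sum]
  have hnonneg : 0 ≤ 2 * density V d * ((1 + d) * numReg d H) :=
    mul_nonneg (mul_nonneg zero_le_two density_nonneg)
      (mul_nonneg (by positivity) (numReg_nonneg H))
  refine (sum_le_sum fun y hy ↦ ?_).trans (sum_le_sum_of_subset_of_nonneg (erase_subset u univ)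
    fun y _ _ ↦ mul_nonneg (Nat.cast_nonneg _) hnonneg)
  exact mul_le_mul_of_nonneg_left
    (sum_sum_adjInd_sdiff_mul_closedInd_le hS hH hHX (ne_of_mem_erase hy).symm) (Nat.cast_nonneg _)

lemma sum_closePairs_eq (d : ℕ) (H : SimpleGraph V) (huv : X.Adj u v) :
    ∑ G ∈ regGraphs d H, closePairs X u v G = ∑ x, ∑ y ∈ univ.erase u, ∑ G ∈ regGraphs d H,
      adjInd (G \ X) u x * closedInd G x y * adjInd (G \ X) v y := by
  simp only [closePairs, sum_comm (s := regGraphs d H)]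
  refine sum_congr rfl fun x _ ↦ (sum_erase _ ?_).symm
  simp only [adjInd_sdiff_eq_zero (edge_le_of_adj huv.symm), mul_zero, sum_const_zero]

lemma abs_sum_closePairs_sub_le_sum (hS : Sparse V d K) (hH : H.edgeSet.ncard + 5 ≤ K)
    (h : ¬edge u v ≤ H) :
    |∑ G ∈ regGraphs d H, closePairs (H ⊔ edge u v) u v G -
        leafRate d H v * (d * ((d - H.degree u) * numReg d H - numReg d (H ⊔ edge u v)))| ≤
      (K + 9) * density V d ^ 2 *
          (d * ((d - H.degree u) * numReg d H - numReg d (H ⊔ edge u v))) +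
        2 * density V d * (2 * (H ⊔ edge u v).edgeSet.ncard *
          (2 * density V d * ((1 + d) * numReg d H))) := by
  obtain ⟨huv, hadj⟩ := not_edge_le_iff.1 h
  have hXuv : (H ⊔ edge u v).Adj u v := by simp [edge_adj, huv]
  rw [sum_closePairs_eq d H hXuv, ← sum_sum_sum_adjInd_sdiff_mul_closedInd d huv hadj]
  simp only [mul_sum _ _ (leafRate d H v), ← sum_sub_distrib]
  refine le_trans ?_ (add_le_add_right (mul_le_mul_of_nonneg_left
    (sum_sum_degree_mul_sum_le hS (by omega) le_sup_left u)
    (mul_nonneg zero_le_two density_nonneg)) _)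
  rw [mul_sum, mul_sum, ← sum_add_distrib]
  refine (abs_sum_le_sum_abs ..).trans (sum_le_sum fun x _ ↦ ?_)
  rw [mul_sum, mul_sum, ← sum_add_distrib]
  refine (abs_sum_le_sum_abs ..).trans (sum_le_sum fun y hy ↦ ?_)
  rw [← mul_assoc (2 * _), ← add_mul, sum_sub_distrib, ← mul_sum]
  exact abs_sum_closePair_sub_le hS hH huv (ne_of_mem_erase hy).symm rfl x

lemma abs_sum_closePairs_sub_edgeRate_le (hS : Sparse V d K) (hH : H.edgeSet.ncard + 5 ≤ K)
    (h : ¬edge u v ≤ H) :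
    |∑ G ∈ regGraphs d H, closePairs (H ⊔ edge u v) u v G -
        d * (d - 1) * edgeRate d H u v * numReg d H| ≤
      7 * K * density V d ^ 2 * d ^ 2 * numReg d H := by
  obtain ⟨huv, hadj⟩ := not_edge_le_iff.1 h
  have hmain := abs_sum_closePairs_sub_le_sum hS hH h
  have hX : ((H ⊔ edge u v).edgeSet.ncard : ℝ) ≤ K - 4 := by
    rw [ncard_edgeSet_sup_edge huv hadj, le_sub_iff_add_le]
    exact_mod_cast by omega
  obtain ⟨hA, hA_le⟩ := leafRate_mul_numReg_mem hS (le_sup_left : H ≤ H ⊔ edge u v) v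
  set A := numReg d (H ⊔ edge u v)
  set M := numReg d H
  have hd := hS.two_le_cast
  have hd0 := zero_le_two.trans hd
  have hM : 0 ≤ M := numReg_nonneg H
  have hqM : 0 ≤ density V d ^ 2 * M := mul_nonneg (sq_nonneg _) hM
  have hleaf : leafRate d H v * (d * ((d - H.degree u) * M)) =
      d * (d - 1) * edgeRate d H u v * M := by
    unfold leafRate edgeRate
    ring
  have hcorrection : d * (leafRate d H v * A) ≤ density V d ^ 2 * d ^ 2 * M := by
    have hAM := mul_le_mul_of_nonneg_left (numReg_sup_edge_le hS (by omega) h)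
      (density_nonneg (V := V) (d := d))
    have h2d := mul_le_mul_of_nonneg_right (mul_le_mul_of_nonneg_right hd hd0) hqM
    linarith [mul_le_mul_of_nonneg_left (hA_le.trans hAM) hd0]
  have hpaths : d * ((d - H.degree u) * M - A) ≤ d ^ 2 * M := by
    have hdegree := mul_nonneg hd0 (mul_nonneg (Nat.cast_nonneg (α := ℝ) (H.degree u)) hM)
    linarith [mul_nonneg hd0 (numReg_nonneg (d := d) (H ⊔ edge u v))]
  have hbad : 4 * ((H ⊔ edge u v).edgeSet.ncard * (1 + (d : ℝ))) ≤ (K - 4) * (3 * d ^ 2) := by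
    rw [mul_left_comm]
    exact mul_le_mul hX (by nlinarith) (by linarith) ((Nat.cast_nonneg _).trans hX)
  have hbadM := mul_le_mul_of_nonneg_right hbad hqM
  have hpathsM := mul_le_mul_of_nonneg_left hpaths
    (mul_nonneg (by positivity : 0 ≤ (K : ℝ) + 9) (sq_nonneg (density V d)))
  have hd2qM := mul_nonneg (sq_nonneg (d : ℝ)) hqM
  rw [abs_le] at hmain ⊢
  constructor <;> linarith [mul_nonneg hd0 hA]

/-- The relative correction, of order `d / |V|`, to `edgeRate`. -/
def edgeCorrection (d : ℕ) (H : SimpleGraph V) (u v : V) : ℝ :=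
  (lostPairs d (H ⊔ edge u v) u v - d * (d - 1) - (d - H.degree u) * (d - H.degree v)) /
    (d * Fintype.card V)

lemma Sparse.edgeCorrection_mul (hS : Sparse V d K) (H : SimpleGraph V) (u v : V) :
    edgeCorrection d H u v * (d * Fintype.card V) =
      lostPairs d (H ⊔ edge u v) u v - d * (d - 1) - (d - H.degree u) * (d - H.degree v) :=
  div_mul_cancel₀ _ (mul_pos (by linarith [hS.two_le_cast]) hS.card_pos).ne'

lemma sum_forwardSwitches_eq (d : ℕ) (huv : X.Adj u v) :
    ∑ G ∈ regGraphs d X, forwardSwitches X u v G =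
      (d * Fintype.card V - lostPairs d X u v) * numReg d X +
        ∑ G ∈ regGraphs d X, switchError X u v G := by
  rw [← sum_const_regGraphs, ← sum_add_distrib]
  exact sum_congr rfl fun G hG ↦ forwardSwitches_eq hG huv

lemma abs_lostPairs_sub_le (hS : Sparse V d K) (hX : X.edgeSet.ncard ≤ K)
    (hu : (H.degree u : ℝ) ≤ d) (hv : (H.degree v : ℝ) ≤ d) :
    |lostPairs d X u v - (d - H.degree u) * (d - H.degree v)| ≤ (K / 2 + 2) * d ^ 2 := by
  obtain ⟨hnbru, hnbru_le⟩ := nbrDegSum_mem X u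
  obtain ⟨hnbrv, hnbrv_le⟩ := nbrDegSum_mem X v
  obtain ⟨hrate, hrate_le⟩ := sub_degree_mul_sub_degree_mem hu hv
  have hcard := hS.mul_ncard_le hX
  unfold lostPairs
  rw [abs_le]
  constructor <;> linarith [sq_nonneg (d : ℝ)]

lemma sum_switchError_mem (hS : Sparse V d K) (hX : X.edgeSet.ncard + 2 ≤ K) (u v : V) :
    ∑ G ∈ regGraphs d X, switchError X u v G ∈
      Set.Icc 0 (density V d * ((2 * K + 5) * d ^ 2) * numReg d X) := by
  refine ⟨sum_nonneg fun G _ ↦ switchError_nonneg X u v G,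
    (sum_switchError_le hS hX u v).trans ?_⟩
  have hd2 := hS.one_add_sq_le
  have hcard := hS.mul_ncard_le (by omega : X.edgeSet.ncard ≤ K)
  have hfactor : 2 * (4 * (X.edgeSet.ncard : ℝ) + (1 + d) ^ 2) ≤ (2 * K + 5) * d ^ 2 := by
    nlinarith
  have h := mul_le_mul_of_nonneg_right hfactor
    (mul_nonneg (density_nonneg (V := V) (d := d)) (numReg_nonneg (d := d) X))
  linarith

lemma numReg_sup_edge_sub_eq (hS : Sparse V d K) (h : ¬edge u v ≤ H) :
    d * Fintype.card V * (numReg d (H ⊔ edge u v) -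
        edgeRate d H u v * (1 + edgeCorrection d H u v) * numReg d H) =
      (lostPairs d (H ⊔ edge u v) u v - (d - H.degree u) * (d - H.degree v)) *
          (numReg d (H ⊔ edge u v) - edgeRate d H u v * numReg d H) -
        (∑ G ∈ regGraphs d H, closePairs (H ⊔ edge u v) u v G -
          d * (d - 1) * edgeRate d H u v * numReg d H) +
        ∑ G ∈ regGraphs d (H ⊔ edge u v), closePairs (H ⊔ edge u v) u v G -
        ∑ G ∈ regGraphs d (H ⊔ edge u v), switchError (H ⊔ edge u v) u v G := by
  obtain ⟨huv, hadj⟩ := not_edge_le_iff.1 h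
  have hbalance := sum_switch_balance d huv hadj
  rw [sum_forwardSwitches_eq d (by simp [edge_adj, huv])] at hbalance
  linear_combination hbalance - numReg d H * hS.edgeRate_mul H u v -
    edgeRate d H u v * numReg d H * hS.edgeCorrection_mul H u v

lemma abs_numReg_sup_edge_sub_edgeCorrection_le (hS : Sparse V d K)
    (hH : H.edgeSet.ncard + 5 ≤ K) (h : ¬edge u v ≤ H) :
    |numReg d (H ⊔ edge u v) -
        edgeRate d H u v * (1 + edgeCorrection d H u v) * numReg d H| ≤
      (K + 10) ^ 2 * density V d ^ 3 * numReg d H := by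
  obtain ⟨huv, hadj⟩ := not_edge_le_iff.1 h
  rcases (regGraphs d H).eq_empty_or_nonempty with hempty | ⟨G, hG⟩
  · have hH0 : numReg d H = 0 := by simp [numReg, hempty]
    have hX0 : numReg d (H ⊔ edge u v) = 0 :=
      le_antisymm (hH0 ▸ numReg_anti le_sup_left) (numReg_nonneg _)
    simp [hH0, hX0]
  have hX : (H ⊔ edge u v).edgeSet.ncard + 2 ≤ K := by rw [ncard_edgeSet_sup_edge huv hadj]; omega
  have hXuv : (H ⊔ edge u v).Adj u v := by simp [edge_adj, huv]
  have hlost := abs_lostPairs_sub_le hS (by omega : (H ⊔ edge u v).edgeSet.ncard ≤ K)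
    (degree_le_of_mem_regGraphs hG u) (degree_le_of_mem_regGraphs hG v)
  have hfirst := mul_le_mul hlost
    (abs_numReg_sup_edge_sub_edgeRate_le hS (by omega) h) (abs_nonneg _) (by positivity)
  rw [← abs_mul] at hfirst
  have hclose := abs_sum_closePairs_sub_edgeRate_le hS hH h
  obtain ⟨hcloseX, hcloseX_le⟩ := sum_closePairs_mem hS hX le_rfl hXuv
  obtain ⟨herror, herror_le⟩ := sum_switchError_mem hS hX u v
  have hA := mul_le_mul_of_nonneg_left (numReg_sup_edge_le hS (by omega) h)
    (mul_nonneg (density_nonneg (V := V) (d := d)) (sq_nonneg (d : ℝ)))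
  have hKA := mul_le_mul_of_nonneg_left hA (Nat.cast_nonneg (α := ℝ) K)
  have hqM : 0 ≤ density V d ^ 2 * d ^ 2 * numReg d H :=
    mul_nonneg (mul_nonneg (sq_nonneg _) (sq_nonneg _)) (numReg_nonneg H)
  have hKqM := mul_nonneg (Nat.cast_nonneg (α := ℝ) K) hqM
  have hKKqM := mul_nonneg (Nat.cast_nonneg (α := ℝ) K) hKqM
  have hscaled : |d * Fintype.card V * (numReg d (H ⊔ edge u v) -
      edgeRate d H u v * (1 + edgeCorrection d H u v) * numReg d H)| ≤
        (K + 10) ^ 2 * density V d ^ 2 * numReg d H * d ^ 2 := by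
    rw [numReg_sup_edge_sub_eq hS h]
    rw [abs_le] at hfirst hclose ⊢
    constructor <;> linarith
  exact (hS.abs_le_of_mul_le hscaled).trans_eq (by ring)

lemma Sparse.div_four_le_edgeRate (hS : Sparse V d K) (hu : H.degree u ≤ 1) (hv : H.degree v ≤ 1) :
    density V d / 4 ≤ edgeRate d H u v := by
  have hd := hS.two_le_cast
  have hu' : (H.degree u : ℝ) ≤ 1 := by exact_mod_cast hu
  have hv' : (H.degree v : ℝ) ≤ 1 := by exact_mod_cast hv
  have hdeg : (d : ℝ) ^ 2 / 4 ≤ (d - H.degree u) * (d - H.degree v) := by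
    calc (d : ℝ) ^ 2 / 4 = d / 2 * (d / 2) := by ring
      _ ≤ _ := mul_le_mul (by linarith) (by linarith) (by linarith) (by linarith)
  calc density V d / 4 = (d : ℝ) ^ 2 / 4 / (d * Fintype.card V) := by
        have := hS.card_pos
        rw [density]
        field_simp
    _ ≤ edgeRate d H u v := div_le_div_of_nonneg_right hdeg (by positivity)

lemma Sparse.abs_edgeCorrection_le (hS : Sparse V d K) (hH : H.edgeSet.ncard + 1 ≤ K)
    (hu : H.degree u ≤ 1) (hv : H.degree v ≤ 1) :
    |edgeCorrection d H u v| ≤ (K / 2 + 3) * density V d := by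
  have hd := hS.two_le_cast
  have hu' : (H.degree u : ℝ) ≤ 1 := by exact_mod_cast hu
  have hv' : (H.degree v : ℝ) ≤ 1 := by exact_mod_cast hv
  have hlost := abs_lostPairs_sub_le hS ((ncard_edgeSet_sup_edge_le H u v).trans hH)
    (by linarith : (H.degree u : ℝ) ≤ d) (by linarith : (H.degree v : ℝ) ≤ d)
  refine hS.abs_le_of_mul_le ?_
  rw [mul_comm, hS.edgeCorrection_mul]
  rw [abs_le] at hlost ⊢
  constructor <;> nlinarith

lemma exists_numReg_sup_edge_eq (hS : Sparse V d K) (hH : H.edgeSet.ncard + 5 ≤ K)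
    (hu : H.degree u ≤ 1) (hv : H.degree v ≤ 1) (h : ¬edge u v ≤ H) :
    ∃ η : ℝ, |η| ≤ 4 * (K + 10) ^ 2 * density V d ^ 2 ∧
      numReg d (H ⊔ edge u v) =
        edgeRate d H u v * (1 + edgeCorrection d H u v + η) * numReg d H := by
  have hbound := abs_numReg_sup_edge_sub_edgeCorrection_le hS hH h
  have hrate := hS.div_four_le_edgeRate hu hv
  have hq : 0 < density V d := div_pos (by linarith [hS.two_le_cast]) hS.card_pos
  rcases (numReg_nonneg (d := d) H).eq_or_lt' with hM | hM
  · have hA : numReg d (H ⊔ edge u v) = 0 :=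
      le_antisymm ((numReg_anti le_sup_left).trans_eq hM) (numReg_nonneg _)
    exact ⟨0, by simpa using by positivity, by rw [hA, hM, mul_zero]⟩
  have hrM : 0 < edgeRate d H u v * numReg d H := mul_pos (by linarith) hM
  refine ⟨(numReg d (H ⊔ edge u v) - edgeRate d H u v * (1 + edgeCorrection d H u v) *
    numReg d H) / (edgeRate d H u v * numReg d H), ?_, ?_⟩
  · rw [abs_div, abs_of_pos hrM, div_le_iff₀ hrM]
    refine hbound.trans ?_
    have := mul_le_mul_of_nonneg_left (mul_le_mul_of_nonneg_right hrate hM.le)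
      (by positivity : 0 ≤ 4 * ((K : ℝ) + 10) ^ 2 * density V d ^ 2)
    linarith
  · linear_combination -(div_mul_cancel₀ (numReg d (H ⊔ edge u v) -
      edgeRate d H u v * (1 + edgeCorrection d H u v) * numReg d H) hrM.ne')

lemma edgeCorrection_eq (d : ℕ) (h : ¬edge u v ≤ H) :
    edgeCorrection d H u v = (2 * H.edgeSet.ncard + d + (d - 1) * (H.degree u + H.degree v) -
      H.degree u * H.degree v - nbrDegSum H u - nbrDegSum H v) / (d * Fintype.card V) := by
  obtain ⟨huv, hadj⟩ := not_edge_le_iff.1 h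
  have hnbr (w : V) (hw : w = u ∨ w = v) : nbrDegSum H w =
      ∑ x, adjInd H w x * (H.degree x + ((if x = u then 1 else 0) + if x = v then 1 else 0)) := by
    simp only [mul_add, sum_add_distrib, nbrDegSum]
    rcases hw with rfl | rfl
    · simp [adjInd, hadj]
    · simp [adjInd, hadj, H.adj_comm w u]
  rw [edgeCorrection, lostPairs, nbrDegSum, nbrDegSum]
  simp only [sum_adjInd_sup_edge_mul huv hadj, degree_sup_edge huv hadj, ← hnbr u (.inl rfl),
    ← hnbr v (.inr rfl), ncard_edgeSet_sup_edge huv hadj, if_pos, if_neg huv, if_neg huv.symm]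
  push_cast
  ring

end Switchings

lemma norm_prod_one_add_sub_one_sub_sum_le {ι R : Type*} [NormedCommRing R] [NormOneClass R]
    (s : Finset ι) (f : ι → R) :
    ‖∏ i ∈ s, (1 + f i) - 1 - ∑ i ∈ s, f i‖ ≤
      (∑ i ∈ s, ‖f i‖) * (Real.exp (∑ i ∈ s, ‖f i‖) - 1) := by
  induction s using Finset.induction_on with
  | empty => simp
  | insert a s ha ih =>
    rw [prod_insert ha, sum_insert ha, sum_insert ha]
    have hsplit : (1 + f a) * ∏ i ∈ s, (1 + f i) - 1 - (f a + ∑ i ∈ s, f i) =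
        f a * (∏ i ∈ s, (1 + f i) - 1) + (∏ i ∈ s, (1 + f i) - 1 - ∑ i ∈ s, f i) := by ring
    calc _ ≤ ‖f a‖ * (Real.exp (∑ i ∈ s, ‖f i‖) - 1) +
          (∑ i ∈ s, ‖f i‖) * (Real.exp (∑ i ∈ s, ‖f i‖) - 1) := by
          rw [hsplit]
          refine (norm_add_le _ _).trans (add_le_add ((norm_mul_le _ _).trans ?_) ih)
          gcongr
          exact s.norm_prod_one_add_sub_one_le f
      _ = (‖f a‖ + ∑ i ∈ s, ‖f i‖) * (Real.exp (∑ i ∈ s, ‖f i‖) - 1) := by ring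
      _ ≤ _ := by
          gcongr
          exact le_add_of_nonneg_left (norm_nonneg _)

lemma norm_prod_one_add_add_sub_one_sub_sum_le {ι R : Type*} [NormedCommRing R] [NormOneClass R]
    {s : Finset ι} {f g : ι → R} {a b q : ℝ} (ha : 0 ≤ a) (hb : 0 ≤ b) (hq0 : 0 ≤ q) (hq1 : q ≤ 1)
    (hf : ∀ i ∈ s, ‖f i‖ ≤ a * q) (hg : ∀ i ∈ s, ‖g i‖ ≤ b * q ^ 2) :
    ‖∏ i ∈ s, (1 + (f i + g i)) - 1 - ∑ i ∈ s, f i‖ ≤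
      ((#s * (a + b)) ^ 2 * Real.exp (#s * (a + b)) + #s * b) * q ^ 2 := by
  have hprod := norm_prod_one_add_sub_one_sub_sum_le s fun i ↦ f i + g i
  set x := ∑ i ∈ s, ‖f i + g i‖
  have hx0 : 0 ≤ x := sum_nonneg fun i _ ↦ norm_nonneg _
  have hx : x ≤ #s * (a + b) * q := by
    rw [mul_assoc, ← nsmul_eq_mul]
    refine sum_le_card_nsmul _ _ _ fun i hi ↦ (norm_add_le_of_le (hf i hi) (hg i hi)).trans ?_
    rw [add_mul]
    gcongr
    exact pow_le_of_le_one hq0 hq1 two_ne_zero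
  have hexp : Real.exp x - 1 ≤ x * Real.exp x := by
    have h := mul_le_mul_of_nonneg_right (Real.one_sub_le_exp_neg x) (Real.exp_nonneg x)
    rw [← Real.exp_add, neg_add_cancel, Real.exp_zero] at h
    linarith
  have hsecond : x * (Real.exp x - 1) ≤
      (#s * (a + b) * q) * ((#s * (a + b) * q) * Real.exp (#s * (a + b))) := by
    have hx1 : x ≤ #s * (a + b) := hx.trans (mul_le_of_le_one_right (by positivity) hq1)
    exact mul_le_mul hx (hexp.trans (by gcongr)) (by simpa using hx0) (by positivity)
  have hsum : ‖∑ i ∈ s, g i‖ ≤ #s * b * q ^ 2 := by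
    rw [mul_assoc, ← nsmul_eq_mul]
    exact (norm_sum_le _ _).trans (sum_le_card_nsmul _ _ _ hg)
  rw [sum_add_distrib] at hprod
  calc _ = ‖∏ i ∈ s, (1 + (f i + g i)) - 1 - (∑ i ∈ s, f i + ∑ i ∈ s, g i) + ∑ i ∈ s, g i‖ := by
        rw [sub_add_eq_sub_sub, sub_add_cancel]
    _ ≤ _ := (norm_add_le_of_le (hprod.trans hsecond) hsum).trans_eq (by ring)

/-- The graph formed by the first `i` edges of the walk `g 0, g 1, …`. -/
def walkGraph (g : ℕ → V) (i : ℕ) : SimpleGraph V := (range i).sup fun j ↦ edge (g j) (g (j + 1))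

lemma walkGraph_zero (g : ℕ → V) : walkGraph g 0 = ⊥ := by simp [walkGraph]

lemma walkGraph_succ (g : ℕ → V) (i : ℕ) :
    walkGraph g (i + 1) = walkGraph g i ⊔ edge (g i) (g (i + 1)) := by
  rw [walkGraph, range_add_one, sup_insert, sup_comm, walkGraph]

variable {g : ℕ → V} {ℓ i k : ℕ}

lemma walkGraph_adj_iff (hg : Set.InjOn g (Set.Iio ℓ)) {j : ℕ} (hi : i < ℓ) (hj : j < ℓ)
    (hk : k < ℓ) : (walkGraph g i).Adj (g j) (g k) ↔ k = j + 1 ∧ k ≤ i ∨ j = k + 1 ∧ j ≤ i := by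
  induction i with
  | zero =>
    simp only [walkGraph_zero, bot_adj, false_iff]
    omega
  | succ i ih =>
    have hi' : i < ℓ := by omega
    simp only [walkGraph_succ, sup_adj, ih hi', edge_adj, Ne, hg.eq_iff hj hk, hg.eq_iff hj hi,
      hg.eq_iff hj hi', hg.eq_iff hk hi, hg.eq_iff hk hi']
    omega

lemma not_edge_le_walkGraph (hg : Set.InjOn g (Set.Iio ℓ)) (hi : i + 1 < ℓ) :
    ¬edge (g i) (g (i + 1)) ≤ walkGraph g i := by
  have hi' : i < ℓ := by omega
  rw [not_edge_le_iff, Ne, hg.eq_iff hi' hi, walkGraph_adj_iff hg hi' hi' hi]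
  omega

lemma not_edge_le_walkGraph_last {m : ℕ} (hg : Set.InjOn g (Set.Iio (m + 3))) :
    ¬edge (g (m + 2)) (g 0) ≤ walkGraph g (m + 2) := by
  have hm : m + 2 < m + 3 := by omega
  rw [not_edge_le_iff, Ne, hg.eq_iff hm (by simp), walkGraph_adj_iff hg hm hm (by omega)]
  omega

lemma ncard_edgeSet_walkGraph [Finite V] (hg : Set.InjOn g (Set.Iio ℓ)) (hi : i < ℓ) :
    (walkGraph g i).edgeSet.ncard = i := by
  induction i with
  | zero => simp [walkGraph_zero]
  | succ i ih =>
    obtain ⟨hne, hadj⟩ := not_edge_le_iff.1 (not_edge_le_walkGraph hg hi)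
    rw [walkGraph_succ, ncard_edgeSet_sup_edge hne hadj, ih (by omega)]

variable [Fintype V]

lemma sum_adjInd_walkGraph_mul (hg : Set.InjOn g (Set.Iio ℓ)) (hi : i < ℓ) (hk : k < ℓ)
    (f : V → ℝ) :
    ∑ y, adjInd (walkGraph g i) (g k) y * f y =
      (if k < i then f (g (k + 1)) else 0) + if k ∈ Set.Ioc 0 i then f (g (k - 1)) else 0 := by
  induction i with
  | zero => simp [walkGraph_zero, adjInd]
  | succ i ih =>
    have hi' : i < ℓ := by omega
    obtain ⟨hne, hadj⟩ := not_edge_le_iff.1 (not_edge_le_walkGraph hg hi)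
    rw [walkGraph_succ, sum_adjInd_sup_edge_mul hne hadj, ih hi']
    simp only [hg.eq_iff hk hi', hg.eq_iff hk hi, Set.mem_Ioc]
    rw [add_add_add_comm]
    congr 1
    · rcases lt_trichotomy k i with h | rfl | h
      · simp [h, h.ne, h.trans (Nat.lt_succ_self i)]
      · simp
      · simp [h.ne', h.not_gt, show ¬k < i + 1 by omega]
    · rcases eq_or_ne k (i + 1) with rfl | h
      · simp
      · simp [h, show k ≤ i + 1 ↔ k ≤ i by omega]

lemma degree_walkGraph (hg : Set.InjOn g (Set.Iio ℓ)) (hi : i < ℓ) (hk : k < ℓ) :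
    ((walkGraph g i).degree (g k) : ℝ) =
      (if k < i then 1 else 0) + if k ∈ Set.Ioc 0 i then 1 else 0 := by
  simpa [sum_adjInd] using sum_adjInd_walkGraph_mul hg hi hk 1

lemma nbrDegSum_walkGraph (hg : Set.InjOn g (Set.Iio ℓ)) (hi : i < ℓ) (hk : k < ℓ) :
    nbrDegSum (walkGraph g i) (g k) =
      (if k < i then ((walkGraph g i).degree (g (k + 1)) : ℝ) else 0) +
        if k ∈ Set.Ioc 0 i then ((walkGraph g i).degree (g (k - 1)) : ℝ) else 0 :=
  sum_adjInd_walkGraph_mul hg hi hk _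

variable {d m : ℕ}

lemma edgeRate_walkGraph_zero (hg : Set.InjOn g (Set.Iio ℓ)) (hℓ : 1 < ℓ) (hd : d ≠ 0) :
    edgeRate d (walkGraph g 0) (g 0) (g 1) = d / Fintype.card V := by
  rw [edgeRate, degree_walkGraph hg (by omega) (by omega), degree_walkGraph hg (by omega) hℓ]
  simp [mul_div_mul_left, hd]

lemma edgeRate_walkGraph_succ (hg : Set.InjOn g (Set.Iio ℓ)) (hi : i + 2 < ℓ) (hd : d ≠ 0) :
    edgeRate d (walkGraph g (i + 1)) (g (i + 1)) (g (i + 2)) = (d - 1) / Fintype.card V := by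
  have hi' : i + 1 < ℓ := by omega
  rw [edgeRate, degree_walkGraph hg hi' hi', degree_walkGraph hg hi' hi]
  simp [mul_comm _ (d : ℝ), mul_div_mul_left, hd]

lemma edgeRate_walkGraph_last (hg : Set.InjOn g (Set.Iio (m + 3))) :
    edgeRate d (walkGraph g (m + 2)) (g (m + 2)) (g 0) = (d - 1) ^ 2 / (d * Fintype.card V) := by
  rw [edgeRate, degree_walkGraph hg (by omega) (by omega),
    degree_walkGraph hg (by omega) (by omega)]
  simp [sq]

lemma edgeCorrection_walkGraph_zero (hg : Set.InjOn g (Set.Iio ℓ)) (hℓ : 1 < ℓ) :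
    edgeCorrection d (walkGraph g 0) (g 0) (g 1) = d / (d * Fintype.card V) := by
  have h0 : 0 < ℓ := by omega
  rw [edgeCorrection_eq d (not_edge_le_walkGraph hg hℓ), ncard_edgeSet_walkGraph hg h0,
    nbrDegSum_walkGraph hg h0 h0, nbrDegSum_walkGraph hg h0 hℓ, degree_walkGraph hg h0 h0,
    degree_walkGraph hg h0 hℓ]
  simp

lemma edgeCorrection_walkGraph_one (hg : Set.InjOn g (Set.Iio ℓ)) (hℓ : 2 < ℓ) :
    edgeCorrection d (walkGraph g 1) (g 1) (g 2) = 2 * d / (d * Fintype.card V) := by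
  have h0 : 0 < ℓ := by omega
  have h1 : 1 < ℓ := by omega
  rw [edgeCorrection_eq d (not_edge_le_walkGraph hg hℓ), ncard_edgeSet_walkGraph hg h1,
    nbrDegSum_walkGraph hg h1 h1, nbrDegSum_walkGraph hg h1 hℓ, degree_walkGraph hg h1 h1,
    degree_walkGraph hg h1 hℓ]
  norm_num [degree_walkGraph hg h1 h0]
  ring

lemma edgeCorrection_walkGraph_add_two (hg : Set.InjOn g (Set.Iio ℓ)) (hi : i + 3 < ℓ) :
    edgeCorrection d (walkGraph g (i + 2)) (g (i + 2)) (g (i + 3)) =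
      (2 * d + 2 * i + 1) / (d * Fintype.card V) := by
  have hi1 : i + 2 - 1 < ℓ := by omega
  have hi2 : i + 2 < ℓ := by omega
  rw [edgeCorrection_eq d (not_edge_le_walkGraph hg hi), ncard_edgeSet_walkGraph hg hi2,
    nbrDegSum_walkGraph hg hi2 hi2, nbrDegSum_walkGraph hg hi2 hi, degree_walkGraph hg hi2 hi2,
    degree_walkGraph hg hi2 hi]
  norm_num [degree_walkGraph hg hi2 hi1]
  ring

lemma edgeCorrection_walkGraph_last (hg : Set.InjOn g (Set.Iio (m + 3))) :
    edgeCorrection d (walkGraph g (m + 2)) (g (m + 2)) (g 0) =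
      (3 * d - 3 + 2 * m) / (d * Fintype.card V) := by
  have h0 : 0 < m + 3 := by omega
  have h1 : 1 < m + 3 := by omega
  have hm1 : m + 2 - 1 < m + 3 := by omega
  have hm2 : m + 2 < m + 3 := by omega
  rw [edgeCorrection_eq d (not_edge_le_walkGraph_last hg), ncard_edgeSet_walkGraph hg hm2,
    nbrDegSum_walkGraph hg hm2 hm2, nbrDegSum_walkGraph hg hm2 h0, degree_walkGraph hg hm2 hm2,
    degree_walkGraph hg hm2 h0]
  norm_num [degree_walkGraph hg hm2 hm1, degree_walkGraph hg hm2 h1]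
  ring

lemma prod_edgeRate_walkGraph (hg : Set.InjOn g (Set.Iio (m + 3))) (hclosed : g (m + 3) = g 0)
    (hd : d ≠ 0) :
    ∏ i ∈ range (m + 3), edgeRate d (walkGraph g i) (g i) (g (i + 1)) =
      ((d - 1) / Fintype.card V : ℝ) ^ (m + 3) := by
  rw [prod_range_succ, prod_range_succ', hclosed, edgeRate_walkGraph_last hg, zero_add,
    edgeRate_walkGraph_zero hg (by omega) hd]
  have h := prod_congr rfl fun i (hi : i ∈ range (m + 1)) ↦
    edgeRate_walkGraph_succ hg (by simpa using hi) hd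
  rw [h, prod_const, card_range, pow_succ _ (m + 2), pow_succ _ (m + 1), sq]
  field_simp

lemma sum_edgeCorrection_walkGraph (hg : Set.InjOn g (Set.Iio (m + 3)))
    (hclosed : g (m + 3) = g 0) :
    ∑ i ∈ range (m + 3), edgeCorrection d (walkGraph g i) (g i) (g (i + 1)) =
      (d + 2 * d + ∑ i ∈ range m, (2 * d + 2 * i + 1 : ℝ) + (3 * d - 3 + 2 * m)) /
        (d * Fintype.card V) := by
  have h := sum_congr rfl fun i (hi : i ∈ range m) ↦
    edgeCorrection_walkGraph_add_two (d := d) hg (by simpa using hi)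
  rw [sum_range_succ, sum_range_succ', sum_range_succ', hclosed, edgeCorrection_walkGraph_last hg,
    zero_add, edgeCorrection_walkGraph_zero hg (by omega),
    edgeCorrection_walkGraph_one hg (by omega), h, ← sum_div]
  ring

lemma degree_walkGraph_le_one (hg : Set.InjOn g (Set.Iio ℓ)) (hi : i < ℓ) (hk : k < ℓ)
    (h : k = 0 ∨ i ≤ k) : (walkGraph g i).degree (g k) ≤ 1 := by
  have hdeg := degree_walkGraph hg hi hk
  rcases h with rfl | h
  · split_ifs at hdeg <;> simp_all
  · rw [if_neg h.not_gt, zero_add] at hdeg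
    split_ifs at hdeg <;> simp_all

lemma degree_walkGraph_le_one_and_not_edge_le (hg : Set.InjOn g (Set.Iio (m + 3)))
    (hclosed : g (m + 3) = g 0) (hi : i < m + 3) :
    (walkGraph g i).degree (g (i + 1)) ≤ 1 ∧ ¬edge (g i) (g (i + 1)) ≤ walkGraph g i := by
  obtain hi' | rfl : i + 1 < m + 3 ∨ i = m + 2 := by omega
  · exact ⟨degree_walkGraph_le_one hg hi hi' (.inr i.le_succ), not_edge_le_walkGraph hg hi'⟩
  · rw [hclosed]
    exact ⟨degree_walkGraph_le_one hg hi (by omega) (.inl rfl), not_edge_le_walkGraph_last hg⟩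

variable {K : ℕ}

lemma abs_edgeCorrection_walkGraph_le (hS : Sparse V d K) (hK : m + 3 ≤ K)
    (hg : Set.InjOn g (Set.Iio (m + 3))) (hclosed : g (m + 3) = g 0) (hi : i < m + 3) :
    |edgeCorrection d (walkGraph g i) (g i) (g (i + 1))| ≤ (K / 2 + 3) * density V d :=
  hS.abs_edgeCorrection_le (by rw [ncard_edgeSet_walkGraph hg hi]; omega)
    (degree_walkGraph_le_one hg hi hi (.inr le_rfl))
    (degree_walkGraph_le_one_and_not_edge_le hg hclosed hi).1

lemma exists_numReg_walkGraph_succ_eq (hS : Sparse V d K) (hK : m + 7 ≤ K)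
    (hg : Set.InjOn g (Set.Iio (m + 3))) (hclosed : g (m + 3) = g 0) (hi : i < m + 3) :
    ∃ η : ℝ, |η| ≤ 4 * (K + 10) ^ 2 * density V d ^ 2 ∧
      numReg d (walkGraph g (i + 1)) = edgeRate d (walkGraph g i) (g i) (g (i + 1)) *
        (1 + edgeCorrection d (walkGraph g i) (g i) (g (i + 1)) + η) *
          numReg d (walkGraph g i) := by
  obtain ⟨hdeg, hedge⟩ := degree_walkGraph_le_one_and_not_edge_le hg hclosed hi
  rw [walkGraph_succ]
  exact exists_numReg_sup_edge_eq hS (by rw [ncard_edgeSet_walkGraph hg hi]; omega)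
    (degree_walkGraph_le_one hg hi hi (.inr le_rfl)) hdeg hedge

lemma exists_numReg_walkGraph_eq (m : ℕ) : ∃ C : ℝ, 0 < C ∧
    ∀ {V : Type*} [Fintype V] {d : ℕ} {g : ℕ → V}, Sparse V d (m + 7) →
      Set.InjOn g (Set.Iio (m + 3)) → g (m + 3) = g 0 → ∃ θ : ℝ, |θ| ≤ C * density V d ^ 2 ∧
        numReg d (walkGraph g (m + 3)) = ((d - 1) / Fintype.card V : ℝ) ^ (m + 3) *
          (1 + (d + 2 * d + ∑ i ∈ range m, (2 * d + 2 * i + 1 : ℝ) + (3 * d - 3 + 2 * m)) /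
            (d * Fintype.card V) + θ) * numReg d (⊥ : SimpleGraph V) := by
  set a : ℝ := ((m + 7 : ℕ) : ℝ) / 2 + 3
  set b : ℝ := 4 * (((m + 7 : ℕ) : ℝ) + 10) ^ 2
  refine ⟨(#(range (m + 3)) * (a + b)) ^ 2 * Real.exp (#(range (m + 3)) * (a + b)) +
    #(range (m + 3)) * b, by positivity, fun {V _ d g} hS hg hclosed ↦ ?_⟩
  have hd : d ≠ 0 := by have := hS.two_le; omega
  have hq : density V d ≤ 1 := by
    have := hS.density_mul_le
    nlinarith [density_nonneg (V := V) (d := d)]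
  choose! η hη hstep using fun i (hi : i ∈ range (m + 3)) ↦
    exists_numReg_walkGraph_succ_eq hS le_rfl hg hclosed (mem_range.1 hi)
  set κ := fun i ↦ edgeCorrection d (walkGraph g i) (g i) (g (i + 1))
  have hκ (i : ℕ) (hi : i ∈ range (m + 3)) : ‖κ i‖ ≤ a * density V d :=
    abs_edgeCorrection_walkGraph_le hS (by omega) hg hclosed (mem_range.1 hi)
  have htelescope (j : ℕ) (hj : j ≤ m + 3) : numReg d (walkGraph g j) =
      (∏ i ∈ range j, edgeRate d (walkGraph g i) (g i) (g (i + 1)) * (1 + (κ i + η i))) *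
        numReg d (⊥ : SimpleGraph V) := by
    induction j with
    | zero => simp [walkGraph_zero]
    | succ j ih => rw [hstep j (mem_range.2 hj), ih (by omega), prod_range_succ]; ring
  refine ⟨∏ i ∈ range (m + 3), (1 + (κ i + η i)) - 1 - ∑ i ∈ range (m + 3), κ i,
    norm_prod_one_add_add_sub_one_sub_sum_le (by positivity) (by positivity) density_nonneg hq
      hκ hη, ?_⟩
  rw [htelescope _ le_rfl, prod_mul_distrib, prod_edgeRate_walkGraph hg hclosed hd,
    sum_edgeCorrection_walkGraph hg hclosed]
  ring

lemma isRegularOfDegree_circulantGraph {A : Type*} [AddGroup A] [Fintype A] {s : Finset A}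
    (h0 : 0 ∉ s) (hneg : ∀ a ∈ s, -a ∈ s) :
    (circulantGraph (s : Set A)).IsRegularOfDegree #s := fun x ↦ by
  rw [← card_neighborFinset_eq_degree]
  refine card_equiv (Equiv.subRight x) fun y ↦ ?_
  simp only [mem_neighborFinset, circulantGraph_adj, Equiv.subRight_apply, mem_coe]
  refine ⟨fun h ↦ ?_, fun h ↦ ⟨?_, .inr h⟩⟩
  · exact h.2.elim (fun h ↦ neg_sub x y ▸ hneg _ h) id
  · rintro rfl
    exact h0 (sub_self x ▸ h)

lemma exists_finset_card_eq_and_neg_mem {n d : ℕ} [NeZero n] (hdn : d < n) (he : Even (d * n)) :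
    ∃ s : Finset (Fin n), #s = d ∧ 0 ∉ s ∧ ∀ z ∈ s, -z ∈ s := by
  obtain ⟨t, hcard, ht⟩ : ∃ t : Finset ℕ, #t = d ∧ ∀ i ∈ t, 0 < i ∧ i < n ∧ n - i ∈ t := by
    obtain ⟨k, rfl⟩ | ⟨k, rfl⟩ := Nat.even_or_odd d
    · refine ⟨Icc 1 k ∪ Ico (n - k) n, ?_, fun i hi ↦ by simp at hi ⊢; omega⟩
      rw [card_union_of_disjoint (disjoint_left.2 fun i ↦ by simp; omega)]
      simp
      omega
    · obtain ⟨m, rfl⟩ := (Nat.even_mul.1 he).resolve_left (by simp)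
      exact ⟨Icc (m - k) (m + k), by simp; omega, fun i hi ↦ by simp at hi ⊢; omega⟩
  refine ⟨t.attachFin fun i hi ↦ (ht i hi).2.1, by rwa [card_attachFin], fun h ↦ ?_, fun z hz ↦ ?_⟩
  · exact (ht _ ((mem_attachFin _).1 h)).1.ne rfl
  · rw [mem_attachFin] at hz ⊢
    obtain ⟨hpos, -, hsub⟩ := ht _ hz
    rwa [Fin.val_neg, if_neg]
    rintro rfl
    exact hpos.ne rfl

lemma numReg_bot_pos {n d : ℕ} (hdn : d < n) (he : Even (d * n)) :
    0 < numReg d (⊥ : SimpleGraph (Fin n)) := by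
  have : NeZero n := ⟨by omega⟩
  obtain ⟨s, rfl, h0, hneg⟩ := exists_finset_card_eq_and_neg_mem hdn he
  exact Nat.cast_pos.2 <| card_pos.2
    ⟨_, mem_regGraphs.2 ⟨isRegularOfDegree_circulantGraph h0 hneg, bot_le⟩⟩

variable {n d ℓ : ℕ}

lemma deg_eq_degree (G : SimpleGraph (Fin n)) (v : Fin n) : deg G v = G.degree v := by
  rw [deg, Set.ncard_eq_toFinset_card', Set.toFinset_card, card_neighborSet_eq_degree]

lemma cycGraph_eq_walkGraph [NeZero ℓ] (f : ZMod ℓ ↪ Fin n) :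
    cycGraph f = walkGraph (fun j ↦ f j) ℓ := by
  ext x y
  simp only [cycGraph, walkGraph, Finset.sup_eq_iSup, iSup_adj, edge, fromEdgeSet_adj, mem_range,
    Set.mem_singleton_iff, exists_prop, ← and_assoc, exists_and_right, Set.mem_ofPred_eq,
    Nat.cast_succ]
  refine and_congr_left fun _ ↦ ⟨fun ⟨i, hi⟩ ↦ ⟨i.val, i.val_lt, ?_⟩, fun ⟨j, _, hj⟩ ↦ ⟨j, hj⟩⟩
  simpa using hi

lemma injOn_natCast_Iio (ℓ : ℕ) : Set.InjOn (Nat.cast : ℕ → ZMod ℓ) (Set.Iio ℓ) :=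
  fun j hj k hk h ↦ by
    rwa [ZMod.natCast_eq_natCast_iff', Nat.mod_eq_of_lt hj, Nat.mod_eq_of_lt hk] at h

lemma prob_le_eq (H : SimpleGraph (Fin n)) :
    prob (fun G : SimpleGraph (Fin n) => ∀ i, deg G i = d) (fun G => H ≤ G) =
      numReg d H / numReg d (⊥ : SimpleGraph (Fin n)) := by
  rw [prob, Nat.subtype_card (regGraphs d H), Nat.subtype_card (regGraphs d ⊥)]
  · rfl
  all_goals
    intro G
    simp only [mem_regGraphs, bot_le, and_true, IsRegularOfDegree, deg_eq_degree]

lemma sum_Icc_three_eq_neg_sum_range (m : ℕ) (d : ℝ) :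
    ∑ i ∈ Icc 3 (m + 2), (-2 * d - 2 * ((i : ℝ) - 3) - 1) =
      -∑ i ∈ range m, (2 * d + 2 * i + 1) := by
  rw [← Ico_add_one_right_eq_Icc, sum_Ico_eq_sum_range, ← sum_neg_distrib]
  refine sum_congr (by simp) fun i _ ↦ ?_
  push_cast
  ring

end RegularGraphs

/-- The probability that a fixed `ℓ`-cycle is contained in the random `d`-regular graph. -/
theorem stmt9 (ℓ : ℕ) (hℓ : 3 ≤ ℓ) :
    ∃ C δ : ℝ, 0 < C ∧ 0 < δ ∧
      ∀ n d : ℕ, 0 < n → 2 ≤ d → (d : ℝ) ≤ δ * n → Even (d * n) →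
      ∀ f : ZMod ℓ ↪ Fin n,
      ∀ φsum : ℝ,
      φsum = (-(d : ℝ)) + (-2 * (d : ℝ))
          + (∑ i ∈ Finset.Icc 3 (ℓ - 1), (-2 * (d : ℝ) - 2 * ((i : ℝ) - 3) - 1))
          + (-3 * (d : ℝ) + 3 - 2 * ((ℓ : ℝ) - 3)) →
      ∃ θ : ℝ, |θ| ≤ C * (d : ℝ) ^ 2 / (n : ℝ) ^ 2 ∧
        prob (fun G : SimpleGraph (Fin n) => ∀ i, deg G i = d)
            (fun G => cycGraph f ≤ G)
          = (((d : ℝ) - 1) / n) ^ ℓ * (1 - φsum / ((d : ℝ) * n) + θ) := by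
  obtain ⟨m, rfl⟩ := Nat.exists_eq_add_of_le' hℓ
  obtain ⟨C, hC, hcount⟩ := exists_numReg_walkGraph_eq m
  refine ⟨C, 1 / (m + 12), hC, by positivity, fun n d _ hd hδ he f φsum hφ ↦ ?_⟩
  have hdn : (m + 7 + 5) * d ≤ n := by
    rw [one_div_mul_eq_div, le_div_iff₀' (by positivity)] at hδ
    exact_mod_cast hδ
  have hS : Sparse (Fin n) d (m + 7) := ⟨hd, by simpa using hdn⟩
  obtain ⟨θ, hθ, hnum⟩ := hcount hS (f.injective.comp_injOn (injOn_natCast_Iio _)) (by simp)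
  refine ⟨θ, by simpa [density, div_pow, mul_div_assoc] using hθ, ?_⟩
  have hbot := numReg_bot_pos (by nlinarith) he
  rw [prob_le_eq, cycGraph_eq_walkGraph, div_eq_iff hbot.ne', hφ, Nat.add_sub_assoc (by norm_num),
    sum_Icc_three_eq_neg_sum_range]
  refine hnum.trans ?_
  rw [Fintype.card_fin]
  push_cast
  ring
end
end

section
/- Let d = d(n) be a sequence of positive integers with d(n)·n even, d(n) → ∞, and d(n)⁵/n² → 0 as n → ∞. Let Z_{C₃} be the number of triangles in 𝒢(n,d), μ_{C₃} = E Z_{C₃}, and σ²_{C₃} = Var(Z_{C₃}). Then σ²_{C₃}/μ_{C₃} → 1 and μ_{C₃}/((d−1)³/6) → 1 as n → ∞. -/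
open Filter

noncomputable section

/-- The number of triangles of `G` (triples of pairwise adjacent vertices). -/
def triCount {n : ℕ} (G : SimpleGraph (Fin n)) : ℕ := (G.cliqueSet 3).ncard

/-- The expectation of `X` for a graph chosen uniformly at random among all simple graphs
on `[n]` satisfying `base`. -/
def expect {n : ℕ} (base : SimpleGraph (Fin n) → Prop) (X : SimpleGraph (Fin n) → ℝ) : ℝ :=
  (∑ᶠ G ∈ {G : SimpleGraph (Fin n) | base G}, X G) /
    (Nat.card {G : SimpleGraph (Fin n) // base G} : ℝ)

/-!
A switching replaces the edges `ab`, `xy` of a `d`-regular graph `G` by `ax`, `by`. Its inverse is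
a switching too, so the uniform measure on `d`-regular graphs gives the sum of `F(G', …)` over the
switchings `G → G'` of `G` the same mean as the sum of `F(G, …)`.

Let `T` be the number of ordered triangles. About `nd·T` of them are destroyed by the switchings
of `G`, and about `nd·(d - 1)³` are created. So the normalised difference `D` of the two numbers
has mean zero and `T = (d - 1)³ + D + R` with a small remainder `R`, whence `E T ≈ (d - 1)³`.
Moreover `E[T·D]` is the mean of the sum over the triangles destroyed by `G → G'` of
`T(G) - T(G')`, divided by `nd`. A switching that destroys one triangle rarely destroys or creates
another, so `T(G) - T(G')` is mostly `6` and `E[T·D] ≈ 6 E T`. Finally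
`Var T = E[(T - E T)(D + R)] ≈ E[T·D]`. The remainders are controlled by second moments of the
numbers of `3`-, `4`- and `5`-cycles, which follow from `P(S ⊆ G) ≤ (2d/n)^|S|` for a set of edges
`S`, itself a consequence of switching the edges of `S` away one at a time.
-/

open scoped Classical BigOperators
open Finset hiding expect

namespace RegularTriangles

/-- The Iverson bracket of a proposition: the real number `1` if it holds and `0` otherwise. It
turns counts of configurations into real sums, which are compared term by term. -/
def iverson (p : Prop) : ℝ := if p then 1 else 0

local notation "𝟙[" p "]" => iverson p

section Iverson

variable {p q : Prop}

lemma iverson_of_true (h : p) : 𝟙[p] = 1 := if_pos h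

lemma iverson_of_false (h : ¬p) : 𝟙[p] = 0 := if_neg h

lemma iverson_nonneg (p : Prop) : 0 ≤ 𝟙[p] := by
  unfold iverson; split_ifs <;> norm_num

lemma iverson_le_one (p : Prop) : 𝟙[p] ≤ 1 := by
  unfold iverson; split_ifs <;> norm_num

lemma iverson_mono (h : p → q) : 𝟙[p] ≤ 𝟙[q] := by
  by_cases hp : p
  · rw [iverson_of_true hp, iverson_of_true (h hp)]
  · rw [iverson_of_false hp]
    exact iverson_nonneg q

lemma iverson_and (p q : Prop) : 𝟙[p ∧ q] = 𝟙[p] * 𝟙[q] := by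
  by_cases hp : p <;> simp [iverson, hp]

lemma iverson_or_le (p q : Prop) : 𝟙[p ∨ q] ≤ 𝟙[p] + 𝟙[q] := by
  by_cases hp : p <;> by_cases hq : q <;> simp [iverson, hp, hq]

lemma sum_iverson {α : Type*} (s : Finset α) (p : α → Prop) [DecidablePred p] :
    ∑ x ∈ s, 𝟙[p x] = #{x ∈ s | p x} := by
  rw [← sum_boole]
  exact sum_congr rfl fun x _ => by unfold iverson; congr

end Iverson

variable {V : Type*} [Fintype V] {G : SimpleGraph V} {d : ℕ}

lemma sum_iverson_eq (a : V) : ∑ v, 𝟙[v = a] = 1 := by simp [iverson]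

lemma sum_iverson_mk_eq {a b : V} (hab : a ≠ b) (w : V) :
    ∑ v, 𝟙[s(w, v) = s(a, b)] = 𝟙[w = a] + 𝟙[w = b] := by
  have split (v : V) : 𝟙[s(w, v) = s(a, b)] = 𝟙[w = a] * 𝟙[v = b] + 𝟙[w = b] * 𝟙[v = a] := by
    rw [← iverson_and, ← iverson_and]
    unfold iverson
    grind
  simp only [split, sum_add_distrib, ← mul_sum, sum_iverson_eq, mul_one]

lemma sum_sum_iverson_mk_mem_le (S : Finset (Sym2 V)) :
    ∑ x, ∑ y, 𝟙[s(x, y) ∈ S] ≤ 2 * #S := by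
  have fiber (e : Sym2 V) : #{p : V × V | s(p.1, p.2) = e} ≤ 2 := by
    induction e using Sym2.ind with | _ a b
    refine (card_le_card fun p hp => ?_).trans (card_le_two (a := (a, b)) (b := (b, a)))
    simpa [Sym2.eq_iff, Prod.ext_iff] using hp
  rw [← Fintype.sum_prod_type' fun x y => 𝟙[s(x, y) ∈ S], sum_iverson]
  have h := card_le_mul_card_image_of_maps_to (f := fun p : V × V => s(p.1, p.2))
    (s := {p : V × V | s(p.1, p.2) ∈ S}) (t := S) (fun p hp => by simpa using hp) 2
    fun e _ => (card_le_card (filter_subset_filter _ (subset_univ _))).trans (fiber e)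
  exact_mod_cast h

/-! ### Regular graphs -/

/-- The set of `d`-regular graphs with vertex set `V`; the random regular graph is uniform on it,
so its expectations are the averages `𝔼 G ∈ regularGraphs V d, X G`. -/
def regularGraphs (V : Type*) [Fintype V] (d : ℕ) : Finset (SimpleGraph V) :=
  {G | G.IsRegularOfDegree d}

lemma mem_regularGraphs : G ∈ regularGraphs V d ↔ G.IsRegularOfDegree d := by
  simp [regularGraphs]

lemma sum_iverson_adj (G : SimpleGraph V) (v : V) : ∑ w, 𝟙[G.Adj v w] = G.degree v := by
  rw [sum_iverson, ← SimpleGraph.card_neighborFinset_eq_degree,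
    SimpleGraph.neighborFinset_eq_filter]

lemma sum_iverson_adj_of_mem (hG : G ∈ regularGraphs V d) (v : V) :
    ∑ w, 𝟙[G.Adj v w] = d := by
  rw [sum_iverson_adj, mem_regularGraphs.1 hG v]

/-! ### Switchings -/

section Switch

variable {V : Type*} {G : SimpleGraph V} {a b x y : V}

/-- The oriented edges `(a, b)`, `(x, y)` of `G` can be replaced by the non-edges `(a, x)`,
`(b, y)`. -/
def IsSwitchable (G : SimpleGraph V) (a b x y : V) : Prop :=
  G.Adj a b ∧ G.Adj x y ∧ a ≠ x ∧ b ≠ y ∧ ¬G.Adj a x ∧ ¬G.Adj b y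

/-- The switching of `G`: the edges `ab`, `xy` are removed and `ax`, `by` are added. -/
def switch (G : SimpleGraph V) (a b x y : V) : SimpleGraph V :=
  G.deleteEdges {s(a, b), s(x, y)} ⊔ SimpleGraph.fromEdgeSet {s(a, x), s(b, y)}

namespace IsSwitchable

lemma mk_ne_mk (h : IsSwitchable G a b x y) : s(a, b) ≠ s(x, y) := by
  obtain ⟨hab, -, hax, -, nax, -⟩ := h
  rw [Ne, Sym2.eq_iff]
  grind

lemma mem_edgeSet_switch (h : IsSwitchable G a b x y) {e : Sym2 V} :
    e ∈ (switch G a b x y).edgeSet ↔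
      e ∈ G.edgeSet ∧ e ≠ s(a, b) ∧ e ≠ s(x, y) ∨ e = s(a, x) ∨ e = s(b, y) := by
  obtain ⟨-, -, hax, hby, -⟩ := h
  induction e using Sym2.ind with | _ u v
  simp only [switch, SimpleGraph.mem_edgeSet, SimpleGraph.sup_adj, SimpleGraph.deleteEdges_adj,
    SimpleGraph.fromEdgeSet_adj, Set.mem_insert_iff, Set.mem_singleton_iff]
  grind

lemma symm_switch (h : IsSwitchable G a b x y) : IsSwitchable (switch G a b x y) a x b y := by
  have hs := @mem_edgeSet_switch _ G a b x y h
  obtain ⟨hab, hxy, -, -, nax, nby⟩ := h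
  simp only [IsSwitchable, ← SimpleGraph.mem_edgeSet] at hab hxy nax nby ⊢
  exact ⟨by grind, by grind, G.ne_of_adj hab, G.ne_of_adj hxy, by grind, by grind⟩

lemma switch_switch (h : IsSwitchable G a b x y) : switch (switch G a b x y) a x b y = G := by
  rw [← SimpleGraph.edgeSet_inj]
  ext e
  rw [h.symm_switch.mem_edgeSet_switch, h.mem_edgeSet_switch]
  obtain ⟨hab, hxy, -, -, nax, nby⟩ := h
  rw [← SimpleGraph.mem_edgeSet] at hab hxy nax nby
  grind

lemma iverson_mem_edgeSet_switch (h : IsSwitchable G a b x y) (e : Sym2 V) :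
    𝟙[e ∈ (switch G a b x y).edgeSet] + 𝟙[e = s(a, b)] + 𝟙[e = s(x, y)] =
      𝟙[e ∈ G.edgeSet] + 𝟙[e = s(a, x)] + 𝟙[e = s(b, y)] := by
  have hne := h.mk_ne_mk
  have hne' := h.symm_switch.mk_ne_mk
  rw [h.mem_edgeSet_switch]
  obtain ⟨hab, hxy, -, -, nax, nby⟩ := h
  rw [← SimpleGraph.mem_edgeSet] at hab hxy nax nby
  unfold iverson
  grind

end IsSwitchable

lemma IsSwitchable.switch_mem_regularGraphs [Fintype V] (h : IsSwitchable G a b x y)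
    (hG : G ∈ regularGraphs V d) : switch G a b x y ∈ regularGraphs V d := by
  refine mem_regularGraphs.2 fun u => ?_
  have hsum := sum_congr rfl fun v (_ : v ∈ univ) => h.iverson_mem_edgeSet_switch s(u, v)
  obtain ⟨hab, hxy, hax, hby, -, -⟩ := h
  simp only [SimpleGraph.mem_edgeSet, sum_add_distrib, sum_iverson_adj_of_mem hG,
    sum_iverson_mk_eq hab.ne, sum_iverson_mk_eq hxy.ne, sum_iverson_mk_eq hax,
    sum_iverson_mk_eq hby, sum_iverson_adj] at hsum
  exact_mod_cast (by linarith : ((switch G a b x y).degree u : ℝ) = d)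

lemma expect_switch [Fintype V] (d : ℕ) (a b x y : V) (F : SimpleGraph V → ℝ) :
    𝔼 G ∈ regularGraphs V d, 𝟙[IsSwitchable G a b x y] * F (switch G a b x y) =
      𝔼 G ∈ regularGraphs V d, 𝟙[IsSwitchable G a x b y] * F G := by
  simp only [expect_eq_sum_div_card, iverson, ite_mul, one_mul, zero_mul, ← sum_filter]
  congr 1
  refine sum_nbij' (switch · a b x y) (switch · a x b y) ?_ ?_ ?_ ?_ fun _ _ => rfl <;>
    intro G hG <;> obtain ⟨hG, h⟩ := mem_filter.1 hG
  · exact mem_filter.2 ⟨h.switch_mem_regularGraphs hG, h.symm_switch⟩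
  · exact mem_filter.2 ⟨h.switch_mem_regularGraphs hG, h.symm_switch⟩
  · exact h.switch_switch
  · exact h.switch_switch

/-- The sum of `F a b x y` over the switchings available in `G`. -/
def switchSum [Fintype V] (G : SimpleGraph V) (F : V → V → V → V → ℝ) : ℝ :=
  ∑ a, ∑ b, ∑ x, ∑ y, 𝟙[IsSwitchable G a b x y] * F a b x y

lemma expect_switchSum_switch [Fintype V] (d : ℕ) (F : SimpleGraph V → V → V → V → V → ℝ) :
    𝔼 G ∈ regularGraphs V d, switchSum G (fun a b x y => F (switch G a b x y) a x b y) =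
      𝔼 G ∈ regularGraphs V d, switchSum G (F G) := by
  simp only [switchSum, expect_sum_comm]
  refine sum_congr rfl fun a _ => ?_
  rw [sum_comm]
  refine sum_congr rfl fun x _ => sum_congr rfl fun b _ => sum_congr rfl fun y _ => ?_
  exact expect_switch d a b x y fun G => F G a x b y

end Switch

lemma sum_sum_iverson_adj (hG : G ∈ regularGraphs V d) :
    ∑ x, ∑ y, 𝟙[G.Adj x y] = Fintype.card V * d := by
  simp only [sum_iverson_adj_of_mem hG, sum_const, card_univ, nsmul_eq_mul]

lemma sum_iverson_adj_right_of_mem (hG : G ∈ regularGraphs V d) (v : V) :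
    ∑ w, 𝟙[G.Adj w v] = d := by
  simp only [G.adj_comm _ v, sum_iverson_adj_of_mem hG]

lemma sum_iverson_eq_or_adj_le (hG : G ∈ regularGraphs V d) (v : V) :
    ∑ w, 𝟙[w = v ∨ G.Adj v w] ≤ d + 1 := by
  calc ∑ w, 𝟙[w = v ∨ G.Adj v w] ≤ ∑ w, (𝟙[w = v] + 𝟙[G.Adj v w]) :=
        sum_le_sum fun w _ => iverson_or_le _ _
    _ = d + 1 := by
        rw [sum_add_distrib, sum_iverson_eq, sum_iverson_adj_of_mem hG, add_comm]

lemma le_sum_iverson_isSwitchable (hG : G ∈ regularGraphs V d) {a b : V} (hab : G.Adj a b) :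
    Fintype.card V * d - 2 * d * (d + 1) ≤ ∑ x, ∑ y, 𝟙[IsSwitchable G a b x y] := by
  have bad_x : ∑ x, ∑ y, 𝟙[(x = a ∨ G.Adj a x) ∧ G.Adj x y] ≤ (d + 1) * d := by
    simp only [iverson_and, ← mul_sum, sum_iverson_adj_of_mem hG, ← sum_mul]
    exact mul_le_mul_of_nonneg_right (sum_iverson_eq_or_adj_le hG a) d.cast_nonneg
  have bad_y : ∑ x, ∑ y, 𝟙[(y = b ∨ G.Adj b y) ∧ G.Adj x y] ≤ (d + 1) * d := by
    rw [sum_comm]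
    simp only [iverson_and, ← mul_sum, sum_iverson_adj_right_of_mem hG, ← sum_mul]
    exact mul_le_mul_of_nonneg_right (sum_iverson_eq_or_adj_le hG b) d.cast_nonneg
  have union_bound (x y : V) : 𝟙[G.Adj x y] ≤ 𝟙[IsSwitchable G a b x y] +
      (𝟙[(x = a ∨ G.Adj a x) ∧ G.Adj x y] + 𝟙[(y = b ∨ G.Adj b y) ∧ G.Adj x y]) := by
    refine (iverson_mono fun h => ?_).trans
      ((iverson_or_le _ _).trans (add_le_add_right (iverson_or_le _ _) _))
    unfold IsSwitchable
    grind
  have total := sum_le_sum fun x (_ : x ∈ univ) => sum_le_sum fun y (_ : y ∈ univ) =>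
    union_bound x y
  simp only [sum_sum_iverson_adj hG, sum_add_distrib] at total
  linarith

lemma sum_iverson_isSwitchable_le (hG : G ∈ regularGraphs V d) (a b : V) :
    ∑ x, ∑ y, 𝟙[IsSwitchable G a b x y] ≤ Fintype.card V * d := by
  rw [← sum_sum_iverson_adj hG]
  exact sum_le_sum fun x _ => sum_le_sum fun y _ => iverson_mono fun h => h.2.1

/-! ### The probability of a set of edges -/

/-- The probability that the random `d`-regular graph on `V` contains all edges in `S`. -/
def edgeProb (d : ℕ) (S : Finset (Sym2 V)) : ℝ :=
  𝔼 G ∈ regularGraphs V d, 𝟙[↑S ⊆ G.edgeSet]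

lemma edgeProb_nonneg (d : ℕ) (S : Finset (Sym2 V)) : 0 ≤ edgeProb d S :=
  expect_nonneg fun _ _ => iverson_nonneg _

lemma iverson_insert_subset_edgeSet_mul_le (hG : G ∈ regularGraphs V d) (S : Finset (Sym2 V))
    (u v : V) :
    𝟙[↑(insert s(u, v) S) ⊆ G.edgeSet] * (Fintype.card V * d - 2 * d * (d + 1) - 2 * #S) ≤
      ∑ x, ∑ y, 𝟙[IsSwitchable G u v x y] * (𝟙[s(x, y) ∉ S] * 𝟙[↑S ⊆ G.edgeSet]) := by
  by_cases hS : ↑(insert s(u, v) S) ⊆ G.edgeSet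
  · have ⟨huv, hS'⟩ : G.Adj u v ∧ ↑S ⊆ G.edgeSet := by
      simpa [Set.insert_subset_iff] using hS
    have split (x y : V) : 𝟙[IsSwitchable G u v x y] ≤
        𝟙[IsSwitchable G u v x y] * (𝟙[s(x, y) ∉ S] * 1) + 𝟙[s(x, y) ∈ S] := by
      unfold iverson
      split_ifs <;> norm_num
    have total := sum_le_sum fun x (_ : x ∈ univ) => sum_le_sum fun y (_ : y ∈ univ) =>
      split x y
    simp only [sum_add_distrib] at total
    rw [iverson_of_true hS, iverson_of_true hS', one_mul]
    linarith [le_sum_iverson_isSwitchable hG huv, sum_sum_iverson_mk_mem_le S]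
  · rw [iverson_of_false hS, zero_mul]
    exact sum_nonneg fun x _ => sum_nonneg fun y _ => mul_nonneg (iverson_nonneg _)
      (mul_nonneg (iverson_nonneg _) (iverson_nonneg _))

lemma edgeProb_insert_mul_le (d : ℕ) {S : Finset (Sym2 V)} {e : Sym2 V} (he : e ∉ S) :
    edgeProb d (insert e S) * (Fintype.card V * d - 2 * d * (d + 1) - 2 * #S) ≤
      d ^ 2 * edgeProb d S := by
  induction e using Sym2.ind with | _ u v
  have backward (G : SimpleGraph V) (x y : V) :
      𝟙[IsSwitchable G u x v y] * (𝟙[s(x, y) ∉ S] * 𝟙[↑S ⊆ (switch G u x v y).edgeSet]) ≤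
        𝟙[↑S ⊆ G.edgeSet] * (𝟙[G.Adj u x] * 𝟙[G.Adj v y]) := by
    rw [← iverson_and, ← iverson_and, ← iverson_and, ← iverson_and]
    refine iverson_mono fun ⟨h, hxy, hS⟩ => ⟨fun e heS => ?_, h.1, h.2.1⟩
    obtain hG | rfl | rfl := h.mem_edgeSet_switch.1 (hS heS)
    · exact hG.1
    · exact absurd heS he
    · exact absurd heS hxy
  calc _ = 𝔼 G ∈ regularGraphs V d, 𝟙[↑(insert s(u, v) S) ⊆ G.edgeSet] *
          (Fintype.card V * d - 2 * d * (d + 1) - 2 * #S) := expect_mul ..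
    _ ≤ 𝔼 G ∈ regularGraphs V d,
          ∑ x, ∑ y, 𝟙[IsSwitchable G u v x y] * (𝟙[s(x, y) ∉ S] * 𝟙[↑S ⊆ G.edgeSet]) :=
        expect_le_expect fun _ hG => iverson_insert_subset_edgeSet_mul_le hG S u v
    _ = 𝔼 G ∈ regularGraphs V d, ∑ x, ∑ y, 𝟙[IsSwitchable G u x v y] *
          (𝟙[s(x, y) ∉ S] * 𝟙[↑S ⊆ (switch G u x v y).edgeSet]) := by
        simp only [expect_sum_comm]
        exact sum_congr rfl fun x _ => sum_congr rfl fun y _ =>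
          (expect_switch d u x v y fun H => 𝟙[s(x, y) ∉ S] * 𝟙[↑S ⊆ H.edgeSet]).symm
    _ ≤ 𝔼 G ∈ regularGraphs V d, d ^ 2 * 𝟙[↑S ⊆ G.edgeSet] := by
        refine expect_le_expect fun G hG =>
          (sum_le_sum fun x _ => sum_le_sum fun y _ => backward G x y).trans_eq ?_
        simp only [← mul_sum, ← sum_mul, sum_iverson_adj_of_mem hG]
        ring
    _ = d ^ 2 * edgeProb d S := (mul_expect ..).symm

lemma edgeProb_le (hd : 0 < d) (S : Finset (Sym2 V)) (hS : 4 * (d + #S) ≤ Fintype.card V) :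
    edgeProb d S ≤ (2 * d / Fintype.card V : ℝ) ^ #S := by
  have hd' : (1 : ℝ) ≤ d := by exact_mod_cast hd
  induction S using Finset.induction_on with
  | empty =>
    have le_one : edgeProb d (∅ : Finset (Sym2 V)) ≤ 𝔼 _G ∈ regularGraphs V d, 1 :=
      expect_le_expect fun G _ => iverson_le_one _
    obtain h | h := (regularGraphs V d).eq_empty_or_nonempty
    · simp [edgeProb, h]
    · simpa [h] using le_one
  | insert e S he ih =>
    rw [card_insert_of_notMem he] at hS ⊢
    have hS' : (4 * (d + (#S + 1)) : ℝ) ≤ Fintype.card V := by exact_mod_cast hS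
    set n : ℝ := (Fintype.card V : ℝ)
    have hn : 0 < n := by linarith [(#S).cast_nonneg (α := ℝ)]
    have few_excluded : n * d / 2 ≤ n * d - 2 * d * (d + 1) - 2 * #S := by
      nlinarith [(#S).cast_nonneg (α := ℝ)]
    have step : edgeProb d (insert e S) ≤ 2 * d / n * edgeProb d S := by
      have := (mul_le_mul_of_nonneg_left few_excluded (edgeProb_nonneg d (insert e S))).trans
        (edgeProb_insert_mul_le d he)
      rw [div_mul_eq_mul_div, le_div_iff₀ hn]
      exact le_of_mul_le_mul_right (by linarith) (zero_lt_one.trans_le hd')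
    calc _ ≤ 2 * d / n * edgeProb d S := step
      _ ≤ 2 * d / n * (2 * d / n) ^ #S := by gcongr; exact ih (by omega)
      _ = _ := (pow_succ' ..).symm

/-! ### Counting short cycles -/

lemma sum_vecEmpty (φ : (Fin 0 → V) → ℝ) : ∑ f, φ f = φ ![] :=
  (Fintype.sum_unique φ).trans (congrArg φ (Subsingleton.elim _ _))

lemma sum_vecCons {k : ℕ} (φ : (Fin (k + 1) → V) → ℝ) :
    ∑ f, φ f = ∑ x, ∑ f : Fin k → V, φ (Matrix.vecCons x f) := by
  rw [← (Fin.consEquiv fun _ => V).sum_comp, Fintype.sum_prod_type]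
  rfl

section SumPowCard

variable {ρ : ℝ}

lemma sum_pow_card_insert_le (hρ : 0 ≤ ρ) (U : Finset V) :
    ∑ x, ρ ^ #(insert x U) ≤ (#U + Fintype.card V * ρ) * ρ ^ #U := by
  calc ∑ x, ρ ^ #(insert x U) ≤ ∑ x, (𝟙[x ∈ U] * ρ ^ #U + ρ * ρ ^ #U) := by
        refine sum_le_sum fun x _ => ?_
        by_cases hx : x ∈ U
        · rw [iverson_of_true hx, insert_eq_of_mem hx, one_mul]
          exact le_add_of_nonneg_right (by positivity)
        · rw [iverson_of_false hx, card_insert_of_notMem hx, zero_mul, zero_add, pow_succ']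
    _ = (#U + Fintype.card V * ρ) * ρ ^ #U := by
        rw [sum_add_distrib, ← sum_mul, sum_iverson, filter_univ_mem, sum_const, card_univ,
          nsmul_eq_mul]
        ring

lemma sum_pow_card_union_image_le (hρ : 0 ≤ ρ) (h1 : 1 ≤ Fintype.card V * ρ) (k : ℕ)
    (U : Finset V) :
    ∑ q : Fin k → V, ρ ^ #(U ∪ univ.image q) ≤
      ((#U + k) * (Fintype.card V * ρ)) ^ k * ρ ^ #U := by
  induction k generalizing U with
  | zero => simp
  | succ k ih =>
    set m : ℝ := Fintype.card V * ρ
    have tail (x : V) : ∑ q : Fin k → V, ρ ^ #(U ∪ univ.image (Matrix.vecCons x q)) ≤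
        ((#U + (k + 1)) * m) ^ k * ρ ^ #(insert x U) := by
      have himage (q : Fin k → V) :
          U ∪ univ.image (Matrix.vecCons x q) = insert x U ∪ univ.image q := by
        ext y
        simp only [mem_union, mem_image, mem_univ, true_and, Fin.exists_fin_succ,
          Matrix.cons_val_zero, Matrix.cons_val_succ, mem_insert]
        grind
      have hcard : (#(insert x U) : ℝ) ≤ #U + 1 := by exact_mod_cast card_insert_le x U
      simp only [himage]
      refine (ih (insert x U)).trans ?_
      gcongr ?_ ^ k * _
      exact mul_le_mul_of_nonneg_right (by linarith) (by positivity)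
    calc ∑ q : Fin (k + 1) → V, ρ ^ #(U ∪ univ.image q)
        = ∑ x, ∑ q : Fin k → V, ρ ^ #(U ∪ univ.image (Matrix.vecCons x q)) := sum_vecCons _
      _ ≤ ∑ x, ((#U + (k + 1)) * m) ^ k * ρ ^ #(insert x U) := sum_le_sum fun x _ => tail x
      _ = ((#U + (k + 1)) * m) ^ k * ∑ x, ρ ^ #(insert x U) := (mul_sum ..).symm
      _ ≤ ((#U + (k + 1)) * m) ^ k * (((#U + (k + 1)) * m) * ρ ^ #U) := by
          refine mul_le_mul_of_nonneg_left ((sum_pow_card_insert_le hρ U).trans ?_) (by positivity)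
          refine mul_le_mul_of_nonneg_right ?_ (by positivity)
          nlinarith [(#U).cast_nonneg (α := ℝ), k.cast_nonneg (α := ℝ)]
      _ = ((#U + (k + 1 : ℕ)) * m) ^ (k + 1) * ρ ^ #U := by push_cast; ring

end SumPowCard

section Cycles

variable {V : Type*} {G : SimpleGraph V} {k : ℕ} [NeZero k]

/-- `f` traverses a cycle of length `k` in `G`, with a starting point and a direction. -/
def IsCycle (G : SimpleGraph V) (f : Fin k → V) : Prop :=
  Function.Injective f ∧ ∀ i, G.Adj (f i) (f (i + 1))

/-- The edges of the closed walk along `f`. An injective `f` is a cycle of the random graph with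
probability `edgeProb d (cycleEdges f)`. -/
def cycleEdges (f : Fin k → V) : Finset (Sym2 V) := univ.image fun i => s(f i, f (i + 1))

lemma coe_cycleEdges_subset_edgeSet {f : Fin k → V} (hf : IsCycle G f) :
    ↑(cycleEdges f) ⊆ G.edgeSet := by
  simpa [cycleEdges, Set.range_subset_iff] using hf.2

lemma card_cycleEdges_le (f : Fin k → V) : #(cycleEdges f) ≤ k :=
  card_image_le.trans_eq (card_fin k)

lemma injective_cycleEdge (hk : 3 ≤ k) {f : Fin k → V} (hf : Function.Injective f) :
    Function.Injective fun i => s(f i, f (i + 1)) := by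
  have two_ne_zero : (1 + 1 : Fin k) ≠ 0 := by
    rw [Ne, Fin.ext_iff, Fin.val_add, Fin.val_one', Fin.val_zero]
    simp only [Nat.mod_eq_of_lt (by omega : 1 < k), Nat.mod_eq_of_lt (by omega : 1 + 1 < k)]
    omega
  intro i j h
  obtain ⟨h, -⟩ | ⟨h₁, h₂⟩ := Sym2.eq_iff.1 h
  · exact hf h
  · have : i + (1 + 1) = i := by rw [← add_assoc, hf h₂, ← hf h₁]
    exact absurd (add_eq_left.1 this) two_ne_zero

/- Every vertex of `q` that is not on `p` starts an edge of `q` that is not an edge of `p`. -/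
lemma card_image_union_image_le (hk : 3 ≤ k) {p q : Fin k → V} (hp : Function.Injective p)
    (hq : Function.Injective q) :
    #(univ.image p ∪ univ.image q) ≤ #(cycleEdges p ∪ cycleEdges q) := by
  set J : Finset (Fin k) := {j | q j ∉ univ.image p}
  have new_vertices : univ.image p ∪ univ.image q = univ.image p ∪ J.image q := by
    ext v
    simp only [J, mem_union, mem_image, mem_univ, true_and, mem_filter]
    grind
  have new_edges : Disjoint (cycleEdges p) (J.image fun i => s(q i, q (i + 1))) := by
    rw [disjoint_left]
    intro e he he'
    obtain ⟨i, -, rfl⟩ := mem_image.1 he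
    obtain ⟨j, hj, h⟩ := mem_image.1 he'
    simp only [J, mem_filter, mem_univ, true_and, mem_image, not_exists] at hj
    obtain ⟨h, -⟩ | ⟨h, -⟩ := Sym2.eq_iff.1 h <;> exact hj _ h.symm
  calc #(univ.image p ∪ univ.image q) ≤ #(univ.image p) + #(J.image q) :=
        new_vertices ▸ card_union_le _ _
    _ = #(cycleEdges p) + #(J.image fun i => s(q i, q (i + 1))) := by
        rw [cycleEdges, card_image_of_injective _ hp, card_image_of_injective _ hq,
          card_image_of_injective _ (injective_cycleEdge hk hp),
          card_image_of_injective _ (injective_cycleEdge hk hq)]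
    _ = #(cycleEdges p ∪ J.image fun i => s(q i, q (i + 1))) :=
        (card_union_of_disjoint new_edges).symm
    _ ≤ #(cycleEdges p ∪ cycleEdges q) :=
        card_le_card (union_subset_union_right (image_subset_image (subset_univ _)))

variable [Fintype V]

/-- The number of rooted oriented cycles of length `k` in `G`, that is, `2 * k` times the number
of cycles. -/
def cycleCount (k : ℕ) [NeZero k] (G : SimpleGraph V) : ℝ := ∑ f : Fin k → V, 𝟙[IsCycle G f]

lemma cycleCount_nonneg (k : ℕ) [NeZero k] (G : SimpleGraph V) : 0 ≤ cycleCount k G :=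
  sum_nonneg fun _ _ => iverson_nonneg _

lemma expect_isCycle_mul_isCycle_le (hd : 0 < d) (hk : 3 ≤ k)
    (hn : 4 * (d + 2 * k) ≤ Fintype.card V) (p q : Fin k → V) :
    𝔼 G ∈ regularGraphs V d, 𝟙[IsCycle G p] * 𝟙[IsCycle G q] ≤
      (2 * d / Fintype.card V : ℝ) ^ #(univ.image p ∪ univ.image q) := by
  have hn' : (4 * (d + 2 * k) : ℝ) ≤ Fintype.card V := by exact_mod_cast hn
  have hd' : (0 : ℝ) < d := by exact_mod_cast hd
  by_cases h : Function.Injective p ∧ Function.Injective q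
  · have hcard : #(cycleEdges p ∪ cycleEdges q) ≤ 2 * k := by
      linarith [card_union_le (cycleEdges p) (cycleEdges q), card_cycleEdges_le p,
        card_cycleEdges_le q]
    calc _ ≤ edgeProb d (cycleEdges p ∪ cycleEdges q) := by
          refine expect_le_expect fun G _ => ?_
          rw [← iverson_and, coe_union]
          exact iverson_mono fun ⟨hp, hq⟩ => Set.union_subset
            (coe_cycleEdges_subset_edgeSet hp) (coe_cycleEdges_subset_edgeSet hq)
      _ ≤ (2 * d / Fintype.card V : ℝ) ^ #(cycleEdges p ∪ cycleEdges q) :=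
          edgeProb_le hd _ (by omega)
      _ ≤ _ := pow_le_pow_of_le_one (by positivity)
          (div_le_one_of_le₀ (by linarith) (by positivity)) (card_image_union_image_le hk h.1 h.2)
  · have (G : SimpleGraph V) : 𝟙[IsCycle G p] * 𝟙[IsCycle G q] = 0 := by
      rw [← iverson_and]
      exact iverson_of_false fun h' => h ⟨h'.1.1, h'.2.1⟩
    simp only [this, expect_const_zero]
    positivity

lemma expect_cycleCount_sq_le (hd : 0 < d) (hk : 3 ≤ k) (hn : 4 * (d + 2 * k) ≤ Fintype.card V) :
    𝔼 G ∈ regularGraphs V d, cycleCount k G ^ 2 ≤ (8 * k ^ 2) ^ k * d ^ (2 * k) := by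
  set ρ : ℝ := 2 * d / Fintype.card V with hρ
  have hn' : (4 * (d + 2 * k) : ℝ) ≤ Fintype.card V := by exact_mod_cast hn
  have hd' : (1 : ℝ) ≤ d := by exact_mod_cast hd
  have hnρ : Fintype.card V * ρ = 2 * d := by
    rw [hρ, mul_div_cancel₀]
    linarith [k.cast_nonneg (α := ℝ)]
  have hρ0 : 0 ≤ ρ := by positivity
  have second (p : Fin k → V) : ∑ q : Fin k → V, ρ ^ #(univ.image p ∪ univ.image q) ≤
      (2 * k * (2 * d)) ^ k * ρ ^ #(univ.image p) := by
    have hp : (#(univ.image p) : ℝ) ≤ k := by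
      exact_mod_cast card_image_le.trans_eq (card_fin k)
    refine (sum_pow_card_union_image_le hρ0 (by linarith) k _).trans ?_
    rw [hnρ]
    gcongr ?_ ^ k * _
    exact mul_le_mul_of_nonneg_right (by linarith) (by positivity)
  have first : ∑ p : Fin k → V, ρ ^ #(univ.image p) ≤ (k * (2 * d)) ^ k := by
    have := sum_pow_card_union_image_le hρ0 (by linarith) k (∅ : Finset V)
    rw [hnρ] at this
    simpa using this
  calc 𝔼 G ∈ regularGraphs V d, cycleCount k G ^ 2
      = ∑ p : Fin k → V, ∑ q : Fin k → V,
          𝔼 G ∈ regularGraphs V d, 𝟙[IsCycle G p] * 𝟙[IsCycle G q] := by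
        simp only [sq, cycleCount, sum_mul_sum, expect_sum_comm]
    _ ≤ ∑ p : Fin k → V, ∑ q : Fin k → V, ρ ^ #(univ.image p ∪ univ.image q) :=
        sum_le_sum fun p _ => sum_le_sum fun q _ => expect_isCycle_mul_isCycle_le hd hk hn p q
    _ ≤ ∑ p : Fin k → V, (2 * k * (2 * d)) ^ k * ρ ^ #(univ.image p) :=
        sum_le_sum fun p _ => second p
    _ = (2 * k * (2 * d)) ^ k * ∑ p : Fin k → V, ρ ^ #(univ.image p) := (mul_sum ..).symm
    _ ≤ (2 * k * (2 * d)) ^ k * (k * (2 * d)) ^ k := by gcongr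
    _ = (8 * k ^ 2) ^ k * d ^ (2 * k) := by rw [← mul_pow, pow_mul, ← mul_pow]; ring

end Cycles

/-! ### Codegrees and triangles -/

/-- The number of common neighbours of `a` and `b`, as a real number. If `ab` is an edge, this is
the number of triangles containing it. -/
def codeg (G : SimpleGraph V) (a b : V) : ℝ := ∑ c, 𝟙[G.Adj a c ∧ G.Adj b c]

lemma codeg_nonneg (G : SimpleGraph V) (a b : V) : 0 ≤ codeg G a b :=
  sum_nonneg fun _ _ => iverson_nonneg _

section ShortCycles

variable {V : Type*} {G : SimpleGraph V} {a b c x y : V}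

lemma isCycle_three_iff : IsCycle G ![a, b, c] ↔ G.Adj a b ∧ G.Adj a c ∧ G.Adj b c := by
  simp only [IsCycle, Function.Injective, Fin.forall_fin_succ]
  have := G.ne_of_adj (a := a) (b := b)
  have := G.ne_of_adj (a := a) (b := c)
  have := G.ne_of_adj (a := b) (b := c)
  have := G.adj_comm a c
  simp
  grind

lemma isCycle_four (hab : G.Adj a b) (hbc : G.Adj b c) (hcx : G.Adj c x) (hxa : G.Adj x a)
    (hac : a ≠ c) (hbx : b ≠ x) : IsCycle G ![a, b, c, x] := by
  refine ⟨?_, fun i => by fin_cases i <;> assumption⟩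
  simp [Function.Injective, Fin.forall_fin_succ, hab.ne, hab.ne', hbc.ne, hbc.ne', hcx.ne, hcx.ne',
    hxa.ne, hxa.ne', hac, hac.symm, hbx, hbx.symm]

lemma isCycle_five (hab : G.Adj a b) (hbc : G.Adj b c) (hcx : G.Adj c x) (hxy : G.Adj x y)
    (hya : G.Adj y a) (hac : a ≠ c) (hax : a ≠ x) (hbx : b ≠ x) (hby : b ≠ y) (hcy : c ≠ y) :
    IsCycle G ![a, b, c, x, y] := by
  refine ⟨?_, fun i => by fin_cases i <;> assumption⟩
  simp [Function.Injective, Fin.forall_fin_succ, hab.ne, hab.ne', hbc.ne, hbc.ne', hcx.ne, hcx.ne',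
    hxy.ne, hxy.ne', hya.ne, hya.ne', hac, hac.symm, hax, hax.symm, hbx, hbx.symm, hby, hby.symm,
    hcy, hcy.symm]

end ShortCycles

lemma cycleCount_three_eq_sum_codeg (G : SimpleGraph V) :
    cycleCount 3 G = ∑ a, ∑ b, 𝟙[G.Adj a b] * codeg G a b := by
  simp only [cycleCount, sum_vecCons, sum_vecEmpty, codeg, mul_sum, isCycle_three_iff, iverson_and]

lemma switchSum_codeg_eq (G : SimpleGraph V) :
    switchSum G (fun a b _ _ => codeg G a b) =
      ∑ a, ∑ b, 𝟙[G.Adj a b] * codeg G a b * ∑ x, ∑ y, 𝟙[IsSwitchable G a b x y] := by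
  simp only [switchSum, mul_sum]
  refine sum_congr rfl fun a _ => sum_congr rfl fun b _ => sum_congr rfl fun x _ =>
    sum_congr rfl fun y _ => ?_
  by_cases h : IsSwitchable G a b x y
  · rw [iverson_of_true h, iverson_of_true h.1, one_mul, mul_one]
  · rw [iverson_of_false h, zero_mul, mul_zero]

lemma switchSum_codeg_le (hG : G ∈ regularGraphs V d) :
    switchSum G (fun a b _ _ => codeg G a b) ≤ Fintype.card V * d * cycleCount 3 G := by
  rw [switchSum_codeg_eq, cycleCount_three_eq_sum_codeg, mul_comm]
  simp only [sum_mul]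
  exact sum_le_sum fun a _ => sum_le_sum fun b _ => mul_le_mul_of_nonneg_left
    (sum_iverson_isSwitchable_le hG a b) (mul_nonneg (iverson_nonneg _) (codeg_nonneg G a b))

lemma le_switchSum_codeg (hG : G ∈ regularGraphs V d) :
    (Fintype.card V * d - 2 * d * (d + 1)) * cycleCount 3 G ≤
      switchSum G (fun a b _ _ => codeg G a b) := by
  rw [switchSum_codeg_eq, cycleCount_three_eq_sum_codeg, mul_comm]
  simp only [sum_mul]
  refine sum_le_sum fun a _ => sum_le_sum fun b _ => ?_
  by_cases h : G.Adj a b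
  · exact mul_le_mul_of_nonneg_left (le_sum_iverson_isSwitchable hG h)
      (mul_nonneg (iverson_nonneg _) (codeg_nonneg G a b))
  · simp only [iverson_of_false h, zero_mul, le_refl]

/-! ### Walks of length four -/

/-- The walk `y, x, c, a, b` in `G` does not backtrack. Switching its end edges `ab` and `xy`
creates the triangle `a, x, c`. -/
def IsNonBacktracking {V : Type*} (G : SimpleGraph V) (y x c a b : V) : Prop :=
  ((G.Adj y x ∧ G.Adj x c ∧ c ≠ y) ∧ G.Adj c a ∧ a ≠ x) ∧ G.Adj a b ∧ b ≠ c

lemma sum_iverson_adj_and_ne (hG : G ∈ regularGraphs V d) {p : Prop} {u v : V}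
    (h : p → G.Adj u v) : ∑ w, 𝟙[p ∧ G.Adj v w ∧ w ≠ u] = 𝟙[p] * (d - 1) := by
  by_cases hp : p
  · have split (w : V) : 𝟙[p ∧ G.Adj v w ∧ w ≠ u] = 𝟙[G.Adj v w] - 𝟙[w = u] := by
      have := (h hp).symm
      unfold iverson
      grind
    simp only [split, sum_sub_distrib, sum_iverson_adj_of_mem hG, sum_iverson_eq,
      iverson_of_true hp, one_mul]
  · simp only [iverson_and p, iverson_of_false hp, zero_mul, sum_const_zero]

lemma sum_iverson_isNonBacktracking (hG : G ∈ regularGraphs V d) :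
    ∑ y, ∑ x, ∑ c, ∑ a, ∑ b, 𝟙[IsNonBacktracking G y x c a b] =
      Fintype.card V * d * (d - 1) ^ 3 := by
  calc _ = ∑ y, ∑ x, ∑ c, ∑ a,
          𝟙[(G.Adj y x ∧ G.Adj x c ∧ c ≠ y) ∧ G.Adj c a ∧ a ≠ x] * (d - 1 : ℝ) :=
        sum_congr rfl fun y _ => sum_congr rfl fun x _ => sum_congr rfl fun c _ =>
          sum_congr rfl fun a _ => sum_iverson_adj_and_ne hG fun h => h.2.1
    _ = ∑ y, ∑ x, ∑ c, 𝟙[G.Adj y x ∧ G.Adj x c ∧ c ≠ y] * (d - 1 : ℝ) * (d - 1) :=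
        sum_congr rfl fun y _ => sum_congr rfl fun x _ => sum_congr rfl fun c _ => by
          rw [← sum_mul, sum_iverson_adj_and_ne hG fun h => h.2.1]
    _ = ∑ y, ∑ x, 𝟙[G.Adj y x] * (d - 1 : ℝ) * (d - 1) * (d - 1) :=
        sum_congr rfl fun y _ => sum_congr rfl fun x _ => by
          rw [← sum_mul, ← sum_mul, sum_iverson_adj_and_ne hG id]
    _ = Fintype.card V * d * (d - 1) ^ 3 := by
        simp only [← sum_mul, sum_sum_iverson_adj hG]
        ring

lemma sum_rotate {α β γ : Type*} [Fintype α] [Fintype β] [Fintype γ] (f : α → β → γ → ℝ) :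
    ∑ a, ∑ b, ∑ c, f a b c = ∑ c, ∑ a, ∑ b, f a b c :=
  (sum_congr rfl fun _ _ => sum_comm).trans sum_comm

lemma IsSwitchable.switch_adj_and_adj_iff {V : Type*} {G : SimpleGraph V} {a b x y c : V}
    (h : IsSwitchable G a b x y) :
    (switch G a b x y).Adj a c ∧ (switch G a b x y).Adj x c ↔
      (G.Adj a c ∧ G.Adj x c) ∧ c ≠ b ∧ c ≠ y := by
  simp only [← SimpleGraph.mem_edgeSet, h.mem_edgeSet_switch]
  obtain ⟨hab, hxy, hax, hby, nax, nby⟩ := h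
  have := hab.ne
  have := hxy.ne
  have := G.ne_of_adj (a := a) (b := c)
  have := G.ne_of_adj (a := x) (b := c)
  have := G.adj_comm a x
  simp only [Sym2.eq_iff, SimpleGraph.mem_edgeSet]
  grind

lemma switchSum_codeg_switch_eq (G : SimpleGraph V) :
    switchSum G (fun a b x y => codeg (switch G a b x y) a x) = ∑ y, ∑ x, ∑ c, ∑ a, ∑ b,
      𝟙[IsSwitchable G a b x y ∧ (G.Adj a c ∧ G.Adj x c) ∧ c ≠ b ∧ c ≠ y] := by
  calc _ = ∑ a, ∑ b, ∑ x, ∑ y, ∑ c,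
        𝟙[IsSwitchable G a b x y ∧ (G.Adj a c ∧ G.Adj x c) ∧ c ≠ b ∧ c ≠ y] := by
        simp only [switchSum, codeg, mul_sum, ← iverson_and]
        exact sum_congr rfl fun a _ => sum_congr rfl fun b _ => sum_congr rfl fun x _ =>
          sum_congr rfl fun y _ => sum_congr rfl fun c _ =>
            congrArg iverson <| propext <| and_congr_right fun h => h.switch_adj_and_adj_iff
    _ = ∑ x, ∑ y, ∑ c, ∑ a, ∑ b,
        𝟙[IsSwitchable G a b x y ∧ (G.Adj a c ∧ G.Adj x c) ∧ c ≠ b ∧ c ≠ y] :=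
        (sum_rotate _).trans <| sum_congr rfl fun x _ =>
          (sum_rotate _).trans <| sum_congr rfl fun y _ => sum_rotate _
    _ = _ := sum_comm

lemma switchSum_codeg_switch_le (hG : G ∈ regularGraphs V d) :
    switchSum G (fun a b x y => codeg (switch G a b x y) a x) ≤
      Fintype.card V * d * (d - 1) ^ 3 := by
  rw [switchSum_codeg_switch_eq, ← sum_iverson_isNonBacktracking hG]
  refine sum_le_sum fun y _ => sum_le_sum fun x _ => sum_le_sum fun c _ => sum_le_sum fun a _ =>
    sum_le_sum fun b _ => iverson_mono ?_
  rintro ⟨⟨hab, hxy, hax, -⟩, ⟨hac, hxc⟩, hcb, hcy⟩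
  exact ⟨⟨⟨hxy.symm, hxc, hcy⟩, hac.symm, hax⟩, hab, hcb.symm⟩

/-- The weighted number of short cycles that bounds the number of non-backtracking walks
`y, x, c, a, b` whose ends cannot be switched to create the triangle `a, x, c`. -/
def defect (d : ℕ) (G : SimpleGraph V) : ℝ :=
  d ^ 2 * cycleCount 3 G + cycleCount 4 G + cycleCount 5 G

lemma iverson_isNonBacktracking_le {V : Type*} (G : SimpleGraph V) (y x c a b : V) :
    𝟙[IsNonBacktracking G y x c a b] ≤
      𝟙[IsSwitchable G a b x y ∧ (G.Adj a c ∧ G.Adj x c) ∧ c ≠ b ∧ c ≠ y] +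
        (𝟙[IsCycle G ![x, c, a] ∧ G.Adj x y ∧ G.Adj a b] +
          (𝟙[b = y ∧ IsCycle G ![y, x, c, a]] + 𝟙[IsCycle G ![y, x, c, a, b]])) := by
  refine (iverson_mono ?_).trans <| (iverson_or_le _ _).trans <| add_le_add_right
    ((iverson_or_le _ _).trans <| add_le_add_right (iverson_or_le _ _) _) _
  rintro ⟨⟨⟨hyx, hxc, hcy⟩, hca, hax⟩, hab, hbc⟩
  by_cases tri : G.Adj a x
  · exact .inr <| .inl ⟨isCycle_three_iff.2 ⟨hxc, tri.symm, hca⟩, hyx.symm, hab⟩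
  by_cases hby : b = y
  · subst hby
    exact .inr <| .inr <| .inl ⟨rfl, isCycle_four hyx hxc hca hab hbc hax.symm⟩
  by_cases adj_by : G.Adj b y
  · exact .inr <| .inr <| .inr <| isCycle_five hyx hxc hca hab adj_by hcy.symm
      (fun h => tri (h ▸ hyx)) hax.symm (fun h => tri (h ▸ hab)) hbc.symm
  · exact .inl ⟨⟨hab, hyx.symm, hax, hby, tri, adj_by⟩, ⟨hca.symm, hxc⟩, hbc.symm, hcy⟩

lemma le_switchSum_codeg_switch (hG : G ∈ regularGraphs V d) :
    Fintype.card V * d * (d - 1) ^ 3 - defect d G ≤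
      switchSum G (fun a b x y => codeg (switch G a b x y) a x) := by
  have three : ∑ y, ∑ x, ∑ c, ∑ a, ∑ b, 𝟙[IsCycle G ![x, c, a] ∧ G.Adj x y ∧ G.Adj a b] =
      d ^ 2 * cycleCount 3 G := by
    calc _ = ∑ y, ∑ x, 𝟙[G.Adj x y] * ∑ c, ∑ a, 𝟙[IsCycle G ![x, c, a]] * (d : ℝ) := by
          simp only [iverson_and, ← mul_sum, sum_iverson_adj_of_mem hG,
            mul_left_comm 𝟙[IsCycle _ _]]
      _ = ∑ x, d * ∑ c, ∑ a, 𝟙[IsCycle G ![x, c, a]] * (d : ℝ) := by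
          rw [sum_comm]
          simp only [← sum_mul, sum_iverson_adj_of_mem hG]
      _ = d ^ 2 * cycleCount 3 G := by
          simp only [cycleCount, sum_vecCons, sum_vecEmpty, ← sum_mul, ← mul_sum]
          ring
  have four : ∑ y, ∑ x, ∑ c, ∑ a, ∑ b, 𝟙[b = y ∧ IsCycle G ![y, x, c, a]] = cycleCount 4 G := by
    simp only [iverson_and, ← sum_mul, sum_iverson_eq, one_mul, cycleCount, sum_vecCons,
      sum_vecEmpty]
  have five : ∑ y, ∑ x, ∑ c, ∑ a, ∑ b, 𝟙[IsCycle G ![y, x, c, a, b]] = cycleCount 5 G := by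
    simp only [cycleCount, sum_vecCons, sum_vecEmpty]
  have total := sum_le_sum fun y (_ : y ∈ univ) => sum_le_sum fun x (_ : x ∈ univ) =>
    sum_le_sum fun c (_ : c ∈ univ) => sum_le_sum fun a (_ : a ∈ univ) =>
      sum_le_sum fun b (_ : b ∈ univ) => iverson_isNonBacktracking_le G y x c a b
  simp only [sum_add_distrib, three, four, five, sum_iverson_isNonBacktracking hG] at total
  rw [switchSum_codeg_switch_eq, defect]
  linarith

/-! ### Triangles lost and gained in a switching -/

lemma codeg_eq_card {a b : V} (hab : G.Adj a b) :
    codeg G a b = #{s ∈ G.cliqueFinset 3 | a ∈ s ∧ b ∈ s} := by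
  rw [codeg, sum_iverson, Nat.cast_inj]
  refine card_nbij (fun c => {a, b, c}) ?_ ?_ ?_
  · intro c hc
    have hc := (mem_filter_univ _).1 hc
    exact mem_filter.2 ⟨SimpleGraph.mem_cliqueFinset_iff.2 <|
      SimpleGraph.is3Clique_triple_iff.2 ⟨hab, hc⟩, by simp, by simp⟩
  · intro c hc e _ h
    have hc := (mem_filter_univ _).1 hc
    have : c ∈ ({a, b, e} : Finset V) := (show {a, b, c} = ({a, b, e} : Finset V) from h) ▸ by simp
    simpa [hc.1.ne', hc.2.ne'] using this
  · intro s hs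
    obtain ⟨hs, ha, hb⟩ := mem_filter.1 hs
    rw [SimpleGraph.mem_cliqueFinset_iff] at hs
    obtain ⟨c, hc⟩ : ∃ c, (s.erase a).erase b = {c} := by
      rw [← card_eq_one, card_erase_of_mem (mem_erase.2 ⟨hab.ne', hb⟩), card_erase_of_mem ha,
        hs.card_eq]
    have hs_eq : {a, b, c} = s := by
      rw [← hc, insert_erase (mem_erase.2 ⟨hab.ne', hb⟩), insert_erase ha]
    refine ⟨c, ?_, hs_eq⟩
    simpa using (SimpleGraph.is3Clique_triple_iff.1 (hs_eq ▸ hs)).2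

lemma cycleCount_three_eq_card (G : SimpleGraph V) :
    cycleCount 3 G = 6 * #(G.cliqueFinset 3) := by
  have ordered_edges (s) (hs : s ∈ G.cliqueFinset 3) :
      ∑ a, ∑ b, 𝟙[G.Adj a b ∧ a ∈ s ∧ b ∈ s] = 6 := by
    rw [SimpleGraph.mem_cliqueFinset_iff] at hs
    rw [← Fintype.sum_prod_type' fun a b => 𝟙[G.Adj a b ∧ a ∈ s ∧ b ∈ s], sum_iverson]
    have : univ.filter (fun p : V × V => G.Adj p.1 p.2 ∧ p.1 ∈ s ∧ p.2 ∈ s) = s.offDiag := by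
      ext ⟨a, b⟩
      simp only [mem_filter_univ, mem_offDiag]
      exact ⟨fun ⟨h, ha, hb⟩ => ⟨ha, hb, h.ne⟩, fun ⟨ha, hb, h⟩ => ⟨hs.1 ha hb h, ha, hb⟩⟩
    rw [this, offDiag_card, hs.card_eq]
    norm_num
  have split (a b : V) : 𝟙[G.Adj a b] * codeg G a b =
      ∑ s ∈ G.cliqueFinset 3, 𝟙[G.Adj a b ∧ a ∈ s ∧ b ∈ s] := by
    simp only [iverson_and (G.Adj a b), ← mul_sum, sum_iverson]
    by_cases h : G.Adj a b
    · rw [codeg_eq_card h]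
    · rw [iverson_of_false h, zero_mul, zero_mul]
  calc cycleCount 3 G
      = ∑ s ∈ G.cliqueFinset 3, ∑ a, ∑ b, 𝟙[G.Adj a b ∧ a ∈ s ∧ b ∈ s] := by
        simp only [cycleCount_three_eq_sum_codeg, split]
        rw [sum_comm]
        simp only [sum_comm (s := G.cliqueFinset 3)]
        rw [sum_comm]
    _ = 6 * #(G.cliqueFinset 3) := by
        rw [sum_congr rfl ordered_edges, sum_const, nsmul_eq_mul, mul_comm]

lemma switch_reverse {V : Type*} (G : SimpleGraph V) (a b x y : V) :
    switch G b a y x = switch G a b x y := by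
  rw [switch, switch, Sym2.eq_swap (a := b), Sym2.eq_swap (a := y), Set.pair_comm s(b, y)]

lemma IsSwitchable.reverse {V : Type*} {G : SimpleGraph V} {a b x y : V}
    (h : IsSwitchable G a b x y) : IsSwitchable G b a y x := by
  obtain ⟨hab, hxy, hax, hby, nax, nby⟩ := h
  exact ⟨hab.symm, hxy.symm, hby, hax, nby, nax⟩

lemma IsSwitchable.cliqueFinset_sdiff {a b x y : V} (h : IsSwitchable G a b x y) :
    G.cliqueFinset 3 \ (switch G a b x y).cliqueFinset 3 =
      {s ∈ G.cliqueFinset 3 | a ∈ s ∧ b ∈ s} ∪ {s ∈ G.cliqueFinset 3 | x ∈ s ∧ y ∈ s} := by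
  have hs (u v : V) := @h.mem_edgeSet_switch _ _ _ _ _ _ s(u, v)
  obtain ⟨hab, hxy, hax, hby, nax, nby⟩ := h
  simp only [SimpleGraph.mem_edgeSet, ne_eq, Sym2.eq_iff] at hs
  ext s
  simp only [Finset.mem_sdiff, mem_union, mem_filter, ← and_or_left, and_congr_right_iff,
    SimpleGraph.mem_cliqueFinset_iff]
  intro hG
  constructor
  · intro not_clique
    by_contra hs'
    refine not_clique ⟨fun u hu v hv huv => (hs u v).2 (.inl ⟨hG.1 hu hv huv, ?_⟩), hG.2⟩
    grind
  · rintro (⟨ha, hb⟩ | ⟨hx, hy⟩) clique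
    · have := (hs a b).1 (clique.1 ha hb hab.ne)
      grind [hab.symm]
    · have := (hs x y).1 (clique.1 hx hy hxy.ne)
      grind [hxy.symm]

lemma IsSwitchable.codeg_switch_le {a b x y : V} (h : IsSwitchable G a b x y) :
    codeg (switch G a b x y) a x ≤ codeg G a x :=
  sum_le_sum fun _ _ => iverson_mono fun hc => (h.switch_adj_and_adj_iff.1 hc).1

lemma IsSwitchable.abs_cycleCount_three_sub_le {a b x y : V} (h : IsSwitchable G a b x y) :
    |cycleCount 3 G - cycleCount 3 (switch G a b x y) - 6 * codeg G a b| ≤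
      6 * (codeg G x y + codeg G a x + codeg G b y) := by
  set H := switch G a b x y
  have lost : G.cliqueFinset 3 \ H.cliqueFinset 3 = _ := h.cliqueFinset_sdiff
  have gained : H.cliqueFinset 3 \ G.cliqueFinset 3 = _ :=
    h.switch_switch ▸ h.symm_switch.cliqueFinset_sdiff
  have lost_ge : codeg G a b ≤ #(G.cliqueFinset 3 \ H.cliqueFinset 3) := by
    rw [codeg_eq_card h.1, lost]
    exact_mod_cast card_le_card subset_union_left
  have lost_le : (#(G.cliqueFinset 3 \ H.cliqueFinset 3) : ℝ) ≤ codeg G a b + codeg G x y := by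
    rw [codeg_eq_card h.1, codeg_eq_card h.2.1, lost]
    exact_mod_cast card_union_le _ _
  have gained_le : (#(H.cliqueFinset 3 \ G.cliqueFinset 3) : ℝ) ≤ codeg H a x + codeg H b y := by
    rw [codeg_eq_card h.symm_switch.1, codeg_eq_card h.symm_switch.2.1, gained]
    exact_mod_cast card_union_le _ _
  have codeg_ax : codeg H a x ≤ codeg G a x := h.codeg_switch_le
  have codeg_by : codeg H b y ≤ codeg G b y :=
    (congrArg (codeg · b y) (switch_reverse G a b x y)).symm.trans_le h.reverse.codeg_switch_le
  have card_G := card_sdiff_add_card_inter (G.cliqueFinset 3) (H.cliqueFinset 3)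
  have card_H := card_sdiff_add_card_inter (H.cliqueFinset 3) (G.cliqueFinset 3)
  rw [inter_comm] at card_H
  rw [cycleCount_three_eq_card, cycleCount_three_eq_card, ← card_G, ← card_H, abs_le]
  push_cast
  have := codeg_nonneg G x y
  constructor <;> linarith [Nat.cast_nonneg (α := ℝ) #(H.cliqueFinset 3 \ G.cliqueFinset 3),
    codeg_nonneg G a x, codeg_nonneg G b y]

/-! ### The expected change of the triangle count -/

lemma sum_codeg (hG : G ∈ regularGraphs V d) (a : V) : ∑ x, codeg G a x = d ^ 2 := by
  simp only [codeg, iverson_and]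
  rw [sum_comm]
  simp only [← mul_sum, sum_iverson_adj_right_of_mem hG, ← sum_mul, sum_iverson_adj_of_mem hG, sq]

lemma switchSum_le (G : SimpleGraph V) {F : V → V → V → V → ℝ} (hF : ∀ a b x y, 0 ≤ F a b x y) :
    switchSum G F ≤ ∑ a, ∑ b, ∑ x, ∑ y, 𝟙[G.Adj a b] * (𝟙[G.Adj x y] * F a b x y) := by
  refine sum_le_sum fun a _ => sum_le_sum fun b _ => sum_le_sum fun x _ => sum_le_sum fun y _ => ?_
  rw [← mul_assoc, ← iverson_and]
  exact mul_le_mul_of_nonneg_right (iverson_mono fun h => ⟨h.1, h.2.1⟩) (hF a b x y)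

lemma abs_switchSum_le (G : SimpleGraph V) {F F' : V → V → V → V → ℝ}
    (h : ∀ a b x y, IsSwitchable G a b x y → |F a b x y| ≤ F' a b x y) :
    |switchSum G F| ≤ switchSum G F' := by
  have term (a b x y) :
      |𝟙[IsSwitchable G a b x y] * F a b x y| ≤ 𝟙[IsSwitchable G a b x y] * F' a b x y := by
    by_cases hs : IsSwitchable G a b x y
    · simpa only [iverson_of_true hs, one_mul] using h a b x y hs
    · simp only [iverson_of_false hs, zero_mul, abs_zero, le_refl]
  simp only [switchSum, ← Fintype.sum_prod_type']
  exact (abs_sum_le_sum_abs _ _).trans (sum_le_sum fun _ _ => term _ _ _ _)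

/-- The number of pairs of distinct triangles with a common edge, each counted four times. -/
def books (G : SimpleGraph V) : ℝ := ∑ a, ∑ b, 𝟙[G.Adj a b] * (codeg G a b * (codeg G a b - 1))

lemma codeg_mul_codeg_sub_one (G : SimpleGraph V) (a b : V) :
    codeg G a b * (codeg G a b - 1) =
      ∑ c, ∑ e, 𝟙[(G.Adj a c ∧ G.Adj b c) ∧ (G.Adj a e ∧ G.Adj b e) ∧ c ≠ e] := by
  have diagonal : codeg G a b =
      ∑ c, ∑ e, 𝟙[e = c] * 𝟙[G.Adj a c ∧ G.Adj b c] := by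
    simp only [← sum_mul, sum_iverson_eq, one_mul, codeg]
  rw [mul_sub, mul_one, codeg, sum_mul_sum, ← codeg, diagonal, ← sum_sub_distrib]
  refine sum_congr rfl fun c _ => ?_
  rw [← sum_sub_distrib]
  refine sum_congr rfl fun e _ => ?_
  unfold iverson
  grind

lemma codeg_mul_codeg_sub_one_nonneg (G : SimpleGraph V) (a b : V) :
    0 ≤ codeg G a b * (codeg G a b - 1) := by
  rw [codeg_mul_codeg_sub_one]
  exact sum_nonneg fun _ _ => sum_nonneg fun _ _ => iverson_nonneg _

lemma switchSum_codeg_mul_codeg_sub_one_le (hG : G ∈ regularGraphs V d) :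
    switchSum G (fun a b _ _ => codeg G a b * (codeg G a b - 1)) ≤
      Fintype.card V * d * books G := by
  refine (switchSum_le G fun a b _ _ => codeg_mul_codeg_sub_one_nonneg G a b).trans_eq ?_
  simp only [← mul_sum, ← sum_mul, sum_sum_iverson_adj hG]
  simp only [mul_left_comm 𝟙[_], ← mul_sum, books]

lemma switchSum_codeg_mul_codeg_le (G : SimpleGraph V) :
    switchSum G (fun a b x y => codeg G a b * codeg G x y) ≤ cycleCount 3 G ^ 2 := by
  refine (switchSum_le G fun a b x y =>
    mul_nonneg (codeg_nonneg G a b) (codeg_nonneg G x y)).trans_eq ?_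
  simp only [mul_left_comm 𝟙[G.Adj _ _] (codeg G _ _), ← mul_sum]
  rw [cycleCount_three_eq_sum_codeg, sq]
  simp only [sum_mul, mul_assoc, mul_left_comm (codeg G _ _)]

lemma switchSum_codeg_mul_codeg_left_le (hG : G ∈ regularGraphs V d) :
    switchSum G (fun a b x _ => codeg G a b * codeg G a x) ≤ d ^ 3 * cycleCount 3 G := by
  refine (switchSum_le G fun a b x _ =>
    mul_nonneg (codeg_nonneg G a b) (codeg_nonneg G a x)).trans_eq ?_
  simp only [← mul_sum, ← sum_mul, sum_iverson_adj_of_mem hG, mul_left_comm (d : ℝ),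
    sum_codeg hG]
  rw [cycleCount_three_eq_sum_codeg]
  simp only [mul_sum]
  exact sum_congr rfl fun a _ => sum_congr rfl fun b _ => by ring

lemma switchSum_codeg_mul_codeg_right_le (hG : G ∈ regularGraphs V d) :
    switchSum G (fun a b _ y => codeg G a b * codeg G b y) ≤ d ^ 3 * cycleCount 3 G := by
  refine (switchSum_le G fun a b _ y =>
    mul_nonneg (codeg_nonneg G a b) (codeg_nonneg G b y)).trans_eq ?_
  rw [cycleCount_three_eq_sum_codeg]
  simp only [mul_sum]
  refine sum_congr rfl fun a _ => sum_congr rfl fun b _ => ?_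
  rw [sum_comm]
  simp only [← mul_sum, ← sum_mul, sum_iverson_adj_right_of_mem hG, mul_left_comm (d : ℝ),
    sum_codeg hG]
  ring

lemma abs_switchSum_codeg_mul_sub_le (hG : G ∈ regularGraphs V d) :
    |switchSum G (fun a b x y =>
        codeg G a b * (cycleCount 3 G - cycleCount 3 (switch G a b x y) - 6))| ≤
      6 * (Fintype.card V * d * books G + cycleCount 3 G ^ 2 + 2 * d ^ 3 * cycleCount 3 G) := by
  have term (a b x y) (h : IsSwitchable G a b x y) :
      |codeg G a b * (cycleCount 3 G - cycleCount 3 (switch G a b x y) - 6)| ≤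
        6 * (codeg G a b * (codeg G a b - 1) + codeg G a b * codeg G x y +
          codeg G a b * codeg G a x + codeg G a b * codeg G b y) := by
    have change := mul_le_mul_of_nonneg_left h.abs_cycleCount_three_sub_le (codeg_nonneg G a b)
    rw [← abs_of_nonneg (codeg_nonneg G a b), ← abs_mul, abs_of_nonneg (codeg_nonneg G a b),
      abs_le] at change
    have := codeg_mul_codeg_sub_one_nonneg G a b
    rw [abs_le]
    constructor <;> linarith
  refine (abs_switchSum_le G term).trans ?_
  have split : switchSum G (fun a b x y => 6 * (codeg G a b * (codeg G a b - 1) +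
        codeg G a b * codeg G x y + codeg G a b * codeg G a x + codeg G a b * codeg G b y)) =
      6 * (switchSum G (fun a b _ _ => codeg G a b * (codeg G a b - 1)) +
        switchSum G (fun a b x y => codeg G a b * codeg G x y) +
        switchSum G (fun a b x _ => codeg G a b * codeg G a x) +
        switchSum G (fun a b _ y => codeg G a b * codeg G b y)) := by
    simp only [switchSum, mul_left_comm 𝟙[_] 6, ← mul_sum, mul_add, sum_add_distrib]
  rw [split]
  linarith [switchSum_codeg_mul_codeg_sub_one_le hG, switchSum_codeg_mul_codeg_le G,
    switchSum_codeg_mul_codeg_left_le hG, switchSum_codeg_mul_codeg_right_le hG]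

lemma expect_isBook_le (hd : 0 < d) (hn : 4 * (d + 5) ≤ Fintype.card V) (a b c e : V) :
    𝔼 G ∈ regularGraphs V d,
        𝟙[G.Adj a b ∧ (G.Adj a c ∧ G.Adj b c) ∧ (G.Adj a e ∧ G.Adj b e) ∧ c ≠ e] ≤
      (2 * d / Fintype.card V : ℝ) ^ 5 := by
  by_cases distinct : a ≠ b ∧ a ≠ c ∧ b ≠ c ∧ a ≠ e ∧ b ≠ e ∧ c ≠ e
  · obtain ⟨hab, hac, hbc, hae, hbe, hce⟩ := distinct
    set S : Finset (Sym2 V) := {s(a, b), s(a, c), s(b, c), s(a, e), s(b, e)} with hS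
    have hcard : #S = 5 := by
      rw [hS]
      repeat rw [card_insert_of_notMem]
      · exact congrArg (· + 4) (card_singleton s(b, e))
      all_goals
        simp only [mem_insert, mem_singleton, Sym2.eq_iff]
        grind
    calc _ ≤ edgeProb d S := by
          refine expect_le_expect fun G _ => iverson_mono ?_
          rintro ⟨hab, ⟨hac, hbc⟩, ⟨hae, hbe⟩, -⟩
          simp [hS, Set.insert_subset_iff, hab, hac, hbc, hae, hbe]
      _ ≤ _ := hcard ▸ edgeProb_le hd S (hcard ▸ hn)
  · refine (expect_eq_zero fun G _ => iverson_of_false ?_).trans_le (by positivity)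
    rintro ⟨hab, ⟨hac, hbc⟩, ⟨hae, hbe⟩, hce⟩
    exact distinct ⟨hab.ne, hac.ne, hbc.ne, hae.ne, hbe.ne, hce⟩

lemma expect_books_le (hd : 0 < d) (hn : 4 * (d + 5) ≤ Fintype.card V) :
    𝔼 G ∈ regularGraphs V d, books G ≤ 32 * d ^ 5 / Fintype.card V := by
  have hpos : (0 : ℝ) < Fintype.card V := by exact_mod_cast (by omega : 0 < Fintype.card V)
  simp only [books, codeg_mul_codeg_sub_one, mul_sum, ← iverson_and, expect_sum_comm]
  calc _ ≤ ∑ _a : V, ∑ _b : V, ∑ _c : V, ∑ _e : V, (2 * d / Fintype.card V : ℝ) ^ 5 :=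
        sum_le_sum fun a _ => sum_le_sum fun b _ => sum_le_sum fun c _ => sum_le_sum fun e _ =>
          expect_isBook_le hd hn a b c e
    _ = 32 * d ^ 5 / Fintype.card V := by
        simp only [sum_const, card_univ, nsmul_eq_mul]
        field_simp
        norm_num

lemma expect_le_of_expect_sq_le {ι : Type*} {s : Finset ι} {f : ι → ℝ} {c : ℝ} (hc : 0 ≤ c)
    (h : 𝔼 i ∈ s, f i ^ 2 ≤ c ^ 2) : 𝔼 i ∈ s, f i ≤ c := by
  obtain rfl | hs := s.eq_empty_or_nonempty
  · simpa
  refine le_of_sq_le_sq ?_ hc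
  have cauchy := expect_mul_sq_le_sq_mul_sq s f 1
  simp only [Pi.one_apply, mul_one, one_pow, expect_const hs] at cauchy
  exact cauchy.trans h

lemma expect_cycleCount_three_sq_le (hd : 0 < d) (hn : 4 * (d + 6) ≤ Fintype.card V) :
    𝔼 G ∈ regularGraphs V d, cycleCount 3 G ^ 2 ≤ (10 ^ 3 * d ^ 3 : ℝ) ^ 2 := by
  refine (expect_cycleCount_sq_le hd le_rfl hn).trans ?_
  have : (0 : ℝ) ≤ d ^ 6 := by positivity
  norm_num
  linarith

lemma expect_defect_sq_le (hd : 0 < d) (hn : 4 * (d + 10) ≤ Fintype.card V) :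
    𝔼 G ∈ regularGraphs V d, defect d G ^ 2 ≤ (10 ^ 6 * d ^ 5 : ℝ) ^ 2 := by
  have h3 := expect_cycleCount_sq_le (V := V) hd (k := 3) (by norm_num) (by omega)
  have h4 := expect_cycleCount_sq_le (V := V) hd (k := 4) (by norm_num) (by omega)
  have h5 := expect_cycleCount_sq_le (V := V) hd (k := 5) (by norm_num) (by omega)
  have h8 : (d : ℝ) ^ 8 ≤ d ^ 10 := pow_le_pow_right₀ (by exact_mod_cast hd) (by norm_num)
  have h10 : (0 : ℝ) ≤ d ^ 10 := by positivity
  have sq_defect (G : SimpleGraph V) : defect d G ^ 2 ≤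
      3 * (d ^ 4 * cycleCount 3 G ^ 2 + cycleCount 4 G ^ 2 + cycleCount 5 G ^ 2) := by
    rw [defect]
    linarith [sq_nonneg (d ^ 2 * cycleCount 3 G - cycleCount 4 G),
      sq_nonneg (d ^ 2 * cycleCount 3 G - cycleCount 5 G),
      sq_nonneg (cycleCount 4 G - cycleCount 5 G)]
  refine (expect_le_expect fun G _ => sq_defect G).trans ?_
  rw [← mul_expect, expect_add_distrib, expect_add_distrib, ← mul_expect]
  have h3' := mul_le_mul_of_nonneg_left h3 (show (0 : ℝ) ≤ d ^ 4 by positivity)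
  norm_num at h3' h4 h5 ⊢
  linarith

lemma abs_expect_switchSum_codeg_mul_sub_le (hd : 0 < d) (hn : 4 * (d + 6) ≤ Fintype.card V) :
    |𝔼 G ∈ regularGraphs V d, switchSum G (fun a b x y =>
        codeg G a b * (cycleCount 3 G - cycleCount 3 (switch G a b x y) - 6))| ≤
      10 ^ 7 * d ^ 6 := by
  have hpos : (0 : ℝ) < Fintype.card V := by exact_mod_cast (by omega : 0 < Fintype.card V)
  have sq_le := expect_cycleCount_three_sq_le hd hn
  have le := expect_le_of_expect_sq_le (by positivity) sq_le
  have books_le := mul_le_mul_of_nonneg_left (expect_books_le (V := V) hd (by omega))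
    (show (0 : ℝ) ≤ Fintype.card V * d by positivity)
  have books_le' : (Fintype.card V * d : ℝ) * (32 * d ^ 5 / Fintype.card V) = 32 * d ^ 6 := by
    field_simp
  have h6 : (0 : ℝ) ≤ d ^ 6 := by positivity
  calc _ ≤ 𝔼 G ∈ regularGraphs V d, 6 * (Fintype.card V * d * books G + cycleCount 3 G ^ 2 +
        2 * d ^ 3 * cycleCount 3 G) :=
        (abs_expect_le _ _).trans (expect_le_expect fun G hG => abs_switchSum_codeg_mul_sub_le hG)
    _ = 6 * (Fintype.card V * d * (𝔼 G ∈ regularGraphs V d, books G) +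
          𝔼 G ∈ regularGraphs V d, cycleCount 3 G ^ 2 +
        2 * d ^ 3 * 𝔼 G ∈ regularGraphs V d, cycleCount 3 G) := by
        simp only [← mul_expect, expect_add_distrib]
    _ ≤ 6 * (32 * d ^ 6 + (10 ^ 3 * d ^ 3) ^ 2 + 2 * d ^ 3 * (10 ^ 3 * d ^ 3)) := by
        rw [books_le'] at books_le
        gcongr
    _ ≤ 10 ^ 7 * d ^ 6 := by linarith

/-! ### Approximate Stein operators -/

section Stein

variable {ι : Type*} {s : Finset ι} {T D R : ι → ℝ} {c δ : ℝ}

lemma abs_expect_sub_le_of_abs_sub_sub_le (hs : s.Nonempty) (hD : 𝔼 i ∈ s, D i = 0)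
    (h : ∀ i ∈ s, |T i - c - D i| ≤ R i) : |𝔼 i ∈ s, T i - c| ≤ 𝔼 i ∈ s, R i :=
  calc |𝔼 i ∈ s, T i - c| = |𝔼 i ∈ s, (T i - c - D i)| := by
        rw [expect_sub_distrib, expect_sub_distrib, hD, expect_const hs, sub_zero]
    _ ≤ 𝔼 i ∈ s, R i := (abs_expect_le _ _).trans (expect_le_expect h)

lemma abs_expect_sq_sub_expect_mul_le (hs : s.Nonempty) (hD : 𝔼 i ∈ s, D i = 0)
    (h : ∀ i ∈ s, |T i - c - D i| ≤ R i) (hδ : 0 < δ) :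
    |𝔼 i ∈ s, (T i - 𝔼 j ∈ s, T j) ^ 2 - 𝔼 i ∈ s, T i * D i| ≤
      δ * 𝔼 i ∈ s, (T i - 𝔼 j ∈ s, T j) ^ 2 + (𝔼 i ∈ s, R i ^ 2) / (4 * δ) := by
  set m := 𝔼 i ∈ s, T i with hm
  have remainder : 𝔼 i ∈ s, (T i - m) ^ 2 - 𝔼 i ∈ s, T i * D i =
      𝔼 i ∈ s, (T i - m) * (T i - c - D i) := by
    have expand : ∀ i ∈ s, (T i - m) * (T i - c - D i) =
        (T i - m) ^ 2 - T i * D i + (m - c) * (T i - m) + m * D i := fun i _ => by ring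
    rw [expect_congr rfl expand]
    simp only [expect_add_distrib, expect_sub_distrib, ← mul_expect, hD, ← hm, expect_const hs]
    ring
  have young (i) (hi : i ∈ s) :
      |(T i - m) * (T i - c - D i)| ≤ δ * (T i - m) ^ 2 + R i ^ 2 / (4 * δ) := by
    rw [abs_mul, ← sq_abs (T i - m)]
    have h_sq : δ * |T i - m| ^ 2 + R i ^ 2 / (4 * δ) - |T i - m| * R i =
        (2 * δ * |T i - m| - R i) ^ 2 / (4 * δ) := by
      field_simp
      ring
    have : 0 ≤ (2 * δ * |T i - m| - R i) ^ 2 / (4 * δ) := by positivity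
    linarith [mul_le_mul_of_nonneg_left (h i hi) (abs_nonneg (T i - m))]
  rw [remainder]
  refine ((abs_expect_le _ _).trans (expect_le_expect young)).trans_eq ?_
  rw [expect_add_distrib, mul_expect, expect_div]

end Stein

/-! ### Mean and variance of the triangle count -/

/-- The normalised difference between the ordered triangles destroyed and created by the
switchings of `G`. It has mean zero and approximates `cycleCount 3 G - (d - 1) ^ 3`. -/
def drift (d : ℕ) (G : SimpleGraph V) : ℝ :=
  (switchSum G (fun a b _ _ => codeg G a b) -
    switchSum G (fun a b x y => codeg (switch G a b x y) a x)) / (Fintype.card V * d)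

lemma expect_drift (d : ℕ) : 𝔼 G ∈ regularGraphs V d, drift d G = 0 := by
  simp only [drift]
  rw [← expect_div, expect_sub_distrib,
    expect_switchSum_switch d fun G a b _ _ => codeg G a b, sub_self, zero_div]

lemma cycleCount_three_mul_le_defect (hd : 0 < d) (G : SimpleGraph V) :
    2 * d * (d + 1) * cycleCount 3 G ≤ 4 * defect d G := by
  have hd' : (1 : ℝ) ≤ d := by exact_mod_cast hd
  calc (2 * d * (d + 1) * cycleCount 3 G : ℝ) ≤ 4 * (d ^ 2 * cycleCount 3 G) := by
        rw [← mul_assoc]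
        exact mul_le_mul_of_nonneg_right (by nlinarith) (cycleCount_nonneg 3 G)
    _ ≤ 4 * defect d G := by
        rw [defect]
        linarith [cycleCount_nonneg 4 G, cycleCount_nonneg 5 G]

lemma abs_switchSum_codeg_sub_le (hd : 0 < d) (hG : G ∈ regularGraphs V d) :
    |switchSum G (fun a b _ _ => codeg G a b) - Fintype.card V * d * cycleCount 3 G| ≤
      4 * defect d G := by
  have := switchSum_codeg_le hG
  have := le_switchSum_codeg hG
  have := cycleCount_three_mul_le_defect hd G
  rw [abs_le]
  constructor <;> linarith

lemma abs_cycleCount_three_sub_sub_drift_le (hd : 0 < d) (hV : 0 < Fintype.card V)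
    (hG : G ∈ regularGraphs V d) :
    |cycleCount 3 G - (d - 1) ^ 3 - drift d G| ≤ 4 / (Fintype.card V * d) * defect d G := by
  have hM : (0 : ℝ) < Fintype.card V * d := by positivity
  rw [drift, sub_div' hM.ne', abs_div, abs_of_pos hM, div_mul_eq_mul_div]
  gcongr
  rw [abs_le]
  have := switchSum_codeg_le hG
  have := le_switchSum_codeg hG
  have := switchSum_codeg_switch_le hG
  have := le_switchSum_codeg_switch hG
  have := cycleCount_three_mul_le_defect hd G
  constructor <;> linarith

lemma expect_cycleCount_three_mul_drift (d : ℕ) :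
    𝔼 G ∈ regularGraphs V d, cycleCount 3 G * drift d G =
      (6 * 𝔼 G ∈ regularGraphs V d, switchSum G (fun a b _ _ => codeg G a b) +
        𝔼 G ∈ regularGraphs V d, switchSum G (fun a b x y =>
          codeg G a b * (cycleCount 3 G - cycleCount 3 (switch G a b x y) - 6))) /
        (Fintype.card V * d) := by
  have reversed : 𝔼 G ∈ regularGraphs V d, cycleCount 3 G *
      switchSum G (fun a b x y => codeg (switch G a b x y) a x) =
      𝔼 G ∈ regularGraphs V d,
        switchSum G (fun a b x y => cycleCount 3 (switch G a b x y) * codeg G a b) := by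
    rw [← expect_switchSum_switch d fun G a b x y => cycleCount 3 (switch G a b x y) * codeg G a b]
    refine expect_congr rfl fun G _ => ?_
    simp only [switchSum, mul_sum]
    refine sum_congr rfl fun a _ => sum_congr rfl fun b _ => sum_congr rfl fun x _ =>
      sum_congr rfl fun y _ => ?_
    by_cases h : IsSwitchable G a b x y
    · rw [h.switch_switch]
      ring
    · simp only [iverson_of_false h, zero_mul, mul_zero]
  simp only [drift, mul_div_assoc', mul_sub, ← expect_div, expect_sub_distrib, reversed]
  rw [mul_expect, ← expect_add_distrib, ← expect_sub_distrib]
  congr 1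
  refine expect_congr rfl fun G _ => ?_
  simp only [switchSum, mul_sum, ← sum_add_distrib, ← sum_sub_distrib]
  refine sum_congr rfl fun a _ => sum_congr rfl fun b _ => sum_congr rfl fun x _ =>
    sum_congr rfl fun y _ => ?_
  ring

lemma abs_expect_cycleCount_three_mul_drift_sub_le (hd : 0 < d)
    (hn : 4 * (d + 10) ≤ Fintype.card V) :
    |𝔼 G ∈ regularGraphs V d, cycleCount 3 G * drift d G -
      6 * 𝔼 G ∈ regularGraphs V d, cycleCount 3 G| ≤ 10 ^ 8 * (d ^ 5 / Fintype.card V) := by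
  have hV : (0 : ℝ) < Fintype.card V := by exact_mod_cast (by omega : 0 < Fintype.card V)
  have hM : (0 : ℝ) < Fintype.card V * d := by positivity
  have d5_le : (d : ℝ) ^ 5 ≤ d ^ 6 := pow_le_pow_right₀ (by exact_mod_cast hd) (by norm_num)
  have error := abs_expect_switchSum_codeg_mul_sub_le (V := V) hd (by omega)
  have defect_le := expect_le_of_expect_sq_le (by positivity) (expect_defect_sq_le (V := V) hd hn)
  have main : |𝔼 G ∈ regularGraphs V d, switchSum G (fun a b _ _ => codeg G a b) -
      Fintype.card V * d * 𝔼 G ∈ regularGraphs V d, cycleCount 3 G| ≤ 4 * (10 ^ 6 * d ^ 5) :=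
    calc _ ≤ 𝔼 G ∈ regularGraphs V d, 4 * defect d G := by
          rw [mul_expect, ← expect_sub_distrib]
          exact (abs_expect_le _ _).trans
            (expect_le_expect fun G hG => abs_switchSum_codeg_sub_le hd hG)
      _ ≤ 4 * (10 ^ 6 * d ^ 5) := by
          rw [← mul_expect]
          gcongr
  have bound : (10 ^ 8 * (d ^ 5 / Fintype.card V) : ℝ) =
      10 ^ 8 * d ^ 6 / (Fintype.card V * d) := by
    field_simp
  rw [expect_cycleCount_three_mul_drift, bound, div_sub' hM.ne', abs_div, abs_of_pos hM]
  gcongr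
  rw [abs_le] at main error ⊢
  constructor <;> linarith

theorem abs_expect_cycleCount_three_sub_le (hd : 0 < d) (hn : 4 * (d + 10) ≤ Fintype.card V)
    (hne : (regularGraphs V d).Nonempty) :
    |𝔼 G ∈ regularGraphs V d, cycleCount 3 G - (d - 1 : ℝ) ^ 3| ≤
      10 ^ 7 * (d ^ 4 / Fintype.card V) := by
  have hV : (0 : ℝ) < Fintype.card V := by exact_mod_cast (by omega : 0 < Fintype.card V)
  have defect_le := expect_le_of_expect_sq_le (by positivity) (expect_defect_sq_le hd hn)
  calc _ ≤ 𝔼 G ∈ regularGraphs V d, 4 / (Fintype.card V * d) * defect d G :=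
        abs_expect_sub_le_of_abs_sub_sub_le hne (expect_drift d) fun G hG =>
          abs_cycleCount_three_sub_sub_drift_le hd (by omega) hG
    _ ≤ 4 / (Fintype.card V * d) * (10 ^ 6 * d ^ 5) := by
        rw [← mul_expect]
        gcongr
    _ = 4 * 10 ^ 6 * (d ^ 4 / Fintype.card V) := by field_simp
    _ ≤ 10 ^ 7 * (d ^ 4 / Fintype.card V) := by
        gcongr
        norm_num

theorem abs_variance_cycleCount_three_sub_le (hd : 0 < d) (hn : 4 * (d + 10) ≤ Fintype.card V)
    (hne : (regularGraphs V d).Nonempty) {m v δ : ℝ} (hδ : 0 < δ)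
    (hm : m = 𝔼 G ∈ regularGraphs V d, cycleCount 3 G)
    (hv : v = 𝔼 G ∈ regularGraphs V d, (cycleCount 3 G - m) ^ 2) :
    |v - 6 * m| ≤ δ * v +
      10 ^ 13 * (d ^ 5 / Fintype.card V + d ^ 8 / (δ * Fintype.card V ^ 2)) := by
  have hV : (0 : ℝ) < Fintype.card V := by exact_mod_cast (by omega : 0 < Fintype.card V)
  have stein := abs_expect_sq_sub_expect_mul_le hne (expect_drift d)
    (fun G hG => abs_cycleCount_three_sub_sub_drift_le hd (by omega) hG) hδ
  have remainder : (𝔼 G ∈ regularGraphs V d, (4 / (Fintype.card V * d) * defect d G) ^ 2) /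
      (4 * δ) ≤ 10 ^ 13 * (d ^ 8 / (δ * Fintype.card V ^ 2)) :=
    calc _ = (4 / (Fintype.card V * d)) ^ 2 * (𝔼 G ∈ regularGraphs V d, defect d G ^ 2) /
            (4 * δ) := by simp only [mul_pow, mul_expect]
      _ ≤ (4 / (Fintype.card V * d)) ^ 2 * (10 ^ 6 * d ^ 5) ^ 2 / (4 * δ) := by
          gcongr
          exact expect_defect_sq_le hd hn
      _ = 4 * 10 ^ 12 * (d ^ 8 / (δ * Fintype.card V ^ 2)) := by
          field_simp
      _ ≤ _ := by
          gcongr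
          norm_num
  have main := abs_expect_cycleCount_three_mul_drift_sub_le (V := V) hd hn
  have h5 : (0 : ℝ) ≤ d ^ 5 / Fintype.card V := by positivity
  rw [← hm, ← hv] at stein
  rw [← hm] at main
  calc |v - 6 * m| ≤ _ := abs_sub_le _ (𝔼 G ∈ regularGraphs V d, cycleCount 3 G * drift d G) _
    _ ≤ _ := by linarith

/-! ### Existence of regular graphs -/

lemma circulantGraph_mem_regularGraphs {Γ : Type*} [AddGroup Γ] [Fintype Γ] {S : Finset Γ}
    (h0 : 0 ∉ S) (hneg : ∀ v ∈ S, -v ∈ S) :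
    SimpleGraph.circulantGraph (S : Set Γ) ∈ regularGraphs Γ #S := by
  refine mem_regularGraphs.2 fun u => ?_
  rw [← SimpleGraph.card_neighborFinset_eq_degree]
  refine card_nbij' (· - u) (· + u) ?_ ?_ (fun v _ => sub_add_cancel v u)
    fun v _ => add_sub_cancel_right v u
  · intro v hv
    rw [mem_coe, SimpleGraph.mem_neighborFinset, SimpleGraph.circulantGraph_adj] at hv
    rcases hv.2 with h | h
    · simpa using hneg _ h
    · exact h
  · intro v hv
    have : v ≠ 0 := ne_of_mem_of_not_mem hv h0
    simp_all

/-- The residues modulo `n` whose representative in `[0, n)` is at distance less than `d / 2` from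
`n / 2`; there are `d` of them when `d + n` is odd. -/
def middleResidues (n d : ℕ) : Finset (Fin n) := {v | n < 2 * v.val + d ∧ 2 * v.val < n + d}

lemma card_middleResidues {n : ℕ} (hdn : d < n) (hodd : Odd (d + n)) :
    #(middleResidues n d) = d := by
  have : (middleResidues n d).map Fin.valEmbedding =
      Ico ((n - d + 1) / 2) ((n - d + 1) / 2 + d) := by
    obtain ⟨k, hk⟩ := hodd
    ext w
    simp only [middleResidues, Finset.mem_map, mem_filter_univ, Fin.valEmbedding_apply, mem_Ico]
    constructor
    · rintro ⟨v, hv, rfl⟩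
      omega
    · exact fun hw => ⟨⟨w, by omega⟩, by dsimp only; omega, rfl⟩
  rw [← card_map Fin.valEmbedding, this, Nat.card_Ico, Nat.add_sub_cancel_left]

lemma regularGraphs_nonempty_of_odd {n : ℕ} (hdn : d < n) (hodd : Odd (d + n)) :
    (regularGraphs (Fin n) d).Nonempty := by
  have : NeZero n := ⟨by omega⟩
  have h0 : 0 ∉ middleResidues n d := by
    simp [middleResidues]
    omega
  have hneg (v) (hv : v ∈ middleResidues n d) : -v ∈ middleResidues n d := by
    simp only [middleResidues, mem_filter_univ] at hv ⊢
    rw [Fin.val_neg', Nat.mod_eq_of_lt (by omega)]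
    omega
  have regular := circulantGraph_mem_regularGraphs h0 hneg
  rw [card_middleResidues hdn hodd] at regular
  exact ⟨_, regular⟩

lemma regularGraphs_nonempty {n : ℕ} (hdn : d < n) (heven : Even (d * n)) :
    (regularGraphs (Fin n) d).Nonempty := by
  by_cases hodd : Odd (d + n)
  · exact regularGraphs_nonempty_of_odd hdn hodd
  · obtain ⟨G, hG⟩ := regularGraphs_nonempty_of_odd (d := n - 1 - d) (n := n) (by omega) (by
      rw [Nat.even_mul] at heven
      rw [Nat.not_odd_iff_even, Nat.even_add] at hodd
      grind)
    refine ⟨Gᶜ, mem_regularGraphs.2 ?_⟩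
    have := (mem_regularGraphs.1 hG).compl
    rw [Fintype.card_fin] at this
    convert this using 1
    omega

/-! ### The number of triangles of the random regular graph -/

lemma expect_eq_expect_regularGraphs {n : ℕ} (d : ℕ) (X : SimpleGraph (Fin n) → ℝ) :
    expect (fun G => ∀ i, deg G i = d) X = 𝔼 G ∈ regularGraphs (Fin n) d, X G := by
  have base_eq : {G : SimpleGraph (Fin n) | ∀ i, deg G i = d} = regularGraphs (Fin n) d := by
    ext G
    simp only [Set.mem_ofPred_eq, mem_coe, mem_regularGraphs, deg, SimpleGraph.IsRegularOfDegree,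
      ← SimpleGraph.card_neighborSet_eq_degree, Set.ncard_eq_toFinset_card', Set.toFinset_card]
  rw [expect, expect_eq_sum_div_card, base_eq, finsum_mem_coe_finset, ← Set.ncard_coe_finset,
    ← base_eq]
  rfl

lemma triCount_eq {n : ℕ} (G : SimpleGraph (Fin n)) : (triCount G : ℝ) = cycleCount 3 G / 6 := by
  rw [triCount, ← SimpleGraph.coe_cliqueFinset, Set.ncard_coe_finset, cycleCount_three_eq_card,
    mul_div_cancel_left₀ _ (by norm_num)]
  congr!

lemma abs_expect_triCount_sub_le {n : ℕ} (hd : 0 < d) (hn : 4 * (d + 10) ≤ n)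
    (heven : Even (d * n)) :
    |𝔼 G ∈ regularGraphs (Fin n) d, (triCount G : ℝ) - (d - 1 : ℝ) ^ 3 / 6| ≤
      (10 ^ 7 * (d ^ 4 / n) : ℝ) := by
  have h := abs_expect_cycleCount_three_sub_le (V := Fin n) hd (by simpa using hn)
    (regularGraphs_nonempty (by omega) heven)
  have nonneg : (0 : ℝ) ≤ d ^ 4 / n := by positivity
  simp only [Fintype.card_fin] at h
  simp only [triCount_eq, ← expect_div]
  rw [abs_le] at h ⊢
  constructor <;> linarith

lemma abs_variance_triCount_sub_le {n : ℕ} (hd : 0 < d) (hn : 4 * (d + 10) ≤ n)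
    (heven : Even (d * n)) {μ v δ : ℝ} (hδ : 0 < δ)
    (hμ : μ = 𝔼 G ∈ regularGraphs (Fin n) d, (triCount G : ℝ))
    (hv : v = 𝔼 G ∈ regularGraphs (Fin n) d, ((triCount G : ℝ) - μ) ^ 2) :
    |v - μ| ≤ δ * v + 10 ^ 12 * (d ^ 5 / n + d ^ 8 / (δ * n ^ 2)) := by
  have hm : 6 * μ = 𝔼 G ∈ regularGraphs (Fin n) d, cycleCount 3 G := by
    simp only [hμ, triCount_eq, ← expect_div]
    ring
  have hv' : 36 * v = 𝔼 G ∈ regularGraphs (Fin n) d, (cycleCount 3 G - 6 * μ) ^ 2 := by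
    rw [hv, mul_expect]
    refine expect_congr rfl fun G _ => ?_
    rw [triCount_eq]
    ring
  have h := abs_variance_cycleCount_three_sub_le hd (by simpa using hn)
    (regularGraphs_nonempty (by omega) heven) hδ hm hv'
  have nonneg : (0 : ℝ) ≤ d ^ 5 / n + d ^ 8 / (δ * n ^ 2) := by positivity
  simp only [Fintype.card_fin] at h
  rw [abs_le] at h ⊢
  constructor <;> linarith

/-! ### Asymptotics -/

section Sparsity

variable {n : ℕ} {s : ℝ}

lemma sq_le_sqrt_mul (hd : 0 < d) (hn : n ≠ 0) :
    (d : ℝ) ^ 2 ≤ √(d ^ 5 / n ^ 2) * n := by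
  refine le_of_sq_le_sq ?_ (by positivity)
  rw [mul_pow, Real.sq_sqrt (by positivity), div_mul_cancel₀ _ (by positivity), ← pow_mul]
  exact pow_le_pow_right₀ (by exact_mod_cast hd) (by norm_num)

lemma four_mul_add_ten_le (hd : 0 < d) (hn : n ≠ 0) (hs : √((d : ℝ) ^ 5 / n ^ 2) ≤ 1 / 10 ^ 15) :
    4 * (d + 10) ≤ n := by
  have hd' : (1 : ℝ) ≤ d := by exact_mod_cast hd
  have : (d : ℝ) ^ 2 ≤ 1 / 10 ^ 15 * n := (sq_le_sqrt_mul hd hn).trans (by gcongr)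
  exact_mod_cast (by nlinarith : 4 * (d + 10) ≤ (n : ℝ))

lemma cube_le_mul_pred_cube (hd : 2 ≤ d) : (d : ℝ) ^ 3 ≤ 48 * ((d - 1 : ℝ) ^ 3 / 6) := by
  have hd' : (2 : ℝ) ≤ d := by exact_mod_cast hd
  calc (d : ℝ) ^ 3 ≤ (2 * (d - 1 : ℝ)) ^ 3 := by gcongr; linarith
    _ = 48 * ((d - 1 : ℝ) ^ 3 / 6) := by ring

lemma abs_expect_triCount_sub_le_mul (hd : 2 ≤ d) (hn : n ≠ 0) (heven : Even (d * n))
    (hs : s = √(d ^ 5 / n ^ 2)) (hs' : s ≤ 1 / 10 ^ 15) :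
    |𝔼 G ∈ regularGraphs (Fin n) d, (triCount G : ℝ) - (d - 1 : ℝ) ^ 3 / 6| ≤
      10 ^ 9 * s * ((d - 1 : ℝ) ^ 3 / 6) := by
  subst hs
  set s := √((d : ℝ) ^ 5 / n ^ 2)
  have hd' : (1 : ℝ) ≤ d := by exact_mod_cast one_le_two.trans hd
  have sq_le : (d : ℝ) ^ 2 ≤ s * n := sq_le_sqrt_mul (by omega) hn
  calc _ ≤ 10 ^ 7 * (d ^ 4 / n : ℝ) :=
        abs_expect_triCount_sub_le (by omega) (four_mul_add_ten_le (by omega) hn hs') heven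
    _ ≤ 10 ^ 7 * (s * d ^ 3) := by
        gcongr
        rw [div_le_iff₀ (by positivity)]
        calc (d : ℝ) ^ 4 ≤ d ^ 3 * d ^ 2 := by
              rw [← pow_add]
              exact pow_le_pow_right₀ hd' (by norm_num)
          _ ≤ d ^ 3 * (s * n) := by gcongr
          _ = s * d ^ 3 * n := by ring
    _ ≤ 10 ^ 7 * (s * (48 * ((d - 1 : ℝ) ^ 3 / 6))) := by
        gcongr
        exact cube_le_mul_pred_cube hd
    _ ≤ 10 ^ 9 * s * ((d - 1 : ℝ) ^ 3 / 6) := by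
        have : 0 ≤ s * ((d - 1 : ℝ) ^ 3 / 6) := by
          have : (0 : ℝ) ≤ d - 1 := by linarith
          positivity
        linarith

lemma abs_variance_triCount_sub_le_mul (hd : 2 ≤ d) (hn : n ≠ 0) (heven : Even (d * n))
    (hs : s = √(d ^ 5 / n ^ 2)) (hs' : s ≤ 1 / 10 ^ 15) {μ v : ℝ}
    (hμ : μ = 𝔼 G ∈ regularGraphs (Fin n) d, (triCount G : ℝ))
    (hv : v = 𝔼 G ∈ regularGraphs (Fin n) d, ((triCount G : ℝ) - μ) ^ 2) :
    |v - μ| ≤ s * v + 10 ^ 15 * s * μ := by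
  have mean := abs_expect_triCount_sub_le_mul hd hn heven hs hs'
  have sq_le : (d : ℝ) ^ 2 ≤ s * n := hs ▸ sq_le_sqrt_mul (by omega) hn
  have hs0 : 0 < s := hs ▸ by positivity
  have cube_le := cube_le_mul_pred_cube hd
  rw [← hμ, abs_le] at mean
  have cube_le_mean : (d : ℝ) ^ 3 ≤ 100 * μ := by
    nlinarith
  have error₁ : (d ^ 5 / n : ℝ) ≤ s * d ^ 3 := by
    rw [div_le_iff₀ (by positivity)]
    calc (d : ℝ) ^ 5 = d ^ 3 * d ^ 2 := by ring
      _ ≤ d ^ 3 * (s * n) := by gcongr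
      _ = s * d ^ 3 * n := by ring
  have error₂ : (d ^ 8 / (s * n ^ 2) : ℝ) = s * d ^ 3 := by
    have : s ^ 2 * n ^ 2 = d ^ 5 := by
      rw [hs, Real.sq_sqrt (by positivity), div_mul_cancel₀ _ (by positivity)]
    rw [div_eq_iff (by positivity)]
    linear_combination -(d : ℝ) ^ 3 * this
  calc |v - μ| ≤ s * v + 10 ^ 12 * (d ^ 5 / n + d ^ 8 / (s * n ^ 2)) :=
        abs_variance_triCount_sub_le (by omega) (four_mul_add_ten_le (by omega) hn (hs ▸ hs'))
          heven hs0 hμ hv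
    _ ≤ s * v + 10 ^ 12 * (s * (100 * μ) + s * (100 * μ)) := by
        rw [error₂]
        gcongr
        exact error₁.trans (by gcongr)
    _ ≤ s * v + 10 ^ 15 * s * μ := by
        have : 0 ≤ s * μ := by
          have : 0 ≤ μ := by linarith [pow_nonneg (Nat.cast_nonneg (α := ℝ) d) 3]
          positivity
        linarith

end Sparsity

lemma tendsto_one_of_abs_sub_one_le_mul {ι : Type*} {l : Filter ι} {f s : ι → ℝ} {C : ℝ}
    (hs : Tendsto s l (nhds 0)) (h : ∀ᶠ i in l, |f i - 1| ≤ C * s i) : Tendsto f l (nhds 1) :=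
  tendsto_iff_norm_sub_tendsto_zero.2 <|
    squeeze_zero' (Eventually.of_forall fun _ => norm_nonneg _) h (by simpa using hs.const_mul C)

lemma abs_div_sub_one_le {x y c : ℝ} (hy : 0 < y) (h : |x - y| ≤ c * y) : |x / y - 1| ≤ c := by
  rwa [div_sub_one hy.ne', abs_div, abs_of_pos hy, div_le_iff₀ hy]

lemma abs_div_sub_one_le_of_abs_sub_le {v μ s K : ℝ} (hμ : 0 < μ) (hs : 0 ≤ s) (hs' : s ≤ 1 / 2)
    (hK : K * s ≤ 1) (h : |v - μ| ≤ s * v + K * s * μ) : |v / μ - 1| ≤ (4 + K) * s := by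
  refine abs_div_sub_one_le hμ (h.trans ?_)
  have v_le : v ≤ 4 * μ := by
    have := (abs_le.1 h).2
    nlinarith
  calc s * v + K * s * μ ≤ s * (4 * μ) + K * s * μ := by gcongr
    _ = (4 + K) * s * μ := by ring

section Ratio

variable {n : ℕ} {s μ v : ℝ}

lemma abs_expect_triCount_div_sub_one_le (hd : 2 ≤ d) (hn : n ≠ 0) (heven : Even (d * n))
    (hs : s = √(d ^ 5 / n ^ 2)) (hs' : s ≤ 1 / 10 ^ 15)
    (hμ : μ = 𝔼 G ∈ regularGraphs (Fin n) d, (triCount G : ℝ)) :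
    |μ / ((d - 1 : ℝ) ^ 3 / 6) - 1| ≤ 10 ^ 9 * s := by
  have hd' : (0 : ℝ) < d - 1 := by linarith [show (2 : ℝ) ≤ d by exact_mod_cast hd]
  exact abs_div_sub_one_le (by positivity)
    (hμ ▸ abs_expect_triCount_sub_le_mul hd hn heven hs hs')

lemma abs_variance_triCount_div_sub_one_le (hd : 2 ≤ d) (hn : n ≠ 0) (heven : Even (d * n))
    (hs : s = √(d ^ 5 / n ^ 2)) (hs' : s ≤ 1 / 10 ^ 15)
    (hμ : μ = 𝔼 G ∈ regularGraphs (Fin n) d, (triCount G : ℝ))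
    (hv : v = 𝔼 G ∈ regularGraphs (Fin n) d, ((triCount G : ℝ) - μ) ^ 2) :
    |v / μ - 1| ≤ (4 + 10 ^ 15) * s := by
  have hd' : (0 : ℝ) < d - 1 := by linarith [show (2 : ℝ) ≤ d by exact_mod_cast hd]
  have mean_pos : 0 < μ := by
    have main : 0 < (d - 1 : ℝ) ^ 3 / 6 := by positivity
    have ratio := (abs_le.1 (abs_expect_triCount_div_sub_one_le hd hn heven hs hs' hμ)).1
    exact (div_pos_iff_of_pos_right main).1 (by linarith)
  exact abs_div_sub_one_le_of_abs_sub_le mean_pos (hs ▸ Real.sqrt_nonneg _) (by linarith)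
    (by linarith) (abs_variance_triCount_sub_le_mul hd hn heven hs hs' hμ hv)

end Ratio

end RegularTriangles

open RegularTriangles in
theorem stmt10_general {ι : Type*} {l : Filter ι} {n d : ι → ℕ} (hn : ∀ᶠ i in l, n i ≠ 0)
    (hd : ∀ᶠ i in l, 2 ≤ d i) (heven : ∀ᶠ i in l, Even (d i * n i))
    (hsmall : Tendsto (fun i => (d i : ℝ) ^ 5 / (n i : ℝ) ^ 2) l (nhds 0)) {μ : ι → ℝ}
    (hμ : ∀ i, μ i = expect (fun G : SimpleGraph (Fin (n i)) => ∀ j, deg G j = d i)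
      (fun G => (triCount G : ℝ))) :
    Tendsto (fun i => expect (fun G : SimpleGraph (Fin (n i)) => ∀ j, deg G j = d i)
        (fun G => ((triCount G : ℝ) - μ i) ^ 2) / μ i) l (nhds 1) ∧
    Tendsto (fun i => μ i / (((d i : ℝ) - 1) ^ 3 / 6)) l (nhds 1) := by
  simp only [expect_eq_expect_regularGraphs] at hμ ⊢
  have hs : Tendsto (fun i => √((d i : ℝ) ^ 5 / (n i : ℝ) ^ 2)) l (nhds 0) := by
    simpa using hsmall.sqrt
  have hs_le := hs.eventually_le_const (by norm_num : (0 : ℝ) < 1 / 10 ^ 15)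
  constructor
  · refine tendsto_one_of_abs_sub_one_le_mul (C := 4 + 10 ^ 15) hs ?_
    filter_upwards [hn, hd, heven, hs_le] with i hn hd heven hs_le
    exact abs_variance_triCount_div_sub_one_le hd hn heven rfl hs_le (hμ i) rfl
  · refine tendsto_one_of_abs_sub_one_le_mul (C := 10 ^ 9) hs ?_
    filter_upwards [hn, hd, heven, hs_le] with i hn hd heven hs_le
    exact abs_expect_triCount_div_sub_one_le hd hn heven rfl hs_le (hμ i)

/-- For `d → ∞` with `d⁵/n² → 0`, the variance of the number of triangles of the random
`d`-regular graph is asymptotic to its mean, which is asymptotic to `(d-1)³/6`. -/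
theorem stmt10 (d : ℕ → ℕ) (hd : ∀ n, 0 < d n) (heven : ∀ n, Even (d n * n))
    (hinf : Tendsto (fun n => (d n : ℝ)) atTop atTop)
    (hsmall : Tendsto (fun n => (d n : ℝ) ^ 5 / (n : ℝ) ^ 2) atTop (nhds 0))
    (μ : ℕ → ℝ)
    (hμ : ∀ n, μ n = expect (fun G : SimpleGraph (Fin n) => ∀ i, deg G i = d n)
      (fun G => (triCount G : ℝ))) :
    Tendsto (fun n => expect (fun G : SimpleGraph (Fin n) => ∀ i, deg G i = d n)
        (fun G => ((triCount G : ℝ) - μ n) ^ 2) / μ n) atTop (nhds 1) ∧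
    Tendsto (fun n => μ n / (((d n : ℝ) - 1) ^ 3 / 6)) atTop (nhds 1) :=
  stmt10_general (eventually_ne_atTop 0)
    ((tendsto_natCast_atTop_iff.1 hinf).eventually_ge_atTop 2) (Eventually.of_forall heven)
    hsmall hμ
end
end
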